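/- arXiv:2006.06757 — 5 statements merged into one kernel-verified Lean document; each statement's English description precedes it below -/
import Mathlib

section
/- Let A be a ring and let R = A((x)) be its Laurent series ring. If every cyclic right R-module is quotient finite-dimensional, then both R and A are right Noetherian rings. -/
universe u

/-- A module is *finite-dimensional* (in the sense of Goldie/uniform dimension) if it
does not contain an infinite direct sum of nonzero submodules, i.e. every independent
family of nonzero submodules is finite. -/
def IsFinDimModule (R M : Type*) [Ring R] [AddCommGroup M] [Module R M] : Prop :=
  ∀ (ι : Type) (N : ι → Submodule R M), iSupIndep N → (∀ i, N i ≠ ⊥) → Finite ι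

/-- A module is *quotient finite-dimensional* if every quotient module of it is
finite-dimensional. -/
def IsQFDModule (R M : Type*) [Ring R] [AddCommGroup M] [Module R M] : Prop :=
  ∀ N : Submodule R M, IsFinDimModule R (M ⧸ N)

/-- Coefficient of a product modulo a right ideal. -/
theorem s9_coeff_mul_mem {A : Type u} [Ring A] (I : Submodule Aᵐᵒᵖ A) (f g : LaurentSeries A)
    (p j : ℤ) (h1 : ∀ t, t < p → f.coeff t ∈ I)
    (h2 : ∀ t, p < t → f.coeff t * g.coeff (p + j - t) = 0) :
    (f * g).coeff (p + j) - f.coeff p * g.coeff j ∈ I := by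
  classical
  have key : ∀ s : Finset (ℤ × ℤ), (∀ x ∈ s, x.1 + x.2 = p + j) →
      (f.coeff p * g.coeff j ≠ 0 → (p, j) ∈ s) →
      ∑ x ∈ s, f.coeff x.1 * g.coeff x.2 - f.coeff p * g.coeff j ∈ I := by
    intro s hs hp
    have hoth : ∀ x ∈ s, x ≠ (p, j) → f.coeff x.1 * g.coeff x.2 ∈ I := by
      intro x hx hne
      have hsum := hs x hx
      rcases lt_trichotomy x.1 p with hlt | heq | hgt
      · exact I.smul_mem (MulOpposite.op (g.coeff x.2)) (h1 _ hlt)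
      · exact absurd (Prod.ext heq (by show x.2 = j; omega)) hne
      · have hx2 : x.2 = p + j - x.1 := by omega
        rw [hx2, h2 _ hgt]
        exact I.zero_mem
    by_cases hmem : (p, j) ∈ s
    · rw [← Finset.add_sum_erase s _ hmem, add_sub_cancel_left]
      refine I.sum_mem fun x hx => ?_
      exact hoth x (Finset.mem_of_mem_erase hx) (Finset.ne_of_mem_erase hx)
    · have h0 : f.coeff p * g.coeff j = 0 := by
        by_contra hc
        exact hmem (hp hc)
      rw [h0, sub_zero]
      refine I.sum_mem fun x hx => hoth x hx ?_
      rintro rfl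
      exact hmem hx
  rw [HahnSeries.coeff_mul]
  apply key
  · intro x hx
    simp only [Finset.mem_antidiagonal] at hx
    exact hx.2.2
  · intro hne
    simp only [Finset.mem_antidiagonal]
    refine ⟨?_, ?_, trivial⟩
    · intro hc
      exact hne (by rw [hc, zero_mul])
    · intro hc
      exact hne (by rw [hc, mul_zero])

/-- Vanishing of low coefficients of a product. -/
theorem s9_coeff_mul_zero {A : Type u} [Ring A] (f g : LaurentSeries A) (p q : ℤ)
    (hf : ∀ t, t < p → f.coeff t = 0) (hg : ∀ t, t < q → g.coeff t = 0) :
    ∀ t, t < p + q → (f * g).coeff t = 0 := by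
  intro t ht
  rw [HahnSeries.coeff_mul]
  refine Finset.sum_eq_zero fun x hx => ?_
  simp only [Finset.mem_antidiagonal] at hx
  have := hx.2.2
  by_cases hx1 : x.1 < p
  · rw [hf _ hx1, zero_mul]
  · rw [hg _ (by omega), mul_zero]

/-- The sparse series `∑ a n x^(n^2)` over `n` with first unpairing component `i`. -/
noncomputable def s9F {A : Type u} [Ring A] (a : ℕ → A) (i : ℕ) : LaurentSeries A :=
  HahnSeries.ofSuppBddBelow
    (fun t : ℤ => if 0 ≤ t ∧ (t.toNat.sqrt) ^ 2 = t.toNat ∧ (t.toNat.sqrt).unpair.1 = i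
      then a t.toNat.sqrt else 0)
    ⟨0, fun t ht => by
      by_contra hc
      apply ht
      exact if_neg fun h => hc h.1⟩

theorem s9F_coeff_def {A : Type u} [Ring A] (a : ℕ → A) (i : ℕ) (t : ℤ) :
    (s9F a i).coeff t = if 0 ≤ t ∧ (t.toNat.sqrt) ^ 2 = t.toNat ∧ (t.toNat.sqrt).unpair.1 = i
      then a t.toNat.sqrt else 0 := rfl

theorem s9F_coeff_sq {A : Type u} [Ring A] (a : ℕ → A) (i n : ℕ) :
    (s9F a i).coeff ((n : ℤ) ^ 2) = if n.unpair.1 = i then a n else 0 := by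
  have h : ((n : ℤ) ^ 2).toNat = n ^ 2 := by
    have : ((n : ℤ) ^ 2) = ((n ^ 2 : ℕ) : ℤ) := by push_cast; rfl
    rw [this, Int.toNat_natCast]
  simp only [s9F_coeff_def, h, Nat.sqrt_eq']
  have : (0 : ℤ) ≤ (n : ℤ) ^ 2 := by positivity
  simp [this]

theorem s9F_coeff {A : Type u} [Ring A] (a : ℕ → A) (i : ℕ) (t : ℤ) :
    (s9F a i).coeff t = 0 ∨ ∃ n : ℕ, t = (n : ℤ) ^ 2 ∧ (s9F a i).coeff t = a n := by
  by_cases h : 0 ≤ t ∧ (t.toNat.sqrt) ^ 2 = t.toNat ∧ (t.toNat.sqrt).unpair.1 = i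
  · right
    refine ⟨t.toNat.sqrt, ?_, ?_⟩
    · have h2 : (((t.toNat.sqrt) ^ 2 : ℕ) : ℤ) = (t.toNat : ℤ) := by rw [h.2.1]
      rw [Int.toNat_of_nonneg h.1] at h2
      push_cast at h2
      exact h2.symm
    · rw [s9F_coeff_def]
      rw [if_pos h]
  · left
    rw [s9F_coeff_def]
    rw [if_neg h]

open Filter in
/-- The right ideal (viewed in the opposite ring) of series whose coefficients are eventually
killed modulo `I n`. -/
def s9G {A : Type u} [Ring A] (a : ℕ → A) (I : ℕ → Submodule Aᵐᵒᵖ A) (i : ℕ) :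
    Submodule (LaurentSeries A)ᵐᵒᵖ (LaurentSeries A)ᵐᵒᵖ where
  carrier := {q | ∀ j : ℤ, ∀ᶠ n : ℕ in atTop, n.unpair.1 = i → a n * q.unop.coeff j ∈ I n}
  zero_mem' := by
    intro j
    refine Eventually.of_forall fun n _ => ?_
    simp
  add_mem' := by
    intro p q hp hq j
    filter_upwards [hp j, hq j] with n h1 h2 hn
    rw [MulOpposite.unop_add, HahnSeries.coeff_add, mul_add]
    exact (I n).add_mem (h1 hn) (h2 hn)
  smul_mem' := by
    intro r q hq j
    have : ∀ s : Finset (ℤ × ℤ), ∀ᶠ n : ℕ in atTop, ∀ x ∈ s,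
        n.unpair.1 = i → a n * q.unop.coeff x.1 ∈ I n := by
      intro s
      rw [eventually_all_finset]
      intro x _
      exact hq x.1
    have h2 := this (Finset.antidiagonal q.unop.isPWO_support r.unop.isPWO_support j)
    filter_upwards [h2] with n hn hni
    rw [smul_eq_mul, MulOpposite.unop_mul, HahnSeries.coeff_mul, Finset.mul_sum]
    refine (I n).sum_mem fun x hx => ?_
    rw [← mul_assoc]
    exact (I n).smul_mem (MulOpposite.op (r.unop.coeff x.2)) (hn x hx hni)

open Filter in
theorem s9_key {A : Type u} [Ring A] (a : ℕ → A) (I : ℕ → Submodule Aᵐᵒᵖ A)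
    (haI : ∀ m n, m < n → a m ∈ I n) (g : ℕ →₀ (LaurentSeries A)ᵐᵒᵖ)
    (hg : Finsupp.linearCombination (LaurentSeries A)ᵐᵒᵖ (s9F a) g = 0) (i : ℕ) :
    g i ∈ s9G a I i := by
  intro j
  have hlow : ∀ᶠ n : ℕ in atTop, ∀ l ∈ g.support, ∀ v : ℤ, v ≤ j - (2 * n + 1) →
      (g l).unop.coeff v = 0 := by
    rw [eventually_all_finset]
    intro l _
    filter_upwards [eventually_ge_atTop (j - (g l).unop.order).toNat] with n hn v hv
    apply HahnSeries.coeff_eq_zero_of_lt_order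
    omega
  filter_upwards [hlow] with n hn hni
  have hmem : ∀ l ∈ g.support, ((s9F a l) * (g l).unop).coeff ((n : ℤ) ^ 2 + j)
      - (s9F a l).coeff ((n : ℤ) ^ 2) * (g l).unop.coeff j ∈ I n := by
    intro l hl
    apply s9_coeff_mul_mem
    · intro t ht
      rcases s9F_coeff a l t with h0 | ⟨m, rfl, hm⟩
      · rw [h0]; exact (I n).zero_mem
      · rw [hm]
        apply haI
        have : m ^ 2 < n ^ 2 := by exact_mod_cast ht
        exact lt_of_pow_lt_pow_left₀ 2 (Nat.zero_le _) this
    · intro t ht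
      rcases s9F_coeff a l t with h0 | ⟨m, rfl, hm⟩
      · rw [h0, zero_mul]
      · have h3 : n ^ 2 < m ^ 2 := by exact_mod_cast ht
        have h4 : n < m := lt_of_pow_lt_pow_left₀ 2 (Nat.zero_le _) h3
        rw [hn l hl, mul_zero]
        have h5 : (n : ℤ) + 1 ≤ m := by exact_mod_cast h4
        nlinarith
  have hsum := (I n).sum_mem hmem
  rw [Finset.sum_sub_distrib] at hsum
  have hz : ∑ l ∈ g.support, ((s9F a l) * (g l).unop).coeff ((n : ℤ) ^ 2 + j) = 0 := by
    have h6 := congrArg (fun y : LaurentSeries A => y.coeff ((n : ℤ) ^ 2 + j)) hg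
    simp only [Finsupp.linearCombination_apply, Finsupp.sum, HahnSeries.coeff_sum,
      HahnSeries.coeff_zero] at h6
    exact h6
  rw [hz, zero_sub, Submodule.neg_mem_iff] at hsum
  have hs2 : ∑ l ∈ g.support, (s9F a l).coeff ((n : ℤ) ^ 2) * (g l).unop.coeff j
      = a n * (g i).unop.coeff j := by
    rw [Finset.sum_eq_single i]
    · rw [s9F_coeff_sq, if_pos hni]
    · intro l _ hl
      rw [s9F_coeff_sq, if_neg (by rw [hni]; exact fun h => hl h.symm), zero_mul]
    · intro h
      rw [Finsupp.notMem_support_iff] at h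
      simp [h]
  rwa [hs2] at hsum

open Filter in
theorem s9_one_notMem {A : Type u} [Ring A] (a : ℕ → A) (I : ℕ → Submodule Aᵐᵒᵖ A)
    (han : ∀ n, a n ∉ I n) (i : ℕ) : (1 : (LaurentSeries A)ᵐᵒᵖ) ∉ s9G a I i := by
  intro h
  obtain ⟨B, hB⟩ := eventually_atTop.1 (h 0)
  have := hB (Nat.pair i B) (Nat.right_le_pair _ _) (by simp)
  simp at this
  exact han _ this

theorem s9_noeth_A (A : Type u) [Ring A]
    (h : IsQFDModule (LaurentSeries A)ᵐᵒᵖ (LaurentSeries A)) : IsNoetherian Aᵐᵒᵖ A := by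
  classical
  by_contra hN
  rw [isNoetherian_iff', WellFoundedGT, isWellFounded_iff, RelEmbedding.wellFounded_iff_isEmpty,
    not_isEmpty_iff] at hN
  obtain ⟨I⟩ := hN
  have hlt : ∀ m n : ℕ, m < n → I m < I n := fun m n hmn => I.map_rel_iff.2 hmn
  have hex : ∀ n : ℕ, ∃ x, x ∈ I (n + 1) ∧ x ∉ I n := fun n =>
    SetLike.exists_of_lt (hlt n (n + 1) (Nat.lt_succ_self n))
  choose a ha1 ha2 using hex
  have haI : ∀ m n, m < n → a m ∈ I n := by
    intro m n hmn
    rcases Nat.lt_or_ge (m + 1) n with h1 | h1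
    · exact (hlt _ _ h1).le (ha1 m)
    · have : n = m + 1 := by omega
      rw [this]; exact ha1 m
  let Φ := Finsupp.linearCombination (LaurentSeries A)ᵐᵒᵖ (s9F a)
  let P : Submodule (LaurentSeries A)ᵐᵒᵖ (ℕ →₀ (LaurentSeries A)ᵐᵒᵖ) :=
    ⨅ i, (s9G a (fun n => I n) i).comap (Finsupp.lapply i)
  have hP : ∀ g, g ∈ P ↔ ∀ i, g i ∈ s9G a (fun n => I n) i := by
    intro g
    simp [P, Submodule.mem_iInf]
  have hker : ∀ g, Φ g ∈ P.map Φ → g ∈ P := by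
    rintro g ⟨g', hg', hgg⟩
    have : g - g' ∈ P := by
      rw [hP]
      intro i
      apply s9_key a _ haI
      show Φ (g - g') = 0
      rw [map_sub, hgg, sub_self]
    simpa using P.add_mem this hg'
  have hfin := h (P.map Φ) ℕ
    (fun i => ((LinearMap.range (Finsupp.lsingle (R := (LaurentSeries A)ᵐᵒᵖ) i)).map Φ).map
      (P.map Φ).mkQ) ?_ ?_
  · exact not_finite ℕ
  · rw [iSupIndep_iff_finsetSum_eq_zero_imp_eq_zero]
    intro s v hv hsum i hi
    have hv' : ∀ i, ∃ w : (LaurentSeries A)ᵐᵒᵖ, i ∈ s →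
        (P.map Φ).mkQ (Φ (Finsupp.single i w)) = v i := by
      intro i
      by_cases his : i ∈ s
      · obtain ⟨_, ⟨_, ⟨w, rfl⟩, rfl⟩, hw⟩ := hv i his
        exact ⟨w, fun _ => hw⟩
      · exact ⟨0, fun h => absurd h his⟩
    choose w hw using hv'
    have h1 : (P.map Φ).mkQ (Φ (∑ i ∈ s, Finsupp.single i (w i))) = 0 := by
      rw [map_sum, map_sum, ← hsum]
      exact Finset.sum_congr rfl fun i hi => hw i hi
    rw [Submodule.mkQ_apply, Submodule.Quotient.mk_eq_zero] at h1
    have h2 := (hP _).1 (hker _ h1) i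
    have h3 : (∑ i ∈ s, Finsupp.single i (w i)) i = w i := by
      rw [Finsupp.finsetSum_apply, Finset.sum_eq_single i]
      · simp
      · intro b _ hb
        simp [hb]
      · exact fun h => absurd hi h
    rw [h3] at h2
    rw [← hw i hi, Submodule.mkQ_apply, Submodule.Quotient.mk_eq_zero]
    refine ⟨_, (hP _).2 fun k => ?_, rfl⟩
    by_cases hk : i = k
    · subst hk; simpa using h2
    · rw [Finsupp.single_eq_of_ne (Ne.symm hk)]
      exact Submodule.zero_mem _
  · intro i hbot
    have h1 : (P.map Φ).mkQ (Φ (Finsupp.single i 1)) = 0 := by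
      rw [← Submodule.mem_bot (LaurentSeries A)ᵐᵒᵖ, ← hbot]
      exact ⟨_, ⟨_, ⟨1, rfl⟩, rfl⟩, rfl⟩
    rw [Submodule.mkQ_apply, Submodule.Quotient.mk_eq_zero] at h1
    have h2 := (hP _).1 (hker _ h1) i
    rw [Finsupp.single_eq_same] at h2
    exact s9_one_notMem a _ ha2 i h2

/-- The right ideal of leading coefficients in degree zero. -/
def s9L {A : Type u} [Ring A] (J : Submodule (LaurentSeries A)ᵐᵒᵖ (LaurentSeries A)) :
    Submodule Aᵐᵒᵖ A where
  carrier := {c | ∃ f ∈ J, (∀ t < 0, f.coeff t = 0) ∧ f.coeff 0 = c}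
  zero_mem' := ⟨0, J.zero_mem, by simp, by simp⟩
  add_mem' := by
    rintro _ _ ⟨f, hf, hf1, rfl⟩ ⟨g, hg, hg1, rfl⟩
    refine ⟨f + g, J.add_mem hf hg, ?_, by simp⟩
    intro t ht
    rw [HahnSeries.coeff_add, hf1 t ht, hg1 t ht, add_zero]
  smul_mem' := by
    rintro r _ ⟨f, hf, hf1, rfl⟩
    refine ⟨f * HahnSeries.single 0 r.unop,
      J.smul_mem (MulOpposite.op (HahnSeries.single 0 r.unop)) hf, ?_, ?_⟩
    · intro t ht
      rw [HahnSeries.coeff_mul_single, sub_zero, hf1 t ht, zero_mul]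
    · rw [HahnSeries.coeff_mul_single, sub_zero]
      rfl

theorem s9_noeth_R (A : Type u) [Ring A] (hA : IsNoetherian Aᵐᵒᵖ A) :
    IsNoetherian (LaurentSeries A)ᵐᵒᵖ (LaurentSeries A) := by
  classical
  refine ⟨fun J => ?_⟩
  have hmulJ : ∀ f ∈ J, ∀ g : LaurentSeries A, f * g ∈ J := fun f hf g =>
    J.smul_mem (MulOpposite.op g) hf
  obtain ⟨k, b, hb⟩ := Submodule.fg_iff_exists_fin_generating_family.1 (hA.noetherian (s9L J))
  have hbL : ∀ i, ∃ f ∈ J, (∀ t < 0, f.coeff t = 0) ∧ f.coeff 0 = b i := by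
    intro i
    have : b i ∈ s9L J := by
      rw [← hb]; exact Submodule.subset_span ⟨i, rfl⟩
    exact this
  choose F hFJ hF0 hFb using hbL
  rw [Submodule.fg_iff_exists_fin_generating_family]
  refine ⟨k, F, le_antisymm ?_ ?_⟩
  · rw [Submodule.span_le]
    rintro _ ⟨i, rfl⟩
    exact hFJ i
  -- one step of approximation
  have step : ∀ (n : ℕ) (g : LaurentSeries A), ∃ c : Fin k → A, g ∈ J → (∀ t < (n : ℤ), g.coeff t = 0)
      → ∀ t < (n : ℤ) + 1, (g - ∑ i, F i * HahnSeries.single (n : ℤ) (c i)).coeff t = 0 := by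
    intro n g
    by_cases hg : g ∈ J ∧ (∀ t < (n : ℤ), g.coeff t = 0)
    · obtain ⟨hgJ, hg0⟩ := hg
      have hmem : g.coeff n ∈ s9L J := by
        refine ⟨g * HahnSeries.single (-(n : ℤ)) 1, hmulJ _ hgJ _, ?_, ?_⟩
        · intro t ht
          rw [HahnSeries.coeff_mul_single, mul_one]
          exact hg0 _ (by omega)
        · rw [HahnSeries.coeff_mul_single, mul_one]
          congr 1
          omega
      rw [← hb, Submodule.mem_span_range_iff_exists_fun] at hmem
      obtain ⟨c, hc⟩ := hmem
      refine ⟨fun i => (c i).unop, fun _ _ t ht => ?_⟩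
      rw [HahnSeries.coeff_sub, HahnSeries.coeff_sum]
      simp only [HahnSeries.coeff_mul_single]
      rcases lt_or_eq_of_le (show t ≤ n by omega) with hlt | rfl
      · rw [hg0 t hlt, zero_sub, neg_eq_zero]
        refine Finset.sum_eq_zero fun i _ => ?_
        rw [hF0 i _ (by omega), zero_mul]
      · simp only [sub_self, hFb]
        rw [← hc]
        exact sub_self _
    · exact ⟨0, fun h1 h2 => absurd ⟨h1, h2⟩ hg⟩
  choose c hc using step
  -- nonnegative case
  have main : ∀ f ∈ J, (∀ t < (0 : ℤ), f.coeff t = 0) →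
      f ∈ Submodule.span (LaurentSeries A)ᵐᵒᵖ (Set.range F) := by
    intro f hf hf0
    let r : ℕ → LaurentSeries A := fun n =>
      Nat.rec f (fun n g => g - ∑ i, F i * HahnSeries.single (n : ℤ) (c n g i)) n
    have hr0 : r 0 = f := rfl
    have hrs : ∀ n, r (n + 1) = r n - ∑ i, F i * HahnSeries.single (n : ℤ) (c n (r n) i) :=
      fun n => rfl
    have hrJ : ∀ n, r n ∈ J := by
      intro n
      induction n with
      | zero => exact hf
      | succ n ih =>
        rw [hrs]
        exact J.sub_mem ih (J.sum_mem fun i _ => hmulJ _ (hFJ i) _)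
    have hrz : ∀ n : ℕ, ∀ t < (n : ℤ), (r n).coeff t = 0 := by
      intro n
      induction n with
      | zero =>
        rw [hr0]
        simpa using hf0
      | succ n ih =>
        rw [hrs]
        push_cast
        exact hc n (r n) (hrJ n) ih
    let H : Fin k → LaurentSeries A := fun i => HahnSeries.ofSuppBddBelow
      (fun t : ℤ => if 0 ≤ t then c t.toNat (r t.toNat) i else 0)
      ⟨0, fun t ht => by
        by_contra hcon
        exact ht (if_neg hcon)⟩
    have hH : ∀ i t, (H i).coeff t = if 0 ≤ t then c t.toNat (r t.toNat) i else 0 :=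
      fun i t => rfl
    have hrn : ∀ n, r n = f - ∑ i, F i *
        ∑ m ∈ Finset.range n, HahnSeries.single (m : ℤ) (c m (r m) i) := by
      intro n
      induction n with
      | zero => simp [hr0]
      | succ n ih =>
        rw [hrs]
        simp only [Finset.sum_range_succ, mul_add, Finset.sum_add_distrib]
        rw [← sub_sub, ← ih]
    have hfin : f = ∑ i, F i * H i := by
      rw [← sub_eq_zero]
      ext t
      rw [HahnSeries.coeff_zero]
      let n : ℕ := (t + 1).toNat
      have htn : t < (n : ℤ) := by simp only [n]; omega
      have e1 : f - ∑ i, F i * H i = r n - ∑ i, F i *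
          (H i - ∑ m ∈ Finset.range n, HahnSeries.single (m : ℤ) (c m (r m) i)) := by
        rw [hrn n]
        simp only [mul_sub, Finset.sum_sub_distrib]
        abel
      rw [e1, HahnSeries.coeff_sub, hrz n t htn, zero_sub, neg_eq_zero, HahnSeries.coeff_sum]
      refine Finset.sum_eq_zero fun i _ => ?_
      apply s9_coeff_mul_zero _ _ 0 n (hF0 i) _ t (by omega)
      intro u hu
      rw [HahnSeries.coeff_sub, hH, HahnSeries.coeff_sum]
      by_cases hu0 : 0 ≤ u
      · obtain ⟨m, rfl⟩ := Int.eq_ofNat_of_zero_le hu0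
        rw [if_pos hu0, Finset.sum_eq_single m]
        · simp
        · intro b _ hbm
          rw [HahnSeries.coeff_single_of_ne]
          exact fun h => hbm (by exact_mod_cast h.symm)
        · intro hm
          exact absurd (Finset.mem_range.2 (by exact_mod_cast hu)) hm
      · rw [if_neg hu0, zero_sub, neg_eq_zero]
        refine Finset.sum_eq_zero fun m _ => ?_
        rw [HahnSeries.coeff_single_of_ne]
        omega
    rw [hfin]
    refine Submodule.sum_mem _ fun i _ => ?_
    exact Submodule.smul_mem _ (MulOpposite.op (H i)) (Submodule.subset_span ⟨i, rfl⟩)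
  intro f hf
  have h1 := main (f * HahnSeries.single (-f.order) 1) (hmulJ _ hf _) (by
    intro t ht
    rw [HahnSeries.coeff_mul_single, mul_one]
    apply HahnSeries.coeff_eq_zero_of_lt_order
    omega)
  have h2 := Submodule.smul_mem _ (MulOpposite.op (HahnSeries.single f.order (1 : A))) h1
  have h3 : MulOpposite.op (HahnSeries.single f.order (1 : A)) •
      (f * HahnSeries.single (-f.order) (1 : A)) = f := by
    rw [op_smul_eq_mul, mul_assoc, HahnSeries.single_mul_single]
    simp
  rwa [h3] at h2

/-- Let `R = A((x))` be the Laurent series ring over `A`. If every cyclic right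
`R`-module is quotient finite-dimensional, then `R` and `A` are right Noetherian. -/
theorem stmt9 (A : Type u) [Ring A]
    (h : ∀ (M : Type u) [AddCommGroup M] [Module (LaurentSeries A)ᵐᵒᵖ M],
      (∃ m : M, Submodule.span (LaurentSeries A)ᵐᵒᵖ {m} = ⊤) →
        IsQFDModule (LaurentSeries A)ᵐᵒᵖ M) :
    IsNoetherian (LaurentSeries A)ᵐᵒᵖ (LaurentSeries A) ∧ IsNoetherian Aᵐᵒᵖ A := by
  have hA : IsNoetherian Aᵐᵒᵖ A := by
    apply s9_noeth_A
    refine h (LaurentSeries A) ⟨1, ?_⟩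
    rw [Submodule.eq_top_iff']
    intro y
    rw [Submodule.mem_span_singleton]
    exact ⟨MulOpposite.op y, by rw [op_smul_eq_mul, one_mul]⟩
  exact ⟨s9_noeth_R A hA, hA⟩
end

section
/- Let A be a ring and let R = A((x)) be its Laurent series ring. If every cyclic right R-module is quotient finite-dimensional, then the Jacobson radical J(R) of R is nilpotent. -/
universe u

namespace LaurentQFD

lemma not_irredundant {S M : Type*} [Ring S] [AddCommGroup M] [Module S M]
    (hM : IsQFDModule S M) (f : ℕ → M)
    (hf : ∀ k, f k ∉ Submodule.span S (f '' {j | j ≠ k})) : False := by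
  let L : ℕ → Submodule S M := fun k => Submodule.span S (f '' {j | j ≠ k})
  let D : Submodule S M := ⨅ k, L k
  let U : ℕ → Submodule S M := fun k => ⨅ j, ⨅ (_ : j ≠ k), L j
  have hfU : ∀ k, f k ∈ U k := by
    intro k
    simp only [U, Submodule.mem_iInf]
    intro j hj
    exact Submodule.subset_span ⟨k, fun h => hj h.symm, rfl⟩
  have hUL : ∀ j k, j ≠ k → U j ≤ L k := by
    intro j k hjk
    exact iInf₂_le k hjk.symm
  have hD : ∀ k u, u ∈ U k → u ∈ L k → u ∈ D := by
    intro k u hu hl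
    simp only [D, Submodule.mem_iInf]
    intro j
    by_cases hj : j = k
    · rw [hj]; exact hl
    · exact hUL k j (fun h => hj h.symm) hu
  have hfin := hM D ℕ (fun k => (U k).map D.mkQ) ?_ ?_
  · exact not_finite ℕ
  · intro k
    have h1 : (⨆ j, ⨆ (_ : j ≠ k), (U j).map D.mkQ) ≤ (L k).map D.mkQ :=
      iSup₂_le fun j hj => Submodule.map_mono (hUL j k hj)
    refine Disjoint.mono_right h1 ?_
    rw [Submodule.disjoint_def]
    rintro x ⟨u, hu, rfl⟩ ⟨l, hl, hlu⟩
    have h2 : l - u ∈ D := (Submodule.Quotient.eq D).1 hlu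
    have h3 : l - u ∈ L k := (iInf_le L k) h2
    have h4 : u ∈ L k := by
      have := (L k).sub_mem hl h3
      simpa using this
    exact (Submodule.Quotient.mk_eq_zero D).2 (hD k u hu h4)
  · intro k hk
    have h1 : D.mkQ (f k) ∈ (U k).map D.mkQ := ⟨f k, hfU k, rfl⟩
    rw [hk, Submodule.mem_bot] at h1
    have h2 : f k ∈ D := (Submodule.Quotient.mk_eq_zero D).1 h1
    exact hf k ((iInf_le L k) h2)

lemma exists_bound {A : Type*} [Ring A] (r : LaurentSeries A) :
    ∃ E : ℕ, ∀ j : ℤ, j < -(E : ℤ) → r.coeff j = 0 := by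
  refine ⟨r.order.natAbs, fun j hj => HahnSeries.coeff_eq_zero_of_lt_order ?_⟩
  omega

lemma coeff_mul_mem {A : Type*} [Ring A] (P : AddSubgroup A) (f g : LaurentSeries A) (d : ℤ)
    (h : ∀ i j, i + j = d → g.coeff j ≠ 0 → f.coeff i * g.coeff j ∈ P) :
    (f * g).coeff d ∈ P := by
  rw [HahnSeries.coeff_mul]
  refine sum_mem fun ij hij => ?_
  rw [Finset.mem_antidiagonal] at hij
  exact h _ _ hij.2.2 hij.2.1

/-- the coefficients of the sparse series -/
noncomputable def cf {A : Type*} [Ring A] (m : ℕ → A) (k : ℕ) (d : ℤ) : A :=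
  if d = 2 ^ (Nat.log 2 d.toNat) ∧ (Nat.unpair (Nat.log 2 d.toNat)).1 = k then
    m (Nat.log 2 d.toNat) else 0

lemma cf_bdd {A : Type*} [Ring A] (m : ℕ → A) (k : ℕ) :
    BddBelow (Function.support (cf m k)) := by
  refine ⟨0, fun d hd => ?_⟩
  by_contra hneg
  apply hd
  rw [cf, if_neg]
  rintro ⟨h, -⟩
  have : (0 : ℤ) < 2 ^ (Nat.log 2 d.toNat) := by positivity
  omega

/-- the sparse series -/
noncomputable def sf {A : Type*} [Ring A] (m : ℕ → A) (k : ℕ) : LaurentSeries A :=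
  HahnSeries.ofSuppBddBelow (cf m k) (cf_bdd m k)

lemma sf_coeff_self {A : Type*} [Ring A] (m : ℕ → A) (k t : ℕ) (ht : (Nat.unpair t).1 = k) :
    (sf m k).coeff (2 ^ t) = m t := by
  have : Nat.log 2 ((2 : ℤ) ^ t).toNat = t := by
    have : ((2 : ℤ) ^ t).toNat = 2 ^ t := by
      have : ((2 : ℤ) ^ t) = ((2 ^ t : ℕ) : ℤ) := by push_cast; rfl
      rw [this, Int.toNat_natCast]
    rw [this, Nat.log_pow (by norm_num)]
  simp [sf, cf, this, ht]

lemma sf_coeff_other {A : Type*} [Ring A] (m : ℕ → A) (M : ℕ → Submodule Aᵐᵒᵖ A)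
    (hM : Monotone M) (hm : ∀ i, m i ∈ M (i + 1)) (j k t : ℕ) (hjk : j ≠ k)
    (ht : (Nat.unpair t).1 = k) (d : ℤ) (hd : d < 2 ^ (t + 1)) :
    (sf m j).coeff d ∈ M t := by
  simp only [sf, HahnSeries.coeff_ofSuppBddBelow, cf]
  split_ifs with h
  · obtain ⟨h1, h2⟩ := h
    generalize Nat.log 2 d.toNat = i at *
    have h3 : (2 : ℤ) ^ i < 2 ^ (t + 1) := h1 ▸ hd
    have h4 : i < t + 1 := (pow_lt_pow_iff_right₀ (by norm_num)).1 h3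
    have h5 : i ≠ t := by
      rintro rfl
      exact hjk (h2.symm.trans ht)
    exact hM (by omega) (hm i)
  · exact zero_mem _

theorem noeth (A : Type*) [Ring A]
    (h : IsQFDModule (LaurentSeries A)ᵐᵒᵖ (LaurentSeries A)) :
    WellFoundedGT (Submodule Aᵐᵒᵖ A) := by
  rw [WellFoundedGT, isWellFounded_iff, RelEmbedding.wellFounded_iff_isEmpty]
  refine ⟨fun F => ?_⟩
  have hlt : ∀ n, F n < F (n + 1) := fun n => F.map_rel_iff.2 (Nat.lt_succ_self n)
  have hmono : Monotone (fun n => F n) := monotone_nat_of_le_succ fun n => (hlt n).le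
  choose m hm1 hm2 using fun n => SetLike.exists_of_lt (hlt n)
  refine not_irredundant h (sf m) fun k hk => ?_
  have key : ∀ g ∈ Submodule.span (LaurentSeries A)ᵐᵒᵖ (sf m '' {j | j ≠ k}),
      ∃ D : ℕ, ∀ t, (Nat.unpair t).1 = k → ∀ d : ℤ, d + D < 2 ^ (t + 1) →
        g.coeff d ∈ F t := by
    intro g hg
    induction hg using Submodule.span_induction with
    | mem x hx =>
      obtain ⟨j, hj, rfl⟩ := hx
      exact ⟨0, fun t ht d hd => sf_coeff_other m (fun n => F n) hmono hm1 j k t hj ht d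
        (by simpa using hd)⟩
    | zero => exact ⟨0, fun t _ d _ => by simp⟩
    | add x y _ _ hx hy =>
      obtain ⟨D, hD⟩ := hx
      obtain ⟨E, hE⟩ := hy
      refine ⟨D + E, fun t ht d hd => ?_⟩
      push_cast at hd
      rw [HahnSeries.coeff_add]
      exact add_mem (hD t ht d (by omega)) (hE t ht d (by omega))
    | smul r x _ hx =>
      obtain ⟨D, hD⟩ := hx
      obtain ⟨E, hE⟩ := exists_bound r.unop
      refine ⟨D + E, fun t ht d hd => ?_⟩
      push_cast at hd
      change (x * r.unop).coeff d ∈ (F t).toAddSubgroup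
      refine coeff_mul_mem _ _ _ _ fun i j hij hj => ?_
      have h1 : ¬ j < -(E : ℤ) := fun hlt => hj (hE j hlt)
      exact (F t).smul_mem (MulOpposite.op (r.unop.coeff j)) (hD t ht i (by omega))
  obtain ⟨D, hD⟩ := key _ hk
  have ht : (Nat.unpair (Nat.pair k D)).1 = k := by simp
  have h1 := hD (Nat.pair k D) ht (2 ^ (Nat.pair k D)) (by
    have h2 : D ≤ Nat.pair k D := Nat.right_le_pair k D
    have h3 : Nat.pair k D < 2 ^ (Nat.pair k D) := Nat.lt_two_pow_self
    have h4 : (D : ℤ) < 2 ^ (Nat.pair k D) := by exact_mod_cast h2.trans_lt h3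
    rw [pow_succ]; omega)
  rw [sf_coeff_self m k _ ht] at h1
  exact hm2 _ h1

/-- nilpotent two-sided ideals, as right ideals -/
def NilIdeal (A : Type*) [Ring A] (P : Submodule Aᵐᵒᵖ A) : Prop :=
  (∀ a p : A, p ∈ P → a * p ∈ P) ∧ ∃ n : ℕ, P.toAddSubgroup.toIntSubmodule ^ n = ⊥

lemma right_mem {A : Type*} [Ring A] (P : Submodule Aᵐᵒᵖ A) {p : A} (hp : p ∈ P) (a : A) :
    p * a ∈ P := P.smul_mem (MulOpposite.op a) hp

/-- Levitzki theorem -/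
theorem levitzki (A : Type*) [Ring A] [hA : WellFoundedGT (Submodule Aᵐᵒᵖ A)] (I : Set A)
    (hI : ∀ a ∈ I, IsNilpotent a) (hmul : ∀ a b, b ∈ I → a * b ∈ I) :
    ∃ P : Submodule Aᵐᵒᵖ A, NilIdeal A P ∧ I ⊆ P := by
  obtain ⟨N, hN, hmax⟩ := hA.wf.has_min {P | NilIdeal A P}
    ⟨⊥, fun a p hp => by simp_all, 1, by
      rw [pow_one, eq_bot_iff]; intro x hx; simpa using hx⟩
  refine ⟨N, hN, ?_⟩
  obtain ⟨hNl, n, hn⟩ := hN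
  by_contra hsub
  let ann : A → Submodule Aᵐᵒᵖ A := fun a =>
    { carrier := {x | a * x ∈ N}
      add_mem' := fun {x y} hx hy => by
        simp only [Set.mem_ofPred_eq] at *
        rw [mul_add]; exact add_mem hx hy
      zero_mem' := by simp
      smul_mem' := fun r x hx => by
        simp only [Set.mem_ofPred_eq] at *
        change a * (x * r.unop) ∈ N
        rw [← mul_assoc]; exact right_mem N hx _ }
  obtain ⟨a0, ha0, ha0N⟩ := Set.not_subset.1 hsub
  obtain ⟨K, ⟨a, ⟨haI, haN⟩, rfl⟩, hamax⟩ := hA.wf.has_min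
    (ann '' {a | a ∈ I ∧ a ∉ N}) ⟨_, a0, ⟨ha0, ha0N⟩, rfl⟩
  have haua : ∀ u, a * u * a ∈ N := by
    intro u
    by_contra hau
    have hua : u * a ∉ N := fun h => hau (by rw [mul_assoc]; exact hNl _ _ h)
    have hnil : ∃ k, (u * a) ^ k ∈ N := by
      obtain ⟨k, hk⟩ := hI _ (hmul u a haI)
      exact ⟨k, by rw [hk]; exact zero_mem _⟩
    classical
    have hk0 := Nat.find_spec hnil
    have hkm := fun j => Nat.find_min hnil (m := j)
    generalize Nat.find hnil = k at hk0 hkm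
    rcases k with _ | _ | k
    · apply haN
      simpa using right_mem N hk0 a
    · exact hua (by simpa using hk0)
    · have h1 := hkm (k + 1) (by omega)
      have h2 : (u * a) ^ (k + 1) ∈ I := by
        rw [pow_succ, ← mul_assoc]; exact hmul _ _ haI
      have h3 := hamax (ann ((u * a) ^ (k + 1))) ⟨_, ⟨h2, h1⟩, rfl⟩
      have h4 : ann a ≤ ann ((u * a) ^ (k + 1)) := by
        intro x hx
        change a * x ∈ N at hx
        change (u * a) ^ (k + 1) * x ∈ N
        rw [pow_succ, ← mul_assoc, mul_assoc]; exact hNl _ _ hx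
      have h5 : ann a = ann ((u * a) ^ (k + 1)) := by
        by_contra hne
        exact h3 (lt_of_le_of_ne h4 hne)
      have h6 : u * a ∈ ann ((u * a) ^ (k + 1)) := by
        change (u * a) ^ (k + 1) * (u * a) ∈ N
        rw [← pow_succ]; exact hk0
      rw [← h5] at h6
      apply hau
      rw [mul_assoc]; exact h6
  -- enlarge N
  let X : Set A := {z | ∃ u v, z = u * a * v}
  let Q : Submodule Aᵐᵒᵖ A := N ⊔ Submodule.span Aᵐᵒᵖ X
  have hNQ : N ≤ Q := le_sup_left
  have hXQ : ∀ u v, u * a * v ∈ Q := fun u v =>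
    (le_sup_right : _ ≤ Q) (Submodule.subset_span ⟨u, v, rfl⟩)
  have hQind : ∀ (p : A → Prop), (∀ x ∈ N, p x) → (∀ u v, p (u * a * v)) →
      (∀ x y, p x → p y → p (x + y)) → ∀ x ∈ Q, p x := by
    intro p h1 h2 h3 x hx
    obtain ⟨y, hy, z, hz, rfl⟩ := Submodule.mem_sup.1 hx
    refine h3 _ _ (h1 y hy) ?_
    clear hx
    rw [Submodule.mem_span_set'] at hz
    obtain ⟨l, c, g, rfl⟩ := hz
    refine Finset.sum_induction _ p h3 (h1 0 (zero_mem _)) fun i _ => ?_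
    obtain ⟨u, v, huv⟩ := (g i).2
    change p ((g i : A) * (c i).unop)
    rw [huv, mul_assoc]; exact h2 _ _
  have hQl : ∀ b p : A, p ∈ Q → b * p ∈ Q := by
    intro b
    refine hQind _ (fun x hx => hNQ (hNl _ _ hx)) (fun u v => ?_) (fun x y hx hy => ?_)
    · have := hXQ (b * u) v
      simpa [mul_assoc] using this
    · rw [mul_add]; exact add_mem hx hy
  have hQQ : ∀ x ∈ Q, ∀ y ∈ Q, x * y ∈ N := by
    refine hQind _ (fun x hx y _ => right_mem N hx y) (fun u v => ?_)
      (fun x y hx hy z hz => ?_)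
    · refine hQind _ (fun x hx => hNl _ _ hx) (fun u' v' => ?_) (fun x y hx hy => ?_)
      · have := right_mem N (hNl u _ (haua (v * u'))) v'
        simpa [mul_assoc] using this
      · rw [mul_add]; exact add_mem hx hy
    · rw [add_mul]; exact add_mem (hx z hz) (hy z hz)
  have hQnil : NilIdeal A Q := by
    refine ⟨hQl, 2 * n, ?_⟩
    rw [pow_mul, eq_bot_iff, ← hn]
    refine pow_le_pow_left' ?_ n
    rw [pow_two, Submodule.mul_le]
    exact hQQ
  refine hmax Q hQnil (lt_of_le_of_ne hNQ fun hEq => haN ?_)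
  rw [hEq]
  simpa using hXQ 1 1

lemma jac_right_inv {R : Type*} [Ring R] {j : R} (hj : j ∈ Ideal.jacobson (⊥ : Ideal R)) :
    ∃ z, (1 - j) * z = 1 ∧ z * (1 - j) = 1 := by
  obtain ⟨z, hz⟩ := Ideal.mem_jacobson_iff.1 hj (-1)
  rw [Ideal.mem_bot] at hz
  have h1 : z * (1 - j) = 1 := by
    rw [← sub_eq_zero, ← hz]; noncomm_ring
  obtain ⟨w, hw⟩ := Ideal.mem_jacobson_iff.1 hj z
  rw [Ideal.mem_bot] at hw
  have h2 : z = 1 + z * j := by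
    rw [mul_sub, mul_one] at h1
    rw [← h1]; noncomm_ring
  have h3 : w * z = 1 := by
    rw [← sub_eq_zero, ← hw]
    nth_rewrite 1 [h2]
    noncomm_ring
  have h4 : w = 1 - j := by
    calc w = w * (z * (1 - j)) := by rw [h1, mul_one]
      _ = 1 - j := by rw [← mul_assoc, h3, one_mul]
  exact ⟨z, by rw [← h4, h3], h1⟩

lemma coeff_mul_lowest {A : Type*} [Ring A] (g h : LaurentSeries A) (k : ℤ)
    (hg : ∀ i < 0, g.coeff i = 0) (hh : ∀ i < k, h.coeff i = 0) :
    (g * h).coeff k = g.coeff 0 * h.coeff k := by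
  rw [HahnSeries.coeff_mul]
  refine Finset.sum_eq_single (0, k) (fun ij hij hne => ?_) (fun hn => ?_)
  · rw [Finset.mem_antidiagonal] at hij
    obtain ⟨h1, h2, h3⟩ := hij
    obtain ⟨i, j⟩ := ij
    simp only at h1 h2 h3
    exfalso
    have h4 : ¬ i < 0 := fun hlt => h1 (hg i hlt)
    have h5 : ¬ j < k := fun hlt => h2 (hh j hlt)
    apply hne
    ext <;> simp only <;> omega
  · rw [Finset.mem_antidiagonal] at hn
    by_contra hne
    apply hn
    refine ⟨fun h0 => hne ?_, fun h0 => hne ?_, by simp⟩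
    · simp only at h0 ⊢; rw [h0, zero_mul]
    · simp only at h0 ⊢; rw [h0, mul_zero]

/-- lowest coefficients of the Jacobson radical -/
def low (A : Type*) [Ring A] : Set A :=
  {a | ∃ f ∈ Ideal.jacobson (⊥ : Ideal (LaurentSeries A)),
    (∀ i < 0, f.coeff i = 0) ∧ f.coeff 0 = a}

lemma C_coeff {A : Type*} [Ring A] (a : A) (f : LaurentSeries A) (i : ℤ) :
    (HahnSeries.C a * f).coeff i = a * f.coeff i := HahnSeries.coeff_single_zero_mul

lemma low_mul_left {A : Type*} [Ring A] (a b : A) (hb : b ∈ low A) : a * b ∈ low A := by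
  obtain ⟨f, hf, h1, h2⟩ := hb
  refine ⟨HahnSeries.C a * f, Ideal.mul_mem_left _ _ hf, fun i hi => ?_, ?_⟩
  · rw [C_coeff, h1 i hi, mul_zero]
  · rw [C_coeff, h2]

lemma low_mul_right {A : Type*} [Ring A] (a b : A) (hb : b ∈ low A) : b * a ∈ low A := by
  obtain ⟨f, hf, h1, h2⟩ := hb
  refine ⟨f * HahnSeries.C a, Ideal.mul_mem_right _ _ hf, fun i hi => ?_, ?_⟩
  · rw [HahnSeries.C_apply, HahnSeries.coeff_mul_single_zero, h1 i hi, zero_mul]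
  · rw [HahnSeries.C_apply, HahnSeries.coeff_mul_single_zero, h2]

lemma unit_of_low {A : Type*} [Ring A] (q : LaurentSeries A) (h0 : ∀ i < 0, q.coeff i = 0)
    (h1 : q.coeff 0 = 1) : ∃ w, q * w = 1 := by
  let φ : PowerSeries A := PowerSeries.mk fun n => q.coeff n
  have hφ : HahnSeries.ofPowerSeries ℤ A φ = q := by
    ext i
    rw [PowerSeries.coeff_coe]
    split_ifs with hi
    · rw [h0 i hi]
    · simp only [φ, PowerSeries.coeff_mk]
      congr 1; omega
  have hu : φ * PowerSeries.invOfUnit φ 1 = 1 := PowerSeries.mul_invOfUnit φ 1 (by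
    simp [φ, ← PowerSeries.coeff_zero_eq_constantCoeff_apply, h1])
  exact ⟨HahnSeries.ofPowerSeries ℤ A (PowerSeries.invOfUnit φ 1), by
    rw [← hφ, ← map_mul, hu, map_one]⟩

lemma low_idem {A : Type*} [Ring A] (e : A) (he : e * e = e) (hl : e ∈ low A) : e = 0 := by
  obtain ⟨f, hf, h1, h2⟩ := hl
  set E : LaurentSeries A := HahnSeries.C e with hE
  have hEE : E * E = E := by rw [hE, ← map_mul, he]
  have hq0 : ∀ i < 0, (E * f + 1 - E).coeff i = 0 := by
    intro i hi
    rw [HahnSeries.coeff_sub, HahnSeries.coeff_add, C_coeff, h1 i hi, hE, HahnSeries.C_apply,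
      HahnSeries.coeff_one, HahnSeries.coeff_single_of_ne hi.ne, if_neg hi.ne]
    simp
  have hq1 : (E * f + 1 - E).coeff 0 = 1 := by
    rw [HahnSeries.coeff_sub, HahnSeries.coeff_add, C_coeff, h2, hE, HahnSeries.C_apply,
      HahnSeries.coeff_one, HahnSeries.coeff_single_same, if_pos rfl, he]
    simp
  obtain ⟨w, hw⟩ := unit_of_low _ hq0 hq1
  have hp : E * f = E * (E * f + 1 - E) := by
    rw [mul_sub, mul_add, ← mul_assoc, hEE, mul_one, add_sub_cancel_right]
  have hEJ : E ∈ Ideal.jacobson (⊥ : Ideal (LaurentSeries A)) := by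
    have h3 : E = E * f * w := by rw [hp, mul_assoc, hw, mul_one]
    rw [h3]
    exact Ideal.mul_mem_right _ _ (Ideal.mul_mem_left _ _ hf)
  obtain ⟨z, -, hz⟩ := jac_right_inv hEJ
  have h4 : E = 0 := by
    calc E = z * (1 - E) * E := by rw [hz, one_mul]
      _ = 0 := by rw [mul_assoc, sub_mul, hEE, one_mul, sub_self, mul_zero]
  have h5 : E.coeff 0 = 0 := by rw [h4]; rfl
  rwa [hE, HahnSeries.C_apply, HahnSeries.coeff_single_same] at h5

/-- An element of `low A` with stable right annihilator is zero. -/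
lemma low_stable {A : Type*} [Ring A] (b : A) (hb : b ∈ low A)
    (hst : ∀ y, b * (b * y) = 0 → b * y = 0) : b = 0 := by
  obtain ⟨g, hg, h1, h2⟩ := id hb
  let X : LaurentSeries A := HahnSeries.single (-1) 1
  have hjJ : X * (HahnSeries.C b * g) ∈ Ideal.jacobson (⊥ : Ideal (LaurentSeries A)) :=
    Ideal.mul_mem_left _ _ (Ideal.mul_mem_left _ _ hg)
  obtain ⟨h, hh, -⟩ := jac_right_inv hjJ
  have hrec : h = 1 + X * (HahnSeries.C b * (g * h)) := by
    rw [← hh]; simp only [X]; noncomm_ring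
  have hco : ∀ i : ℤ, h.coeff i = (if i = 0 then 1 else 0) + b * (g * h).coeff (i + 1) := by
    intro i
    conv_lhs => rw [hrec]
    rw [HahnSeries.coeff_add, HahnSeries.coeff_one, HahnSeries.coeff_single_mul, C_coeff, one_mul,
      sub_neg_eq_add]
    congr
  -- vanishing at negative degrees
  have hstep : ∀ k : ℤ, k ≤ 0 → (∀ i < k, h.coeff i = 0) → b * h.coeff k = 0 := by
    intro k hk hlow
    have h3 := hco (k - 1)
    rw [hlow _ (by omega), if_neg (by omega), zero_add, sub_add_cancel,
      coeff_mul_lowest g h k h1 hlow, h2] at h3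
    exact hst _ h3.symm
  obtain ⟨B, hB⟩ := exists_bound h
  have hneg : ∀ n : ℕ, -(B : ℤ) + n ≤ 0 → ∀ i < -(B : ℤ) + n, h.coeff i = 0 := by
    intro n
    induction n with
    | zero => intro _ i hi; exact hB i (by simpa using hi)
    | succ n ih =>
      intro hn i hi
      push_cast at hn hi
      have ih' := ih (by omega)
      by_cases hlt : i < -(B : ℤ) + n
      · exact ih' i hlt
      · have hi' : i = -(B : ℤ) + n := by omega
        have h3 := hstep i (by omega) (fun j hj => ih' j (by omega))
        have h4 := hco i
        rw [if_neg (by omega), zero_add] at h4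
        rw [h4] at h3
        rw [h4, hst _ h3]
  have hneg0 : ∀ i < 0, h.coeff i = 0 := fun i hi => hneg B (by omega) i (by omega)
  have h3 := hstep 0 le_rfl hneg0
  have h4 := hco 0
  rw [if_pos rfl] at h4
  generalize (g * h).coeff (0 + 1) = u at h4
  rw [h4, mul_add, mul_one] at h3
  -- `b + b * (b * u) = 0`
  have hbe : b * (b * (-u)) = b := by
    rw [mul_neg, mul_neg]; exact (eq_neg_of_add_eq_zero_left h3).symm
  generalize -u = v at hbe
  have hid : (b * v) * (b * v) = b * v := by
    have h5 : b * (v * (b * v) - v) = 0 := by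
      apply hst
      rw [mul_sub, mul_sub, hbe, ← mul_assoc b v, ← mul_assoc b (b * v), hbe, hbe, sub_self]
    rw [mul_sub, sub_eq_zero] at h5
    rw [mul_assoc]; exact h5
  have he0 := low_idem (b * v) hid (low_mul_right v b hb)
  rw [he0, mul_zero] at hbe
  exact hbe.symm

lemma low_nil {A : Type*} [Ring A] [hA : WellFoundedGT (Submodule Aᵐᵒᵖ A)] (a : A)
    (ha : a ∈ low A) : IsNilpotent a := by
  let F : ℕ →o Submodule Aᵐᵒᵖ A :=
    { toFun := fun n =>
        { carrier := {x | a ^ n * x = 0}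
          add_mem' := fun {x y} hx hy => by
            simp only [Set.mem_ofPred_eq] at *
            rw [mul_add, hx, hy, add_zero]
          zero_mem' := by simp
          smul_mem' := fun r x hx => by
            simp only [Set.mem_ofPred_eq] at *
            change a ^ n * (x * r.unop) = 0
            rw [← mul_assoc, hx, zero_mul] }
      monotone' := monotone_nat_of_le_succ fun n x hx => by
        change a ^ n * x = 0 at hx
        change a ^ (n + 1) * x = 0
        rw [pow_succ', mul_assoc, hx, mul_zero] }
  obtain ⟨n, hn⟩ := wellFoundedGT_iff_monotone_chain_condition.1 hA F
  refine ⟨n + 1, low_stable _ (by rw [pow_succ]; exact low_mul_left _ _ ha) fun y hy => ?_⟩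
  rw [← mul_assoc, ← pow_add] at hy
  have h1 : y ∈ F (n + 1 + (n + 1)) := hy
  rw [← hn _ (by omega), hn (n + 1) (by omega)] at h1
  exact h1

lemma coeff_prod_mem {A : Type*} [Ring A] (P : Submodule ℤ A) (l : List (LaurentSeries A))
    (hl : ∀ f ∈ l, ∀ i, f.coeff i ∈ P) (i : ℤ) : l.prod.coeff i ∈ P ^ l.length := by
  induction l generalizing i with
  | nil =>
    simp only [List.prod_nil, List.length_nil, pow_zero, HahnSeries.coeff_one]
    split_ifs
    · exact Submodule.one_le.1 le_rfl
    · exact zero_mem _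
  | cons f l ih =>
    rw [List.prod_cons, List.length_cons, pow_succ']
    refine coeff_mul_mem (P * P ^ l.length).toAddSubgroup _ _ _ fun i j _ _ => ?_
    exact Submodule.mul_mem_mul (hl f (by simp) i)
      (ih (fun g hg => hl g (by simp [hg])) j)

/-- Constants from a nilpotent ideal are in the Jacobson radical. -/
lemma const_mem {A : Type*} [Ring A] (P : Submodule Aᵐᵒᵖ A) (hP : NilIdeal A P) (a : A)
    (ha : a ∈ P) (k : ℤ) :
    HahnSeries.single k a ∈ Ideal.jacobson (⊥ : Ideal (LaurentSeries A)) := by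
  obtain ⟨hl, n, hn⟩ := hP
  rw [Ideal.mem_jacobson_iff]
  intro y
  have hnil : IsNilpotent (-(y * HahnSeries.single k a)) := by
    refine ⟨n, ?_⟩
    ext i
    have := coeff_prod_mem P.toAddSubgroup.toIntSubmodule
      (List.replicate n (-(y * HahnSeries.single k a))) (fun f hf i => ?_) i
    · rw [List.prod_replicate, List.length_replicate, hn] at this
      simpa using this
    · rw [(List.mem_replicate.1 hf).2, HahnSeries.coeff_neg, HahnSeries.coeff_mul_single]
      exact neg_mem (hl _ _ ha)
  obtain ⟨u, hu⟩ := hnil.isUnit_one_sub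
  refine ⟨(↑u⁻¹ : LaurentSeries A), ?_⟩
  rw [Ideal.mem_bot, sub_eq_zero]
  have h1 : (↑u⁻¹ : LaurentSeries A) * u = 1 := u.inv_mul
  rw [hu, sub_neg_eq_add, mul_add, mul_one] at h1
  rw [mul_assoc, add_comm]; exact h1

lemma coeff_mem {A : Type*} [Ring A] (P : Submodule Aᵐᵒᵖ A) (hP : NilIdeal A P)
    (hlow : low A ⊆ P) (f : LaurentSeries A)
    (hf : f ∈ Ideal.jacobson (⊥ : Ideal (LaurentSeries A))) (i : ℤ) : f.coeff i ∈ P := by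
  obtain ⟨B, hB⟩ := exists_bound f
  have key : ∀ (n : ℕ) (f : LaurentSeries A) (k : ℤ),
      f ∈ Ideal.jacobson (⊥ : Ideal (LaurentSeries A)) → (∀ j < k, f.coeff j = 0) →
      f.coeff (k + n) ∈ P := by
    intro n
    induction n with
    | zero =>
      intro f k hf hk
      apply hlow
      refine ⟨HahnSeries.single (-k) 1 * f, Ideal.mul_mem_left _ _ hf, fun i hi => ?_, ?_⟩
      · rw [HahnSeries.coeff_single_mul, hk _ (by omega), mul_zero]
      · rw [HahnSeries.coeff_single_mul, one_mul]; simp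
    | succ n ih =>
      intro f k hf hk
      have h0 : f.coeff k ∈ P := by
        apply hlow
        refine ⟨HahnSeries.single (-k) 1 * f, Ideal.mul_mem_left _ _ hf, fun i hi => ?_, ?_⟩
        · rw [HahnSeries.coeff_single_mul, hk _ (by omega), mul_zero]
        · rw [HahnSeries.coeff_single_mul, one_mul]; simp
      have h1 := ih (f - HahnSeries.single k (f.coeff k)) (k + 1)
        (sub_mem hf (const_mem P hP _ h0 k)) (fun j hj => ?_)
      · rw [HahnSeries.coeff_sub, HahnSeries.coeff_single_of_ne (by omega), sub_zero] at h1
        have h2 : k + ((n + 1 : ℕ) : ℤ) = k + 1 + n := by omega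
        rw [h2]; exact h1
      · rw [HahnSeries.coeff_sub]
        by_cases hjk : j = k
        · rw [hjk, HahnSeries.coeff_single_same, sub_self]
        · rw [HahnSeries.coeff_single_of_ne hjk, hk j (by omega), sub_zero]
  by_cases hi : i < -(B : ℤ)
  · rw [hB i hi]; exact zero_mem _
  · have := key (i + B).toNat f (-(B : ℤ)) hf hB
    convert this using 2
    omega

end LaurentQFD

/-- Let `R = A((x))` be the Laurent series ring over `A`. If every cyclic right
`R`-module is quotient finite-dimensional, then the Jacobson radical `J(R)` of `R` is
nilpotent: there is `n > 0` such that every product of `n` elements of `J(R)`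
vanishes, i.e. `J(R) ^ n = 0`. -/
theorem stmt10 (A : Type u) [Ring A]
    (h : ∀ (M : Type u) [AddCommGroup M] [Module (LaurentSeries A)ᵐᵒᵖ M],
      (∃ m : M, Submodule.span (LaurentSeries A)ᵐᵒᵖ {m} = ⊤) →
        IsQFDModule (LaurentSeries A)ᵐᵒᵖ M) :
    ∃ n : ℕ, 0 < n ∧ ∀ f : Fin n → LaurentSeries A,
      (∀ i, f i ∈ Ideal.jacobson (⊥ : Ideal (LaurentSeries A))) →
        (List.ofFn f).prod = 0 := by

  have hQ : IsQFDModule (LaurentSeries A)ᵐᵒᵖ (LaurentSeries A) := by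
    refine h (LaurentSeries A) ⟨1, ?_⟩
    rw [eq_top_iff]
    intro r _
    rw [Submodule.mem_span_singleton]
    exact ⟨MulOpposite.op r, one_mul r⟩
  have := LaurentQFD.noeth A hQ
  obtain ⟨P, hP, hlow⟩ := LaurentQFD.levitzki A (LaurentQFD.low A)
    (fun a ha => LaurentQFD.low_nil a ha) (fun a b hb => LaurentQFD.low_mul_left a b hb)
  obtain ⟨n, hn⟩ := hP.2
  refine ⟨n + 1, Nat.succ_pos n, fun f hf => ?_⟩
  ext i
  have h1 := LaurentQFD.coeff_prod_mem P.toAddSubgroup.toIntSubmodule (List.ofFn f)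
    (fun g hg i => by
      obtain ⟨j, rfl⟩ := List.mem_ofFn.1 hg
      exact LaurentQFD.coeff_mem P hP hlow _ (hf j) i) i
  rw [List.length_ofFn, pow_succ, hn, Submodule.bot_mul, Submodule.mem_bot] at h1
  simpa using h1
end

section
/- Let A be a ring and let R = A((x)) be its Laurent series ring. If R is a semilocal ring and every cyclic right R-module is quotient finite-dimensional, then both R and A are right Artinian rings. -/
universe u

/-- A ring `R` is *semilocal* if `R` modulo its Jacobson radical is a semisimple ring. -/
def IsSemilocalRing (R : Type*) [Ring R] : Prop :=
  IsSemisimpleModule R (R ⧸ Ideal.jacobson (⊥ : Ideal R))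

namespace LaurentAux

/-- Elements `1 + j` with `j` in the Jacobson radical are units. -/
theorem isUnit_one_add_of_mem_jacobson {R : Type*} [Ring R] {r : R}
    (hr : r ∈ Ring.jacobson R) : IsUnit (1 + r) := by
  have key : ∀ s ∈ Ring.jacobson R, ∃ z, z * (1 + s) = 1 := by
    intro s hs
    rw [← Ideal.jacobson_bot] at hs
    obtain ⟨z, hz⟩ := Ideal.exists_mul_add_sub_mem_of_mem_jacobson s hs
    refine ⟨z, ?_⟩
    rw [add_comm]
    exact sub_eq_zero.mp hz
  obtain ⟨z, hz⟩ := key r hr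
  have hz1 : z = 1 + (-(z * r)) := by
    have : z + z * r = 1 := by rw [← hz]; noncomm_ring
    rw [← this]; abel
  obtain ⟨w, hw⟩ := key (-(z * r)) ((Ring.jacobson R).neg_mem ((Ring.jacobson R).mul_mem_left z hr))
  rw [← hz1] at hw
  have : w = 1 + r := by
    calc w = w * (z * (1 + r)) := by rw [hz, mul_one]
      _ = 1 + r := by rw [← mul_assoc, hw, one_mul]
  rw [this] at hw
  exact ⟨⟨1 + r, z, hw, hz⟩, rfl⟩

/-- A left ideal all of whose elements are quasi-regular is in the radical. -/
theorem mem_jacobson_of_forall {R : Type*} [Ring R] {r : R}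
    (hr : ∀ y, IsUnit (1 + y * r)) : r ∈ Ring.jacobson R := by
  rw [← Ideal.jacobson_bot, Ideal.mem_jacobson_iff]
  intro y
  obtain ⟨u, hu⟩ := hr y
  refine ⟨↑u⁻¹, ?_⟩
  have : (↑u⁻¹ : R) * (1 + y * r) = 1 := by rw [← hu]; simp
  rw [Submodule.mem_bot, sub_eq_zero, ← this]
  noncomm_ring

theorem semisimple_quot_of_surj {R Q : Type*} [Ring R] [Ring Q] [IsSemisimpleRing Q]
    (p : R →+* Q) (hp : Function.Surjective p) (hk : ∀ r, p r = 0 → IsUnit (1 + r)) :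
    IsSemisimpleRing (R ⧸ Ring.jacobson R) := by
  have hle : RingHom.ker p = Ring.jacobson R := by
    apply le_antisymm
    · intro r hr
      apply mem_jacobson_of_forall
      intro y
      apply hk
      rw [map_mul, RingHom.mem_ker.mp hr, mul_zero]
    · have : RingHomSurjective p := ⟨hp⟩
      have := Ring.le_comap_jacobson p
      rwa [IsSemisimpleRing.jacobson_eq_bot (R := Q)] at this
  exact ((Ideal.quotEquivOfEq hle).symm.trans
    (RingHom.quotientKerEquivOfSurjective hp)).symm.isSemisimpleRing

theorem isUnit_of_isUnit_quot {R : Type*} [Ring R] {r : R}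
    (hr : IsUnit (Ideal.Quotient.mk (Ring.jacobson R) r)) : IsUnit r := by
  obtain ⟨u, hu⟩ := hr
  obtain ⟨s, hs⟩ := Ideal.Quotient.mk_surjective (↑u⁻¹ : R ⧸ Ring.jacobson R)
  have h1 : IsUnit (s * r) := by
    have := isUnit_one_add_of_mem_jacobson (r := s * r - 1) (by
      rw [← Ideal.Quotient.eq_zero_iff_mem]; simp [hs, ← hu])
    simpa using this
  have h2 : IsUnit (r * s) := by
    have := isUnit_one_add_of_mem_jacobson (r := r * s - 1) (by
      rw [← Ideal.Quotient.eq_zero_iff_mem]; simp [hs, ← hu])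
    simpa using this
  obtain ⟨v, hv⟩ := h1
  obtain ⟨w, hw⟩ := h2
  rw [isUnit_iff_exists_and_exists]
  refine ⟨⟨s * ↑w⁻¹, ?_⟩, ⟨↑v⁻¹ * s, ?_⟩⟩
  · rw [← mul_assoc, ← hw]; simp
  · rw [mul_assoc, ← hv]; simp

theorem isFinDim_iff_nat {R M : Type*} [Ring R] [AddCommGroup M] [Module R M]
    (h : IsFinDimModule R M) (s : Set (Submodule R M)) (hs : sSupIndep s)
    (hb : ⊥ ∉ s) : s.Finite := by
  by_contra hinf
  have : Infinite s := Set.infinite_coe_iff.mpr hinf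
  let φ : ℕ ↪ s := Infinite.natEmbedding s
  have hi := ((sSupIndep_iff s).mp hs).comp φ.injective
  have := h ℕ _ hi (fun i hbot => hb (hbot ▸ (φ i).2))
  exact not_finite ℕ

/-- A semisimple submodule of a finite-dimensional module is Noetherian. -/
theorem isNoetherian_of_finDim {R M : Type*} [Ring R] [AddCommGroup M] [Module R M]
    (h : IsFinDimModule R M) (N : Submodule R M) [IsSemisimpleModule R N] : IsNoetherian R N := by
  obtain ⟨s, hs, htop, hsim⟩ := IsSemisimpleModule.exists_sSupIndep_sSup_simples_eq_top R N
  have hfin : s.Finite := by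
    have hN : IsFinDimModule R N := by
      intro ι P hP hne
      refine h ι (fun i => (P i).map N.subtype) ?_ ?_
      · exact LinearMap.iSupIndep_map N.subtype N.injective_subtype hP
      · intro i hi
        exact hne i (Submodule.map_injective_of_injective N.injective_subtype
          (hi.trans (Submodule.map_bot _).symm))
    refine isFinDim_iff_nat hN s hs ?_
    intro hb
    have := hsim ⊥ hb
    have := IsSimpleModule.nontrivial R (⊥ : Submodule R N)
    exact not_subsingleton (⊥ : Submodule R N) inferInstance
  have : Finite s := hfin
  have hsm : ∀ i : s, IsNoetherian R (i : Submodule R N) := fun i => by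
    have := hsim i i.2
    infer_instance
  have : IsNoetherian R (⨆ i : s, (i : Submodule R N) : Submodule R N) := isNoetherian_iSup
  rw [← sSup_eq_iSup', htop] at this
  exact isNoetherian_of_linearEquiv (Submodule.topEquiv (R := R) (M := N))

section General

variable {R : Type*} [Ring R]

theorem isNoetherian_top (hQ : IsSemisimpleRing (R ⧸ Ring.jacobson R)) (h : IsQFDModule R R)
    (B : Ideal R) : IsNoetherian R (Submodule.map (Ring.jacobson R • B).mkQ B) := by
  have ht : Module.IsTorsionBySet R (Submodule.map (Ring.jacobson R • B).mkQ B) (Ring.jacobson R) := by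
    rintro ⟨_, b, hb, rfl⟩ ⟨j, hj⟩
    apply Subtype.ext
    change j • (Ring.jacobson R • B).mkQ b = 0
    rw [← map_smul, Submodule.mkQ_apply, Submodule.Quotient.mk_eq_zero]
    exact Submodule.smul_mem_smul hj hb
  let _ := ht.module
  have hss : IsSemisimpleModule R (Submodule.map (Ring.jacobson R • B).mkQ B) :=
    ht.isSemisimpleModule_iff.mp inferInstance
  exact isNoetherian_of_finDim (h _) _

theorem exists_fg_top (hQ : IsSemisimpleRing (R ⧸ Ring.jacobson R)) (h : IsQFDModule R R)
    (B : Ideal R) : ∃ C : Ideal R, C.FG ∧ C ≤ B ∧ B ≤ C ⊔ Ring.jacobson R • B := by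
  have hN := isNoetherian_top hQ h B
  have hfg : (Submodule.map (Ring.jacobson R • B).mkQ B).FG := Module.Finite.iff_fg.mp inferInstance
  obtain ⟨C, hCB, hC, hmap⟩ : ∃ C ≤ B, C.FG ∧
      Submodule.map (Ring.jacobson R • B).mkQ C = Submodule.map (Ring.jacobson R • B).mkQ B := by
    obtain ⟨t, ht⟩ := hfg
    have hsub : (t : Set _) ⊆ (Ring.jacobson R • B).mkQ '' (B : Set R) := by
      intro x hx
      have : x ∈ Submodule.map (Ring.jacobson R • B).mkQ B := ht ▸ Submodule.subset_span hx
      exact this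
    obtain ⟨t', ht', hfin, heq⟩ := Set.Finite.exists_subset_finite_image_eq (t.finite_toSet) hsub
    refine ⟨Ideal.span t', Ideal.span_le.mpr ht', Submodule.fg_span hfin, ?_⟩
    change (Submodule.span R t').map _ = _
    rw [Submodule.map_span, heq, ht]
  refine ⟨C, hC, hCB, ?_⟩
  intro b hb
  have : (Ring.jacobson R • B).mkQ b ∈ Submodule.map (Ring.jacobson R • B).mkQ C :=
    hmap ▸ Submodule.mem_map_of_mem hb
  obtain ⟨c, hc, hcb⟩ := this
  have hm : b - c ∈ Ring.jacobson R • B := by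
    rw [← Submodule.Quotient.mk_eq_zero, Submodule.Quotient.mk_sub]
    exact sub_eq_zero.mpr hcb.symm
  rw [← add_sub_cancel c b]
  exact Submodule.add_mem_sup hc hm

theorem isNoetherianRing_of_nilp (hQ : IsSemisimpleRing (R ⧸ Ring.jacobson R))
    (h : IsQFDModule R R) (hn : IsNilpotent (Ring.jacobson R)) : IsNoetherianRing R := by
  refine ⟨fun B => ?_⟩
  obtain ⟨C, hC, hCB, hB⟩ := exists_fg_top hQ h B
  have key : ∀ n : ℕ, B ≤ C ⊔ (Ring.jacobson R) ^ n • B := by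
    intro n
    induction n with
    | zero => rw [Submodule.pow_zero, Ideal.one_eq_top]
              exact le_sup_of_le_right (by simp)
    | succ n ih =>
      refine hB.trans (sup_le le_sup_left ?_)
      refine (Submodule.smul_mono le_rfl ih).trans ?_
      rw [Submodule.smul_sup, Ideal.IsTwoSided.pow_succ]
      refine sup_le (le_sup_of_le_left Submodule.smul_le_right) (le_sup_of_le_right ?_)
      rw [← Submodule.smul_assoc]
      exact le_rfl
  obtain ⟨n, hn⟩ := hn
  have := key n
  rw [hn] at this
  have hCB' : B = C := le_antisymm (by simpa using this) hCB
  rwa [hCB']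

theorem isArtinianRing_of_nilp (hQ : IsSemisimpleRing (R ⧸ Ring.jacobson R))
    (h : IsQFDModule R R) (hn : IsNilpotent (Ring.jacobson R)) : IsArtinianRing R := by
  have : IsSemiprimaryRing R := ⟨hQ, hn⟩
  exact IsSemiprimaryRing.isNoetherian_iff_isArtinian.mp (isNoetherianRing_of_nilp hQ h hn)

theorem exists_mem_span_ne (hQ : IsSemisimpleRing (R ⧸ Ring.jacobson R)) (h : IsQFDModule R R)
    (f : ℕ → R) : ∃ j, f j ∈ Ideal.span (f '' {k | k ≠ j}) := by
  obtain ⟨C, hC, hCB, hB⟩ := exists_fg_top hQ h (Ideal.span (Set.range f))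
  obtain ⟨m, hm⟩ : ∃ m, C ≤ Ideal.span (f '' {k | k < m}) := by
    have hdir : Monotone (fun m : ℕ => Ideal.span (f '' {k | k < m})) := by
      intro a b hab
      exact Ideal.span_mono (Set.image_mono fun k hk => lt_of_lt_of_le hk hab)
    have hsup : (⨆ m : ℕ, Ideal.span (f '' {k | k < m})) = Ideal.span (Set.range f) := by
      apply le_antisymm
      · exact iSup_le fun m => Ideal.span_mono (Set.image_subset_range _ _)
      · rw [Ideal.span_le]
        rintro _ ⟨k, rfl⟩
        exact le_iSup (fun m : ℕ => Ideal.span (f '' {k | k < m})) (k + 1)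
          (Ideal.subset_span ⟨k, Nat.lt_succ_self k, rfl⟩)
    have hcomp := (Submodule.fg_iff_compact C).mp hC
    rw [CompleteLattice.isCompactElement_iff_le_of_directed_sSup_le] at hcomp
    obtain ⟨_, ⟨m, rfl⟩, hm⟩ := hcomp (Set.range fun m : ℕ => Ideal.span (f '' {k | k < m}))
      (Set.range_nonempty _) (directedOn_range.mpr hdir.directed_le)
      (by rw [sSup_range, hsup]; exact hCB)
    exact ⟨m, hm⟩
  refine ⟨m, ?_⟩
  set D := Ideal.span (f '' {k | k ≠ m}) with hD
  have hCD : C ≤ D := hm.trans (Ideal.span_mono (Set.image_mono fun k hk => ne_of_lt hk))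
  have hBle : Ideal.span (Set.range f) ≤ Ideal.span {f m} ⊔ D := by
    rw [Ideal.span_le]
    rintro _ ⟨k, rfl⟩
    by_cases hk : k = m
    · subst hk; exact Submodule.mem_sup_left (Ideal.subset_span rfl)
    · exact Submodule.mem_sup_right (Ideal.subset_span ⟨k, hk, rfl⟩)
  have hfm : f m ∈ C ⊔ Ring.jacobson R • (Ideal.span {f m} ⊔ D) :=
    (hB.trans (sup_le_sup_left (Submodule.smul_mono le_rfl hBle) _))
      (Ideal.subset_span ⟨m, rfl⟩)
  rw [Submodule.smul_sup] at hfm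
  have hle : C ⊔ (Ring.jacobson R • Ideal.span {f m} ⊔ Ring.jacobson R • D) ≤
      Ring.jacobson R • Ideal.span {f m} ⊔ D :=
    sup_le (le_sup_of_le_right hCD) (sup_le_sup_left Submodule.smul_le_right _)
  obtain ⟨y, hy, d, hd, hyd⟩ := Submodule.mem_sup.mp (hle hfm)
  have : ∃ r ∈ Ring.jacobson R, y = r * f m := by
    refine Submodule.smul_induction_on hy ?_ ?_
    · intro r hr n hn
      obtain ⟨s, rfl⟩ := Ideal.mem_span_singleton'.mp hn
      exact ⟨r * s, (Ring.jacobson R).mul_mem_right s hr, by rw [smul_eq_mul, mul_assoc]⟩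
    · rintro _ _ ⟨r, hr, rfl⟩ ⟨s, hs, rfl⟩
      exact ⟨r + s, (Ring.jacobson R).add_mem hr hs, by rw [add_mul]⟩
  obtain ⟨r, hr, rfl⟩ := this
  obtain ⟨u, hu⟩ := isUnit_one_add_of_mem_jacobson ((Ring.jacobson R).neg_mem hr)
  have : f m = ↑u⁻¹ * d := by
    rw [Units.eq_inv_mul_iff_mul_eq, hu, add_mul, one_mul, neg_mul]
    nth_rw 1 [← hyd]; abel
  rw [this]
  exact D.mul_mem_left _ hd

end General

section Laurent

variable {A : Type*} [Ring A]

theorem exists_bound (f : LaurentSeries A) : ∃ N : ℕ, ∀ i : ℤ, i < -(N : ℤ) → f.coeff i = 0 := by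
  refine ⟨(-f.order).toNat, fun i hi => HahnSeries.coeff_eq_zero_of_lt_order ?_⟩
  have := Int.self_le_toNat (-f.order)
  omega

theorem coeff_mul_mem (I : AddSubgroup A) (f g : LaurentSeries A) (n : ℤ)
    (h : ∀ u v : ℤ, u + v = n → f.coeff u ≠ 0 → g.coeff v ≠ 0 → f.coeff u * g.coeff v ∈ I) :
    (f * g).coeff n ∈ I := by
  rw [HahnSeries.coeff_mul]
  refine I.sum_mem fun p hp => ?_
  rw [Finset.mem_antidiagonal] at hp
  exact h _ _ hp.2.2 hp.1 hp.2.1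

theorem isUnit_of_coeff (f : LaurentSeries A) (h0 : ∀ i < 0, f.coeff i = 0)
    (h1 : f.coeff 0 = 1) : IsUnit f := by
  have hf : f = HahnSeries.ofPowerSeries ℤ A (PowerSeries.mk fun n => f.coeff n) := by
    ext i
    rcases lt_or_ge i 0 with hi | hi
    · rw [h0 i hi]
      symm
      rw [HahnSeries.ofPowerSeries_apply]
      apply HahnSeries.embDomain_of_notMem_range
      rintro ⟨n, hn⟩
      simp at hn
      omega
    · lift i to ℕ using hi
      rw [show ((i : ℕ) : ℤ) = (Nat.cast i : ℤ) from rfl, HahnSeries.ofPowerSeries_apply_coeff,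
        PowerSeries.coeff_mk]
  rw [hf]
  apply IsUnit.map
  have hc : PowerSeries.constantCoeff (PowerSeries.mk fun n => f.coeff (n : ℤ)) =
      ((1 : Aˣ) : A) := by
    rw [← PowerSeries.coeff_zero_eq_constantCoeff_apply, PowerSeries.coeff_mk]
    simpa using h1
  exact ⟨⟨_, _, PowerSeries.mul_invOfUnit _ 1 hc, PowerSeries.invOfUnit_mul _ 1 hc⟩, rfl⟩

/-- The series with all coefficients in `P`. -/
def lau (P : Ideal A) : Ideal (LaurentSeries A) where
  carrier := {f | ∀ i, f.coeff i ∈ P}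
  add_mem' := fun hf hg i => by
    rw [HahnSeries.coeff_add]; exact P.add_mem (hf i) (hg i)
  zero_mem' := fun i => by simp
  smul_mem' := fun r f hf i =>
    coeff_mul_mem P.toAddSubgroup r f i fun u v _ _ _ => P.mul_mem_left _ (hf v)

theorem mem_lau {P : Ideal A} {f : LaurentSeries A} : f ∈ lau P ↔ ∀ i, f.coeff i ∈ P := Iff.rfl

theorem lau_mul_le (P Q : Ideal A) : lau P * lau Q ≤ lau (P * Q) := by
  rw [Ideal.mul_le]
  intro f hf g hg i
  exact coeff_mul_mem (P * Q).toAddSubgroup f g i fun u v _ _ _ =>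
    Ideal.mul_mem_mul (hf u) (hg v)

theorem lau_pow_le (P : Ideal A) (n : ℕ) : lau P ^ n ≤ lau (P ^ n) := by
  induction n with
  | zero =>
    intro f _ i
    rw [Submodule.pow_zero, Ideal.one_eq_top]; trivial
  | succ n ih =>
    rw [Submodule.pow_succ, Submodule.pow_succ]
    exact (Ideal.mul_mono ih le_rfl).trans (lau_mul_le _ _)

theorem lau_bot : lau (⊥ : Ideal A) = ⊥ := by
  rw [eq_bot_iff]
  intro f hf
  rw [Submodule.mem_bot]
  ext i
  simpa using hf i

theorem lau_strictMono : StrictMono (lau : Ideal A → Ideal (LaurentSeries A)) := by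
  intro P Q h
  refine lt_of_le_of_ne (fun f hf i => h.le (hf i)) fun heq => ?_
  refine h.not_ge fun q hq => ?_
  have : HahnSeries.C q ∈ lau P := by
    rw [heq]
    intro i
    rw [HahnSeries.C_apply, HahnSeries.coeff_single]
    split_ifs
    · exact hq
    · exact Q.zero_mem
  simpa using this 0

theorem isArtinianRing_coeff (h : IsArtinianRing (LaurentSeries A)) : IsArtinianRing A := by
  have : WellFoundedLT (Ideal (LaurentSeries A)) := h
  exact lau_strictMono.wellFoundedLT

theorem isNoetherianRing_coeff
    (hQ : IsSemisimpleRing (LaurentSeries A ⧸ Ring.jacobson (LaurentSeries A)))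
    (h : IsQFDModule (LaurentSeries A) (LaurentSeries A)) : IsNoetherianRing A := by
  by_contra hnot
  have hwf : ¬ WellFoundedGT (Ideal A) := fun hw => hnot (isNoetherian_iff'.mpr hw)
  obtain ⟨I, hI⟩ : ∃ I : ℕ → Ideal A, StrictMono I := by
    rw [WellFoundedGT, isWellFounded_iff, RelEmbedding.wellFounded_iff_isEmpty] at hwf
    obtain ⟨e⟩ := not_isEmpty_iff.mp hwf
    exact ⟨e, fun a b hab => e.map_rel_iff.mpr hab⟩
  have ha : ∀ n, ∃ a, a ∈ I (n + 1) ∧ a ∉ I n := fun n =>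
    SetLike.exists_of_lt (hI (Nat.lt_succ_self n))
  choose a ha1 ha2 using ha
  classical
  let F : ℕ → ℤ → A := fun j m =>
    if m < 0 then 0 else if ((m.toNat.sqrt : ℤ) ^ 2 = m ∧ (Nat.unpair m.toNat.sqrt).1 = j)
      then a m.toNat.sqrt else 0
  let f : ℕ → LaurentSeries A := fun j => HahnSeries.ofSuppBddBelow (F j)
    
    ⟨0, fun m hm => by
      by_contra hlt
      exact hm (if_pos (not_le.mp hlt))⟩
  have hfc : ∀ j m, (f j).coeff m = F j m := fun j m => by
    exact congrFun (HahnSeries.coeff_ofSuppBddBelow (f := F j)) m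
  have hfs : ∀ j n : ℕ, (Nat.unpair n).1 = j → (f j).coeff ((n : ℤ) ^ 2) = a n := by
    intro j n hn
    have h1 : ((n : ℤ) ^ 2).toNat.sqrt = n := by
      rw [show ((n : ℤ) ^ 2).toNat = n ^ 2 by norm_cast, Nat.sqrt_eq']
    rw [hfc]
    simp only [F]
    rw [h1, if_neg (not_lt.mpr (by positivity)), if_pos ⟨rfl, hn⟩]
  have hfn : ∀ (j : ℕ) (m : ℤ), (f j).coeff m ≠ 0 →
      ∃ n : ℕ, m = (n : ℤ) ^ 2 ∧ (Nat.unpair n).1 = j := by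
    intro j m hm
    rw [hfc] at hm
    simp only [F] at hm
    split_ifs at hm with h1 h2
    · exact absurd rfl hm
    · exact ⟨_, h2.1.symm, h2.2⟩
    · exact absurd rfl hm
  obtain ⟨j, hj⟩ := exists_mem_span_ne hQ h f
  have key : ∀ g ∈ Ideal.span (f '' {k | k ≠ j}), ∀ r : LaurentSeries A, ∃ N : ℕ, ∀ n : ℕ,
      N ≤ n → (Nat.unpair n).1 = j → (r * g).coeff ((n : ℤ) ^ 2) ∈ I n := by
    intro g hg
    refine Submodule.span_induction ?_ ?_ ?_ ?_ hg
    · rintro _ ⟨k, hk, rfl⟩ r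
      obtain ⟨N, hN⟩ := exists_bound r
      refine ⟨N, fun n hn hnj => ?_⟩
      refine coeff_mul_mem (I n).toAddSubgroup r (f k) _ fun u v huv hu hv => ?_
      apply (I n).mul_mem_left
      obtain ⟨l, rfl, hl⟩ := hfn k v hv
      rw [hfs k l hl]
      have hu' : -(N : ℤ) ≤ u := by
        by_contra hlt
        exact hu (hN u (not_le.mp hlt))
      have hln : l ≤ n := by
        by_contra hlt
        have h1 : (n : ℤ) + 1 ≤ l := by omega
        have h2 : (N : ℤ) ≤ n := by omega
        nlinarith
      have hne : l ≠ n := by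
        rintro rfl
        exact hk (hl.symm.trans hnj)
      exact hI.monotone (by omega : l + 1 ≤ n) (ha1 l)
    · intro r
      exact ⟨0, fun n _ _ => by simp⟩
    · intro x y _ _ hx hy r
      obtain ⟨N1, h1⟩ := hx r
      obtain ⟨N2, h2⟩ := hy r
      refine ⟨max N1 N2, fun n hn hnj => ?_⟩
      rw [mul_add, HahnSeries.coeff_add]
      exact (I n).add_mem (h1 n (le_trans (le_max_left _ _) hn) hnj)
        (h2 n (le_trans (le_max_right _ _) hn) hnj)
    · intro s x _ hx r
      obtain ⟨N, h1⟩ := hx (r * s)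
      refine ⟨N, fun n hn hnj => ?_⟩
      rw [smul_eq_mul, ← mul_assoc]
      exact h1 n hn hnj
  obtain ⟨N, hN⟩ := key _ hj 1
  have hn := hN (Nat.pair j N) (Nat.right_le_pair j N) (by simp)
  rw [one_mul, hfs j _ (by simp)] at hn
  exact ha2 _ hn

/-- The monomial `x ^ n`. -/
noncomputable def xp (n : ℤ) : LaurentSeries A := HahnSeries.single n 1

theorem xp_comm (n : ℤ) (f : LaurentSeries A) : xp n * f = f * xp n := by
  ext i
  simp only [xp]
  rw [HahnSeries.coeff_single_mul, HahnSeries.coeff_mul_single, one_mul, mul_one]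

theorem xp_add (m n : ℤ) : (xp (m + n) : LaurentSeries A) = xp m * xp n := by
  simp [xp]

theorem coeff_mul_xp (n i : ℤ) (f : LaurentSeries A) : (f * xp n).coeff i = f.coeff (i - n) := by
  simp only [xp]
  rw [HahnSeries.coeff_mul_single, mul_one]

theorem isUnit_one_sub_xp (n : ℤ) (hn : 0 < n) : IsUnit (1 - xp n : LaurentSeries A) := by
  apply isUnit_of_coeff
  · intro i hi
    rw [HahnSeries.coeff_sub, HahnSeries.coeff_one, xp, HahnSeries.coeff_single,
      if_neg (by omega), if_neg (by omega), sub_zero]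
  · rw [HahnSeries.coeff_sub, HahnSeries.coeff_one, xp, HahnSeries.coeff_single,
      if_pos rfl, if_neg (by omega), sub_zero]

theorem exists_isUnit
    (hQ : IsSemisimpleRing (LaurentSeries A ⧸ Ring.jacobson (LaurentSeries A))) (a : A) :
    ∃ n : ℕ, 0 < n ∧ IsUnit (1 - HahnSeries.C a * xp (-(n : ℤ)) : LaurentSeries A) := by
  set c : LaurentSeries A := HahnSeries.C a with hc
  let y : ℕ → LaurentSeries A := fun n => 1 - c * xp (-(n : ℤ))
  have hyc : ∀ i j, Commute (y i) (y j) := by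
    intro i j
    have : Commute (c * xp (-(i : ℤ))) (c * xp (-(j : ℤ))) := by
      have h1 : ∀ n, Commute c (xp n) := fun n => (xp_comm n c).symm
      have h2 : ∀ m n, Commute (xp m : LaurentSeries A) (xp n) := fun m n => xp_comm m _
      exact ((Commute.refl c).mul_left (h1 _).symm).mul_right ((h1 _).mul_left (h2 _ _))
    exact ((Commute.one_left _).sub_left ((Commute.one_right _).sub_right this))
  let z : ℕ → LaurentSeries A := fun m => Nat.rec 1 (fun k w => w * y (k + 1)) m
  have hz : ∀ m, z (m + 1) = z m * y (m + 1) := fun m => rfl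
  have hzc : ∀ m i, Commute (z m) (y i) := by
    intro m i
    induction m with
    | zero => exact Commute.one_left _
    | succ m ih => rw [hz]; exact ih.mul_left (hyc _ _)
  let Q := LaurentSeries A ⧸ Ring.jacobson (LaurentSeries A)
  let p : LaurentSeries A →+* Q := Ideal.Quotient.mk _
  let T : ℕ →o Ideal Q := ⟨fun m => LinearMap.ker (LinearMap.toSpanSingleton Q Q (p (z m))), by
    refine monotone_nat_of_le_succ fun m q hq => ?_
    rw [LinearMap.mem_ker, LinearMap.toSpanSingleton_apply, smul_eq_mul] at hq ⊢
    rw [hz, map_mul, ← mul_assoc, hq, zero_mul]⟩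
  have hT : ∀ m q, q ∈ T m ↔ q * p (z m) = 0 := fun m q => Iff.rfl
  obtain ⟨m, hm⟩ := monotone_stabilizes_iff_noetherian.mpr (inferInstance : IsNoetherian Q Q) T
  refine ⟨m + 1, Nat.succ_pos m, isUnit_of_isUnit_quot ?_⟩
  change IsUnit (p (y (m + 1)))
  have hinj : ∀ q : Q, q * p (y (m + 1)) = 0 → q = 0 := by
    intro q hq
    have h1 : q ∈ T (m + 1) := by
      rw [hT, hz, (hzc m (m + 1)).eq, map_mul, ← mul_assoc, hq, zero_mul]
    rw [← hm (m + 1) (Nat.le_succ m), hT] at h1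
    have hqc : q * p (c * xp (-((m + 1 : ℕ) : ℤ))) = q := by
      have : q - q * p (c * xp (-((m + 1 : ℕ) : ℤ))) = 0 := by
        rw [← hq]; simp only [y, map_sub, map_one, mul_sub, mul_one]
      exact (sub_eq_zero.mp this).symm
    have hqy : ∀ i : ℕ, q * p (y i) = q * p (1 - xp ((m + 1 : ℕ) - i : ℤ)) := by
      intro i
      simp only [y, map_sub, map_one, mul_sub, mul_one]
      congr 1
      conv_rhs => rw [← hqc]
      rw [mul_assoc, ← map_mul, mul_assoc, ← xp_add]
      congr 4
      ring
    have hu : ∀ k ≤ m, ∃ v : LaurentSeries A, IsUnit v ∧ q * p (z k) = q * p v := by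
      intro k
      induction k with
      | zero => exact fun _ => ⟨1, isUnit_one, rfl⟩
      | succ k ih =>
        intro hk
        obtain ⟨v, hv, hqv⟩ := ih (by omega)
        have hun := isUnit_one_sub_xp (A := A) ((m + 1 : ℕ) - (k + 1 : ℕ) : ℤ) (by omega)
        refine ⟨v * (1 - xp ((m + 1 : ℕ) - (k + 1 : ℕ) : ℤ)), hv.mul hun, ?_⟩
        have hcen : (1 - xp ((m + 1 : ℕ) - (k + 1 : ℕ) : ℤ)) * z k =
            z k * (1 - xp ((m + 1 : ℕ) - (k + 1 : ℕ) : ℤ)) := by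
          rw [sub_mul, mul_sub, xp_comm, one_mul, mul_one]
        rw [hz, (hzc k (k + 1)).eq, map_mul, ← mul_assoc, hqy, mul_assoc, ← map_mul, hcen,
          map_mul, ← mul_assoc, hqv, map_mul, mul_assoc]
    obtain ⟨v, hv, hqv⟩ := hu m le_rfl
    rw [hqv] at h1
    exact (hv.map p).mul_left_eq_zero.mp h1
  have hart : IsArtinian Q Q := inferInstance
  rw [IsArtinianRing.isUnit_iff_isRightRegular]
  intro s t hst
  exact sub_eq_zero.mp (hinj _ (by rw [sub_mul]; exact sub_eq_zero.mpr hst))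

theorem pi_regular
    (hQ : IsSemisimpleRing (LaurentSeries A ⧸ Ring.jacobson (LaurentSeries A))) (a : A) :
    ∃ (k : ℕ) (b : A), Commute a b ∧ a ^ k = b * a ^ (k + 1) := by
  obtain ⟨n, hn, u, hu⟩ := exists_isUnit hQ a
  set g : LaurentSeries A := ↑u⁻¹ with hg
  have hgm : g * (1 - HahnSeries.C a * xp (-(n : ℤ))) = 1 := by rw [← hu]; simp [hg]
  have hmg : (1 - HahnSeries.C a * xp (-(n : ℤ))) * g = 1 := by rw [← hu]; simp [hg]
  have hcg : Commute (HahnSeries.C a) g := by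
    have : Commute (HahnSeries.C a) (u : LaurentSeries A) := by
      rw [hu]
      refine (Commute.one_right _).sub_right ((Commute.refl _).mul_right ?_)
      exact (xp_comm _ _).symm
    exact this.units_inv_right
  have hca : ∀ i, Commute a (g.coeff i) := by
    intro i
    have := congrArg (fun f => HahnSeries.coeff f i) hcg.eq
    change a * g.coeff i = g.coeff i * a
    simpa [HahnSeries.C_apply, HahnSeries.coeff_single_zero_mul,
      HahnSeries.coeff_mul_single_zero] using this
  have hrec : ∀ i : ℤ, g.coeff i = (if i = 0 then 1 else 0) + a * g.coeff (i + n) := by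
    intro i
    have h1 : g = 1 + HahnSeries.C a * (g * xp (-(n : ℤ))) := by
      rw [← xp_comm, ← mul_assoc]
      nth_rw 1 [← hmg]
      noncomm_ring
    have := congrArg (fun f => HahnSeries.coeff f i) h1
    simp only [HahnSeries.coeff_add, HahnSeries.coeff_one, HahnSeries.C_apply,
      HahnSeries.coeff_single_zero_mul, coeff_mul_xp, sub_neg_eq_add] at this
    convert this
  have hneg : ∀ k : ℕ, g.coeff (-((k * n : ℕ) : ℤ)) = a ^ k * g.coeff 0 := by
    intro k
    induction k with
    | zero => simp
    | succ k ih =>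
      rw [hrec, if_neg, zero_add, pow_succ', mul_assoc, ← ih]
      · congr 2
        push_cast; ring
      · have : 0 < (k + 1) * n := Nat.mul_pos (Nat.succ_pos k) hn
        omega
  obtain ⟨N, hN⟩ := exists_bound g
  have h0 : a ^ (N + 1) * g.coeff 0 = 0 := by
    rw [← hneg]
    apply hN
    have : N + 1 ≤ (N + 1) * n := Nat.le_mul_of_pos_right _ hn
    omega
  rw [hrec 0, if_pos rfl, zero_add, mul_add, mul_one] at h0
  refine ⟨N + 1, -g.coeff n, (hca n).neg_right, ?_⟩
  rw [neg_mul, ← ((hca n).pow_left (N + 1 + 1)).eq, pow_succ a (N + 1), mul_assoc]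
  exact eq_neg_of_add_eq_zero_left h0

theorem pi_regular_idem
    (hQ : IsSemisimpleRing (LaurentSeries A ⧸ Ring.jacobson (LaurentSeries A))) (a : A) :
    ∃ (k : ℕ) (d : A), Commute a d ∧ a ^ (k + 1) = d * a ^ (k + 1) * a ^ (k + 1) := by
  obtain ⟨k, b, hab, hk⟩ := pi_regular hQ a
  have h1 : ∀ j : ℕ, a ^ (k + 1) = b ^ j * a ^ (k + 1 + j) := by
    intro j
    induction j with
    | zero => simp
    | succ j ih =>
      have h2 : a ^ (k + 1 + j) = b * a ^ (k + 1 + (j + 1)) := by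
        rw [show k + 1 + j = k + (1 + j) by ring, pow_add, hk, mul_assoc, ← pow_add]
        congr 2; ring
      rw [ih, h2, pow_succ, mul_assoc]
  refine ⟨k, b ^ (k + 1), hab.pow_right _, ?_⟩
  rw [mul_assoc, ← pow_add]
  exact h1 (k + 1)

/-- The ideal of lowest coefficients of the radical. -/
def low (A : Type*) [Ring A] : Ideal A where
  carrier := {a | ∃ f ∈ Ring.jacobson (LaurentSeries A), f.coeff 0 = a ∧ ∀ i < 0, f.coeff i = 0}
  add_mem' := by
    rintro a b ⟨f, hf, hf0, hf1⟩ ⟨g, hg, hg0, hg1⟩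
    refine ⟨f + g, add_mem hf hg, by simp [hf0, hg0], fun i hi => by simp [hf1 i hi, hg1 i hi]⟩
  zero_mem' := ⟨0, zero_mem _, by simp, by simp⟩
  smul_mem' := by
    rintro b a ⟨f, hf, hf0, hf1⟩
    refine ⟨HahnSeries.C b * f, Ideal.mul_mem_left _ _ hf, ?_, fun i hi => ?_⟩
    · rw [HahnSeries.C_apply, HahnSeries.coeff_single_zero_mul, hf0, smul_eq_mul]
    · rw [HahnSeries.C_apply, HahnSeries.coeff_single_zero_mul, hf1 i hi, mul_zero]

theorem mem_low {a : A} : a ∈ low A ↔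
    ∃ f ∈ Ring.jacobson (LaurentSeries A), f.coeff 0 = a ∧ ∀ i < 0, f.coeff i = 0 := Iff.rfl

instance low_twoSided : (low A).IsTwoSided where
  mul_mem_of_left := by
    rintro a b ⟨f, hf, hf0, hf1⟩
    refine ⟨f * HahnSeries.C b, Ideal.mul_mem_right _ _ hf, ?_, fun i hi => ?_⟩
    · rw [HahnSeries.C_apply, HahnSeries.coeff_mul_single_zero, hf0]
    · rw [HahnSeries.C_apply, HahnSeries.coeff_mul_single_zero, hf1 i hi, zero_mul]

theorem low_nil
    (hQ : IsSemisimpleRing (LaurentSeries A ⧸ Ring.jacobson (LaurentSeries A))) (a : A)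
    (ha : a ∈ low A) : IsNilpotent a := by
  obtain ⟨k, d, hd, hk⟩ := pi_regular_idem hQ a
  have he : d * a ^ (k + 1) ∈ low A := by
    rw [pow_succ, ← mul_assoc]
    exact (low A).mul_mem_left _ ha
  obtain ⟨F, hF, hF0, hF1⟩ := mem_low.mp he
  set e := d * a ^ (k + 1) with hedef
  have hu : IsUnit (1 - HahnSeries.C e + F) := by
    apply isUnit_of_coeff
    · intro i hi
      rw [HahnSeries.coeff_add, HahnSeries.coeff_sub, HahnSeries.coeff_one, HahnSeries.C_apply,
        HahnSeries.coeff_single, if_neg hi.ne, if_neg hi.ne, hF1 i hi]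
      simp
    · rw [HahnSeries.coeff_add, HahnSeries.coeff_sub, HahnSeries.coeff_one, HahnSeries.C_apply,
        HahnSeries.coeff_single, if_pos rfl, if_pos rfl, hF0]
      simp
  have hu2 : IsUnit (1 - HahnSeries.C e : LaurentSeries A) := by
    apply isUnit_of_isUnit_quot
    have h1 := hu.map (Ideal.Quotient.mk (Ring.jacobson (LaurentSeries A)))
    rwa [map_add, Ideal.Quotient.eq_zero_iff_mem.mpr hF, add_zero] at h1
  have h0 : (1 - HahnSeries.C e : LaurentSeries A) * HahnSeries.C (a ^ (k + 1)) = 0 := by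
    rw [sub_mul, one_mul, ← map_mul, ← hk, sub_self]
  have h1 := hu2.mul_right_eq_zero.mp h0
  refine ⟨k + 1, ?_⟩
  exact HahnSeries.C_injective (h1.trans (map_zero _).symm)

theorem levitzki [IsNoetherianRing A] (L : Ideal A) [L.IsTwoSided]
    (hL : ∀ a ∈ L, IsNilpotent a) : ∃ P : Ideal A, P.IsTwoSided ∧ L ≤ P ∧ ∃ m : ℕ, P ^ m = ⊥ := by
  obtain ⟨P, ⟨hPt, m, hm⟩, hPmax⟩ : ∃ P : Ideal A, (P.IsTwoSided ∧ ∃ m : ℕ, P ^ m = ⊥) ∧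
      ∀ I : Ideal A, (I.IsTwoSided ∧ ∃ m : ℕ, I ^ m = ⊥) → ¬ P < I := set_has_maximal_iff_noetherian.mpr
    (inferInstance : IsNoetherian A A) {P : Ideal A | P.IsTwoSided ∧ ∃ m : ℕ, P ^ m = ⊥}
    ⟨⊥, inferInstance, 1, by simp⟩
  refine ⟨P, hPt, ?_, m, hm⟩
  by_contra hLP
  obtain ⟨a0, ha0, ha0P⟩ := SetLike.not_le_iff_exists.mp hLP
  let ann : A → Ideal A := fun a => Submodule.comap (LinearMap.toSpanSingleton A A a) P
  have hann : ∀ a c, c ∈ ann a ↔ c * a ∈ P := fun a c => Iff.rfl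
  obtain ⟨_, ⟨a, haL, haP, rfl⟩, hamax⟩ := set_has_maximal_iff_noetherian.mpr
    (inferInstance : IsNoetherian A A) {K : Ideal A | ∃ a, a ∈ L ∧ a ∉ P ∧ K = ann a}
    ⟨_, a0, ha0, ha0P, rfl⟩
  have haa : ∀ x, a * x * a ∈ P := by
    intro x
    have hyL : a * x ∈ L := L.mul_mem_right x haL
    obtain ⟨n, hn⟩ := hL _ hyL
    have hex : ∃ n : ℕ, (a * x) ^ (n + 1) ∈ P := ⟨n, by rw [pow_succ, hn, zero_mul]; exact P.zero_mem⟩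
    classical
    have hs := Nat.find_spec hex
    have hmin := fun j => Nat.find_min hex (m := j)
    generalize Nat.find hex = k at hs hmin
    cases k with
    | zero =>
      rw [zero_add, pow_one] at hs
      exact P.mul_mem_right a hs
    | succ k =>
      have h1 := hmin k (Nat.lt_succ_self k)
      have hle : ann a ≤ ann ((a * x) ^ (k + 1)) := by
        intro c hc
        rw [hann] at hc ⊢
        rw [pow_succ', ← mul_assoc, ← mul_assoc]
        exact P.mul_mem_right _ (P.mul_mem_right _ hc)
      have hnlt := hamax _ ⟨(a * x) ^ (k + 1), by
        rw [pow_succ]; exact L.mul_mem_left _ hyL, h1, rfl⟩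
      have heq : ann a = ann ((a * x) ^ (k + 1)) := by
        by_contra hne
        exact hnlt (lt_of_le_of_ne hle hne)
      rw [← hann, heq, hann, ← pow_succ']
      exact hs
  let P' : Ideal A := P ⊔ Ideal.span {a} * ⊤
  have hP' : P'.IsTwoSided := by
    refine ⟨fun {r} c hr => ?_⟩
    obtain ⟨y, hy, z, hz, rfl⟩ := Submodule.mem_sup.mp hr
    rw [add_mul]
    exact P'.add_mem (Submodule.mem_sup_left (P.mul_mem_right c hy))
      (Submodule.mem_sup_right (Ideal.mul_mem_right c _ hz))
  let K : Ideal A :=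
    { carrier := {s | ∀ x, a * x * s ∈ P}
      add_mem' := fun hs ht x => by rw [mul_add]; exact P.add_mem (hs x) (ht x)
      zero_mem' := fun x => by simp
      smul_mem' := fun c s hs x => by
        rw [smul_eq_mul, ← mul_assoc, mul_assoc a]; exact hs (x * c) }
  have hK : P' ≤ K := by
    refine sup_le (fun s hs x => P.mul_mem_left _ hs) (Ideal.mul_le.mpr fun r hr t _ x => ?_)
    obtain ⟨c, rfl⟩ := Ideal.mem_span_singleton'.mp hr
    have := P.mul_mem_right t (haa (x * c))
    simpa only [mul_assoc] using this
  let K' : Ideal A :=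
    { carrier := {r | ∀ s ∈ P', r * s ∈ P}
      add_mem' := fun hs ht x hx => by rw [add_mul]; exact P.add_mem (hs x hx) (ht x hx)
      zero_mem' := fun x _ => by simp
      smul_mem' := fun c s hs x hx => by
        rw [smul_eq_mul, mul_assoc]; exact P.mul_mem_left _ (hs x hx) }
  have hK' : P' ≤ K' := by
    refine sup_le (fun r hr s _ => P.mul_mem_right _ hr) (Ideal.mul_le.mpr fun r hr t _ s hs => ?_)
    obtain ⟨c, rfl⟩ := Ideal.mem_span_singleton'.mp hr
    have := P.mul_mem_left c (hK hs t)
    simpa only [mul_assoc] using this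
  have hsq : P' * P' ≤ P := Ideal.mul_le.mpr fun r hr s hs => hK' hr s hs
  have hpow : ∀ n : ℕ, P' ^ (2 * n) ≤ P ^ n := by
    intro n
    induction n with
    | zero => rw [mul_zero, Submodule.pow_zero, Submodule.pow_zero]
    | succ n ih =>
      rw [show 2 * (n + 1) = 2 * n + 1 + 1 by ring, Submodule.pow_succ, Submodule.pow_succ,
        Submodule.pow_succ, mul_assoc]
      exact Ideal.mul_mono ih hsq
  refine hPmax P' ⟨hP', 2 * m, ?_⟩ ?_
  · rw [eq_bot_iff, ← hm]; exact hpow m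
  · refine lt_of_le_of_ne le_sup_left fun heq => haP ?_
    rw [heq]
    refine Submodule.mem_sup_right ?_
    have := Ideal.mul_mem_mul (Ideal.mem_span_singleton_self a) (Submodule.mem_top (x := (1 : A)))
    rwa [mul_one] at this

theorem jacobson_nilp
    (hQ : IsSemisimpleRing (LaurentSeries A ⧸ Ring.jacobson (LaurentSeries A)))
    (h : IsQFDModule (LaurentSeries A) (LaurentSeries A)) :
    IsNilpotent (Ring.jacobson (LaurentSeries A)) := by
  have := isNoetherianRing_coeff hQ h
  obtain ⟨P, hPt, hLP, m, hm⟩ := levitzki (low A) (low_nil hQ)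
  have hlm : lau P ^ m = ⊥ := by
    rw [eq_bot_iff, ← lau_bot, ← hm]
    exact lau_pow_le P m
  have hpm : ∀ (f : LaurentSeries A), f ∈ lau P → ∀ n : ℕ, f ^ n ∈ lau P ^ n := by
    intro f hf n
    induction n with
    | zero => rw [Submodule.pow_zero, Ideal.one_eq_top]; trivial
    | succ n ih => rw [Submodule.pow_succ, pow_succ]; exact Ideal.mul_mem_mul ih hf
  have hlJ : lau P ≤ Ring.jacobson (LaurentSeries A) := by
    intro f hf
    apply mem_jacobson_of_forall
    intro y
    apply IsNilpotent.isUnit_one_add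
    refine ⟨m, ?_⟩
    have := hpm _ ((lau P).mul_mem_left y hf) m
    rwa [hlm, Submodule.mem_bot] at this
  have hJl : Ring.jacobson (LaurentSeries A) ≤ lau P := by
    intro f hf
    obtain ⟨N, hN⟩ := exists_bound f
    have key : ∀ n : ℕ, ∀ i : ℤ, i < n - N → f.coeff i ∈ P := by
      intro n
      induction n with
      | zero => intro i hi; rw [hN i (by simpa using hi)]; exact P.zero_mem
      | succ n ih =>
        intro i hi
        by_cases hin : i < n - N
        · exact ih i hin
        have ht : HahnSeries.truncLT i f ∈ lau P := by
          intro j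
          by_cases hj : j < i
          · rw [HahnSeries.coeff_truncLT_of_lt hj]
            exact ih j (by push_cast at hi; omega)
          · rw [HahnSeries.coeff_truncLT_of_le (not_lt.mp hj)]
            exact P.zero_mem
        apply hLP
        refine ⟨(f - HahnSeries.truncLT i f) * xp (-i),
          Ideal.mul_mem_right _ _ (sub_mem hf (hlJ ht)), ?_, ?_⟩
        · rw [coeff_mul_xp, HahnSeries.coeff_sub, HahnSeries.coeff_truncLT_of_le (by omega)]
          simp
        · intro j hj
          rw [coeff_mul_xp, HahnSeries.coeff_sub, HahnSeries.coeff_truncLT_of_lt (by omega), sub_self]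
    intro i
    exact key (i + N + 1).toNat i (by have := Int.self_le_toNat (i + N + 1); omega)
  refine ⟨m, ?_⟩
  rw [le_antisymm hJl hlJ]
  exact hlm

theorem main_left
    (hQ : IsSemisimpleRing (LaurentSeries A ⧸ Ring.jacobson (LaurentSeries A)))
    (h : IsQFDModule (LaurentSeries A) (LaurentSeries A)) :
    IsArtinianRing (LaurentSeries A) ∧ IsArtinianRing A := by
  have h1 := isArtinianRing_of_nilp hQ h (jacobson_nilp hQ h)
  exact ⟨h1, isArtinianRing_coeff h1⟩

/-- The opposite of a Laurent series ring. -/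
noncomputable def opEquiv (A : Type*) [Ring A] :
    (LaurentSeries A)ᵐᵒᵖ ≃+* LaurentSeries Aᵐᵒᵖ where
  toFun f := HahnSeries.map f.unop (MulOpposite.opAddEquiv : A ≃+ Aᵐᵒᵖ)
  invFun f := MulOpposite.op (HahnSeries.map f (MulOpposite.opAddEquiv : A ≃+ Aᵐᵒᵖ).symm)
  left_inv f := by
    apply MulOpposite.unop_injective
    ext i
    simp
  right_inv f := by
    ext i
    simp
  map_add' f g := by
    ext i
    simp
  map_mul' f g := by
    ext i
    rw [HahnSeries.coeff_mul, HahnSeries.map_coeff, MulOpposite.unop_mul, HahnSeries.coeff_mul,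
      map_sum]
    refine Finset.sum_bij (fun p _ => (p.2, p.1)) ?_ ?_ ?_ ?_
    · intro p hp
      rw [Finset.mem_antidiagonal] at hp ⊢
      refine ⟨?_, ?_, (add_comm _ _).trans hp.2.2⟩
      · have := hp.2.1
        simpa using this
      · have := hp.1
        simpa using this
    · rintro ⟨a, b⟩ _ ⟨c, d⟩ _ h
      simp only [Prod.mk.injEq] at h ⊢
      exact ⟨h.2, h.1⟩
    · intro p hp
      rw [Finset.mem_antidiagonal] at hp
      refine ⟨(p.2, p.1), ?_, rfl⟩
      rw [Finset.mem_antidiagonal]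
      refine ⟨?_, ?_, (add_comm _ _).trans hp.2.2⟩
      · have := hp.2.1
        simpa using this
      · have := hp.1
        simpa using this
    · intro p hp
      simp

end Laurent

theorem qfd_of_equiv {R S : Type*} [Ring R] [Ring S] (e : R ≃+* S) (h : IsQFDModule R R) :
    IsQFDModule S S := by
  intro N ι K hK hK0
  have i1 : RingHomInvPair (RingHomClass.toRingHom e.symm) (RingHomClass.toRingHom e) :=
    ⟨by ext; simp, by ext; simp⟩
  have i2 := i1.symm
  let f : S ≃ₛₗ[RingHomClass.toRingHom e.symm] R := e.symm.toSemilinearEquiv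
  let E := (Submodule.orderIsoMapComap
    (Submodule.Quotient.equiv N (N.map f.toLinearMap) f rfl))
  refine h _ ι (fun i => E (K i)) ?_ ?_
  · exact (iSupIndep_map_orderIso_iff E).mpr hK
  · intro i hi
    exact hK0 i ((map_eq_bot_iff E).mp hi)

theorem isSemisimpleRing_quot {R : Type*} [Ring R] (h : IsSemilocalRing R) :
    IsSemisimpleRing (R ⧸ Ring.jacobson R) := by
  rw [IsSemilocalRing, Ideal.jacobson_bot] at h
  let p : R →+* R ⧸ Ring.jacobson R := Ideal.Quotient.mk _
  have hp : RingHomSurjective p := ⟨Ideal.Quotient.mk_surjective⟩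
  let f : (R ⧸ Ring.jacobson R) →ₛₗ[p] (R ⧸ Ring.jacobson R) :=
    { toFun := id
      map_add' := fun _ _ => rfl
      map_smul' := fun r q => by
        obtain ⟨q, rfl⟩ := Ideal.Quotient.mk_surjective q
        rfl }
  exact (LinearMap.isSemisimpleModule_iff_of_bijective f Function.bijective_id).mp h

theorem isArtinian_op {R : Type*} [Ring R] (h : IsArtinianRing Rᵐᵒᵖ) : IsArtinian Rᵐᵒᵖ R := by
  let f : Rᵐᵒᵖ ≃ₗ[Rᵐᵒᵖ] R :=
    { (MulOpposite.opAddEquiv : R ≃+ Rᵐᵒᵖ).symm with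
      map_smul' := fun r x => rfl }
  have : IsArtinian Rᵐᵒᵖ Rᵐᵒᵖ := h
  exact isArtinian_of_linearEquiv f

theorem main_right (A : Type u) [Ring A]
    (hsl : IsSemilocalRing (LaurentSeries A))
    (h : ∀ (M : Type u) [AddCommGroup M] [Module (LaurentSeries A)ᵐᵒᵖ M],
      (∃ m : M, Submodule.span (LaurentSeries A)ᵐᵒᵖ {m} = ⊤) →
        IsQFDModule (LaurentSeries A)ᵐᵒᵖ M) :
    IsArtinian (LaurentSeries A)ᵐᵒᵖ (LaurentSeries A) ∧ IsArtinian Aᵐᵒᵖ A := by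
  have hss := isSemisimpleRing_quot hsl
  have hq : IsQFDModule (LaurentSeries A)ᵐᵒᵖ (LaurentSeries A)ᵐᵒᵖ :=
    h _ ⟨1, Ideal.span_singleton_one⟩
  have hq2 := qfd_of_equiv (opEquiv A) hq
  let p0 : (LaurentSeries A)ᵐᵒᵖ →+* (LaurentSeries A ⧸ Ring.jacobson (LaurentSeries A))ᵐᵒᵖ :=
    RingHom.op (Ideal.Quotient.mk _)
  have hQ : IsSemisimpleRing
      (LaurentSeries Aᵐᵒᵖ ⧸ Ring.jacobson (LaurentSeries Aᵐᵒᵖ)) := by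
    refine semisimple_quot_of_surj (p0.comp (opEquiv A).symm.toRingHom) ?_ ?_
    · refine Function.Surjective.comp (g := p0) ?_ (opEquiv A).symm.surjective
      intro q
      obtain ⟨r, hr⟩ := Ideal.Quotient.mk_surjective q.unop
      exact ⟨MulOpposite.op r, MulOpposite.unop_injective hr⟩
    · intro r hr
      have h1 : ((opEquiv A).symm r).unop ∈ Ring.jacobson (LaurentSeries A) :=
        Ideal.Quotient.eq_zero_iff_mem.mp (MulOpposite.op_injective hr)
      have h2 := (isUnit_one_add_of_mem_jacobson h1).op.map (opEquiv A)
      simpa using h2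
  obtain ⟨h1, h2⟩ := main_left hQ hq2
  exact ⟨isArtinian_op ((opEquiv A).symm.isArtinianRing), isArtinian_op h2⟩

end LaurentAux

/-- Let `R = A((x))` be the Laurent series ring over `A`. If `R` is a semilocal ring and
every cyclic right `R`-module is quotient finite-dimensional, then both `R` and `A` are
right Artinian rings. -/
theorem stmt11 (A : Type u) [Ring A]
    (hsl : IsSemilocalRing (LaurentSeries A))
    (h : ∀ (M : Type u) [AddCommGroup M] [Module (LaurentSeries A)ᵐᵒᵖ M],
      (∃ m : M, Submodule.span (LaurentSeries A)ᵐᵒᵖ {m} = ⊤) →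
        IsQFDModule (LaurentSeries A)ᵐᵒᵖ M) :
    IsArtinian (LaurentSeries A)ᵐᵒᵖ (LaurentSeries A) ∧ IsArtinian Aᵐᵒᵖ A := by
  exact LaurentAux.main_right A hsl h
end

section
/- Let A be a ring and let R = A((x)) be its Laurent series ring. If R is a right semidistributive semilocal ring, then both R and A are right Artinian rings. -/
/-- A module is *distributive* if its lattice of submodules is distributive, i.e.
`X ⊓ (Y ⊔ Z) = (X ⊓ Y) ⊔ (X ⊓ Z)` for all submodules `X, Y, Z`. -/
def IsDistribModule (R M : Type*) [Ring R] [AddCommGroup M] [Module R M] : Prop :=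
  ∀ X Y Z : Submodule R M, X ⊓ (Y ⊔ Z) = X ⊓ Y ⊔ X ⊓ Z

/-- A ring `A` is *right semidistributive* if, as a right module over itself
(i.e. as an `Aᵐᵒᵖ`-module), it is a direct sum of distributive submodules. -/
def IsRightSemidistributiveRing (A : Type*) [Ring A] : Prop :=
  ∃ (ι : Type) (N : ι → Submodule Aᵐᵒᵖ A),
    iSupIndep N ∧ iSup N = ⊤ ∧ ∀ i, IsDistribModule Aᵐᵒᵖ (N i)

theorem LS.isUnit_of_sub_one_mem {R : Type*} [Ring R] (r : R)
    (h : r - 1 ∈ Ideal.jacobson (⊥ : Ideal R)) : IsUnit r := by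
  obtain ⟨s, hs⟩ := Ideal.exists_mul_sub_mem_of_sub_one_mem_jacobson r h
  rw [Ideal.mem_bot, sub_eq_zero] at hs
  have h2 : s - 1 ∈ Ideal.jacobson (⊥ : Ideal R) := by
    have : s - 1 = -(s * (r - 1)) := by rw [mul_sub, hs]; simp
    rw [this]
    exact neg_mem (Ideal.mul_mem_left _ _ h)
  obtain ⟨t, ht⟩ := Ideal.exists_mul_sub_mem_of_sub_one_mem_jacobson s h2
  rw [Ideal.mem_bot, sub_eq_zero] at ht
  have htr : t = r := by
    calc t = t * (s * r) := by rw [hs, mul_one]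
      _ = r := by rw [← mul_assoc, ht, one_mul]
  subst htr
  exact ⟨⟨t, s, ht, hs⟩, rfl⟩

theorem LS.semilocal_data.{u} {R : Type u} [Ring R] (h : IsSemilocalRing R) :
    ∃ (Q : Type u) (_ : Ring Q) (_ : IsSemisimpleRing Q) (π : R →+* Q),
      Function.Surjective π ∧ ∀ r, IsUnit (π r) → IsUnit r := by
  refine ⟨R ⧸ Ideal.jacobson (⊥ : Ideal R), inferInstance, ?_, Ideal.Quotient.mk _,
    Ideal.Quotient.mk_surjective, ?_⟩
  · have h' : IsSemisimpleModule R (R ⧸ Ideal.jacobson (⊥ : Ideal R)) := h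
    let σ : R →+* (R ⧸ Ideal.jacobson (⊥ : Ideal R)) := Ideal.Quotient.mk _
    have : RingHomSurjective σ := ⟨Ideal.Quotient.mk_surjective⟩
    let l : (R ⧸ Ideal.jacobson (⊥ : Ideal R)) →ₛₗ[σ] (R ⧸ Ideal.jacobson (⊥ : Ideal R)) :=
      { toFun := id
        map_add' := fun _ _ => rfl
        map_smul' := by
          intro m x
          obtain ⟨y, rfl⟩ := Ideal.Quotient.mk_surjective x
          rfl }
    exact (LinearMap.isSemisimpleModule_iff_of_bijective l Function.bijective_id).1 h'
  · intro r hr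
    obtain ⟨⟨u, v, huv, hvu⟩, hu⟩ := hr
    obtain ⟨s, rfl⟩ := Ideal.Quotient.mk_surjective v
    simp only at hu
    subst hu
    have h1 : IsUnit (r * s) := LS.isUnit_of_sub_one_mem _ (by
      rw [← Ideal.Quotient.eq_zero_iff_mem, map_sub, map_mul, huv]; simp)
    have h2 : IsUnit (s * r) := LS.isUnit_of_sub_one_mem _ (by
      rw [← Ideal.Quotient.eq_zero_iff_mem, map_sub, map_mul, hvu]; simp)
    obtain ⟨a, ha⟩ := h1.exists_right_inv
    obtain ⟨b, hb⟩ := h2.exists_left_inv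
    exact isUnit_iff_exists_and_exists.2 ⟨⟨s * a, by rw [← mul_assoc, ha]⟩,
      ⟨b * s, by rw [mul_assoc, hb]⟩⟩

/-- If right multiplication by `g` is injective on a left Artinian ring, `g` is a unit. -/
theorem LS.isUnit_of_inj {Q : Type*} [Ring Q] [IsArtinianRing Q] (g : Q)
    (h : ∀ w, w * g = 0 → w = 0) : IsUnit g := by
  have hinj : Function.Injective (LinearMap.toSpanSingleton Q Q g) := by
    rw [injective_iff_map_eq_zero]
    intro a ha
    exact h a (by simpa using ha)
  obtain ⟨y, hy⟩ := IsArtinian.surjective_of_injective_endomorphism _ hinj 1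
  simp only [LinearMap.toSpanSingleton_apply, smul_eq_mul] at hy
  exact IsUnit.of_mul_eq_one_right _ hy

theorem LS.exists_isUnit_sub {Q : Type*} [Ring Q] [IsArtinianRing Q] [IsNoetherianRing Q]
    (a t : Q) (ht : ∀ y, Commute t y) (hu : ∀ i j : ℕ, i < j → IsUnit (t ^ j - t ^ i)) :
    ∃ n : ℕ, 1 ≤ n ∧ IsUnit (a - t ^ n) := by
  let g : ℕ → Q := fun m => Nat.rec 1 (fun k r => r * (a - t ^ (k + 1))) m
  have hg0 : g 0 = 1 := rfl
  have hgs : ∀ k, g (k + 1) = g k * (a - t ^ (k + 1)) := fun k => rfl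
  let U : ℕ →o Submodule Q Q :=
    ⟨fun m => LinearMap.ker (LinearMap.toSpanSingleton Q Q (g m)), by
      apply monotone_nat_of_le_succ
      intro n w hw
      simp only [LinearMap.mem_ker, LinearMap.toSpanSingleton_apply, smul_eq_mul] at hw ⊢
      rw [hgs, ← mul_assoc, hw, zero_mul]⟩
  have hU : ∀ m w, w ∈ U m ↔ w * g m = 0 := fun m w => by
    change w ∈ LinearMap.ker (LinearMap.toSpanSingleton Q Q (g m)) ↔ _
    simp [LinearMap.mem_ker]
  obtain ⟨m, hm⟩ := monotone_stabilizes_iff_noetherian.2 (inferInstance : IsNoetherian Q Q) U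
  refine ⟨m + 1, by omega, LS.isUnit_of_inj _ ?_⟩
  intro w hw
  have hwa : w * a = w * t ^ (m + 1) := by
    rw [mul_sub, sub_eq_zero] at hw; exact hw
  have key : ∀ k, k ≤ m → ∃ c : Q, IsUnit c ∧ (∀ y, Commute c y) ∧ w * g k = w * c := by
    intro k
    induction k with
    | zero => intro _; exact ⟨1, isUnit_one, fun y => Commute.one_left y, by rw [hg0]⟩
    | succ k ih =>
      intro hk
      obtain ⟨c, hc, hcc, hw'⟩ := ih (by omega)
      refine ⟨(t ^ (m + 1) - t ^ (k + 1)) * c, (hu _ _ (by omega)).mul hc, ?_, ?_⟩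
      · intro y
        exact Commute.mul_left (((ht y).pow_left _).sub_left ((ht y).pow_left _)) (hcc y)
      · rw [hgs, ← mul_assoc, hw', (hcc w).symm.eq, mul_assoc, mul_sub, hwa,
          ← mul_sub, ← mul_assoc, ← mul_assoc, (hcc w).eq, mul_assoc, mul_assoc,
          (hcc (t ^ (m+1) - t ^ (k+1))).eq]
  obtain ⟨c, hc, hcc, hwc⟩ := key m le_rfl
  have hcomm : ∀ k, Commute (g k) (a - t ^ (m + 1)) := by
    intro k
    induction k with
    | zero => rw [hg0]; exact Commute.one_left _
    | succ k ih =>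
      rw [hgs]
      refine Commute.mul_left ih ?_
      apply Commute.sub_left
      · exact (Commute.refl a).sub_right ((ht a).symm.pow_right _)
      · exact (ht _).pow_left _
  have hmem : w ∈ U (m + 1) := by
    rw [hU, hgs, (hcomm m).eq, ← mul_assoc, hw, zero_mul]
  have : w ∈ U m := by rw [hm (m + 1) (by omega)]; exact hmem
  rw [hU, hwc] at this
  exact (hc.mul_left_eq_zero).1 this

/-- A nil multiplicative semigroup acting on a nonzero left ideal of an Artinian ring kills
a nonzero vector. -/
theorem LS.exists_killed {Q : Type*} [Ring Q] [IsArtinianRing Q] (I : Submodule Q Q)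
    (hI : I ≠ ⊥) (P : Set Q) (hmul : ∀ a ∈ P, ∀ b ∈ P, a * b ∈ P)
    (hnil : ∀ a ∈ P, IsNilpotent a) (hIP : ∀ w ∈ I, ∀ a ∈ P, w * a ∈ I) :
    ∃ w ∈ I, w ≠ 0 ∧ ∀ a ∈ P, w * a = 0 := by
  by_contra hcon
  push Not at hcon
  have wf : WellFounded ((· < ·) : Submodule Q Q → Submodule Q Q → Prop) :=
    wellFounded_lt
  obtain ⟨U, ⟨hUI, hU0, hUP⟩, hUmin⟩ := wf.has_min
    {U : Submodule Q Q | U ≤ I ∧ U ≠ ⊥ ∧ ∀ w ∈ U, ∀ a ∈ P, w * a ∈ U} ⟨I, le_rfl, hI, hIP⟩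
  let im : Q → Submodule Q Q := fun a => U.map (LinearMap.toSpanSingleton Q Q a)
  have him : ∀ a y, y ∈ im a ↔ ∃ u ∈ U, u * a = y := by
    intro a y
    simp [im, Submodule.mem_map]
  obtain ⟨u, huU, hu0⟩ := Submodule.exists_mem_ne_zero_of_ne_bot hU0
  obtain ⟨a0, ha0, hua0⟩ := hcon u (hUI huU) hu0
  obtain ⟨_, ⟨a, haP, hane, rfl⟩, hamin⟩ := wf.has_min
    {V : Submodule Q Q | ∃ a ∈ P, im a ≠ ⊥ ∧ im a = V} ⟨im a0, a0, ha0, by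
      intro h
      apply hua0
      rw [← Submodule.mem_bot Q, ← h, him]
      exact ⟨u, huU, rfl⟩, rfl⟩
  have kill : ∀ c, a * c ∈ P → IsNilpotent c → (∀ v ∈ U, ∃ v' ∈ U, v * a * c = v' * a) →
      ∀ v ∈ U, v * a * c = 0 := by
    intro c hac hc hsub
    by_contra hne
    push Not at hne
    obtain ⟨v, hv, hvne⟩ := hne
    have h1 : im (a * c) ≠ ⊥ := by
      intro h
      apply hvne
      rw [← Submodule.mem_bot Q, ← h, him]
      exact ⟨v, hv, by rw [mul_assoc]⟩
    have h2 : im (a * c) ≤ im a := by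
      intro y hy
      obtain ⟨w, hw, rfl⟩ := (him _ _).1 hy
      obtain ⟨w', hw', h⟩ := hsub w hw
      exact (him _ _).2 ⟨w', hw', by rw [← h, mul_assoc]⟩
    have h3 : im (a * c) = im a := by
      by_contra h
      exact hamin _ ⟨a * c, hac, h1, rfl⟩ (lt_of_le_of_ne h2 h)
    have h4 : ∀ k : ℕ, ∀ w ∈ U, ∃ w' ∈ U, w * a = w' * a * c ^ k := by
      intro k
      induction k with
      | zero => intro w hw; exact ⟨w, hw, by simp⟩
      | succ k ih =>
        intro w hw
        obtain ⟨w', hw', h⟩ := ih w hw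
        have : w' * a ∈ im (a * c) := by rw [h3]; exact (him _ _).2 ⟨w', hw', rfl⟩
        obtain ⟨w'', hw'', h''⟩ := (him _ _).1 this
        exact ⟨w'', hw'', by rw [h, ← h'', pow_succ']; simp only [mul_assoc]⟩
    obtain ⟨k, hk⟩ := hc
    apply hane
    rw [eq_bot_iff]
    intro y hy
    obtain ⟨w, hw, rfl⟩ := (him _ _).1 hy
    obtain ⟨w', _, h⟩ := h4 k w hw
    rw [h, hk, mul_zero]
    exact zero_mem _
  have k1 : ∀ v ∈ U, v * a * a = 0 :=
    kill a (hmul a haP a haP) (hnil a haP) (fun v hv => ⟨v * a, hUP v hv a haP, rfl⟩)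
  have k2 : ∀ b ∈ P, ∀ v ∈ U, v * a * (b * a) = 0 := fun b hb =>
    kill (b * a) (hmul _ haP _ (hmul _ hb _ haP)) (hnil _ (hmul _ hb _ haP))
      (fun v hv => ⟨v * a * b, hUP _ (hUP v hv a haP) b hb, by simp only [mul_assoc]⟩)
  let U2 : Submodule Q Q :=
    { carrier := {v | v ∈ U ∧ v * a = 0 ∧ ∀ b ∈ P, v * (b * a) = 0}
      add_mem' := by
        rintro v w ⟨h1, h2, h3⟩ ⟨h1', h2', h3'⟩
        exact ⟨add_mem h1 h1', by rw [add_mul, h2, h2', add_zero],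
          fun b hb => by rw [add_mul, h3 b hb, h3' b hb, add_zero]⟩
      zero_mem' := ⟨zero_mem _, by simp, by simp⟩
      smul_mem' := by
        rintro c v ⟨h1, h2, h3⟩
        exact ⟨U.smul_mem c h1, by rw [smul_mul_assoc, h2, smul_zero],
          fun b hb => by rw [smul_mul_assoc, h3 b hb, smul_zero]⟩ }
  have hU2 : U2 = U := by
    by_contra hne
    refine hUmin U2 ⟨fun v hv => hUI hv.1, ?_, ?_⟩ (lt_of_le_of_ne (fun v hv => hv.1) hne)
    · intro h
      apply hane
      rw [eq_bot_iff, ← h]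
      intro y hy
      obtain ⟨w, hw, rfl⟩ := (him _ _).1 hy
      exact ⟨hUP w hw a haP, k1 w hw, fun b hb => k2 b hb w hw⟩
    · rintro w ⟨h1, h2, h3⟩ c hc
      exact ⟨hUP w h1 c hc, by rw [mul_assoc]; exact h3 c hc,
        fun b hb => by rw [mul_assoc, ← mul_assoc c]; exact h3 _ (hmul c hc b hb)⟩
  apply hane
  rw [eq_bot_iff]
  intro y hy
  obtain ⟨w, hw, rfl⟩ := (him _ _).1 hy
  rw [← hU2] at hw
  rw [hw.2.1]
  exact zero_mem _

namespace LS

/-- The monomial `x ^ n`. -/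
noncomputable def xp (A : Type*) [Ring A] (n : ℤ) : LaurentSeries A := HahnSeries.single n 1

section basics
variable {A : Type*} [Ring A]

theorem coeff_C_mul (a : A) (f : LaurentSeries A) (k : ℤ) :
    ((HahnSeries.C a : LaurentSeries A) * f).coeff k = a * f.coeff k := by
  rw [HahnSeries.C_apply, HahnSeries.coeff_single_zero_mul]

theorem coeff_mul_C (a : A) (f : LaurentSeries A) (k : ℤ) :
    (f * (HahnSeries.C a : LaurentSeries A)).coeff k = f.coeff k * a := by
  rw [HahnSeries.C_apply, HahnSeries.coeff_mul_single_zero]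

theorem coeff_C (a : A) (k : ℤ) :
    (HahnSeries.C a : LaurentSeries A).coeff k = if k = 0 then a else 0 := by
  rw [HahnSeries.C_apply, HahnSeries.coeff_single]
  split_ifs <;> rfl

theorem coeff_C_zero (a : A) : (HahnSeries.C a : LaurentSeries A).coeff 0 = a := by
  simp

theorem coeff_xp_mul (n : ℤ) (f : LaurentSeries A) (k : ℤ) :
    (xp A n * f).coeff k = f.coeff (k - n) := by
  rw [xp, HahnSeries.coeff_single_mul, one_mul]

theorem xp_comm (n : ℤ) (f : LaurentSeries A) : Commute (xp A n) f := by
  ext k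
  rw [coeff_xp_mul, xp, HahnSeries.coeff_mul_single, mul_one]

theorem xp_mul (m n : ℤ) : xp A m * xp A n = xp A (m + n) := by
  simp [xp]

theorem xp_zero : xp A 0 = 1 := rfl

theorem xp_pow (n : ℕ) : xp A 1 ^ n = xp A n := by
  induction n with
  | zero => simp [xp_zero]
  | succ n ih => rw [pow_succ, ih, xp_mul]; simp

theorem coeff_xp (n k : ℤ) : (xp A n).coeff k = if k = n then 1 else 0 := by
  rw [xp, HahnSeries.coeff_single]
  split_ifs <;> rfl

theorem isUnit_xp (n : ℤ) : IsUnit (xp A n) :=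
  ⟨⟨xp A n, xp A (-n), by rw [xp_mul]; simp [xp_zero], by rw [xp_mul]; simp [xp_zero]⟩, rfl⟩

theorem bdd (f : LaurentSeries A) : ∃ M : ℕ, ∀ k : ℤ, k < -M → f.coeff k = 0 := by
  refine ⟨f.order.natAbs, fun k hk => HahnSeries.coeff_eq_zero_of_lt_order ?_⟩
  omega

theorem isUnit_of_coeff (f : LaurentSeries A) (h : ∀ k < 0, f.coeff k = 0)
    (h0 : IsUnit (f.coeff 0)) : IsUnit f := by
  let g : PowerSeries A := PowerSeries.mk fun n => f.coeff n
  have hg : HahnSeries.ofPowerSeries ℤ A g = f := by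
    ext k
    change ((g : PowerSeries A) : LaurentSeries A).coeff k = _
    rw [PowerSeries.coeff_coe]
    split_ifs with hk
    · rw [h k hk]
    · simp only [g, PowerSeries.coeff_mk]
      congr 1
      omega
  obtain ⟨u, hu⟩ := h0
  have hc : PowerSeries.constantCoeff g = u := by
    rw [← PowerSeries.coeff_zero_eq_constantCoeff_apply, hu]
    simp [g]
  have : IsUnit g := ⟨⟨g, PowerSeries.invOfUnit g u, PowerSeries.mul_invOfUnit g u hc,
    PowerSeries.invOfUnit_mul g u hc⟩, rfl⟩
  rw [← hg]
  exact this.map _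

theorem isUnit_xp_sub (i j : ℕ) (h : i < j) : IsUnit (xp A 1 ^ j - xp A 1 ^ i) := by
  have h1 : xp A 1 ^ j - xp A 1 ^ i = xp A 1 ^ i * (xp A 1 ^ (j - i) - 1) := by
    rw [mul_sub, ← pow_add, mul_one]
    congr 2
    omega
  rw [h1]
  refine ((isUnit_xp 1).pow i).mul (isUnit_of_coeff _ ?_ ?_)
  · intro k hk
    rw [xp_pow, ← xp_zero, HahnSeries.coeff_sub, coeff_xp, coeff_xp, if_neg (by omega),
      if_neg (by omega), sub_zero]
  · rw [xp_pow, ← xp_zero, HahnSeries.coeff_sub, coeff_xp, coeff_xp, if_neg (by omega),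
      if_pos rfl, zero_sub]
    exact isUnit_one.neg

end basics

section main
variable {A Q : Type*} [Ring A] [Ring Q] [IsSemisimpleRing Q] (π : LaurentSeries A →+* Q)
  (hsurj : Function.Surjective π) (hloc : ∀ r, IsUnit (π r) → IsUnit r)

include hsurj hloc in
theorem pi_regular (a : A) : ∃ (k : ℕ) (c : A), 1 ≤ k ∧ Commute a c ∧ a ^ k = a ^ (k + 1) * c := by
  obtain ⟨n, hn, hu⟩ := exists_isUnit_sub (π (HahnSeries.C a)) (π (xp A 1))
    (fun y => by
      obtain ⟨f, rfl⟩ := hsurj y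
      exact (xp_comm 1 f).map π)
    (fun i j h => by
      rw [← map_pow, ← map_pow, ← map_sub]
      exact (isUnit_xp_sub i j h).map π)
  rw [← map_pow, ← map_sub, xp_pow] at hu
  obtain ⟨⟨f, b, hfb, hbf⟩, hf⟩ := hloc _ hu
  simp only at hf
  have hcf : Commute (HahnSeries.C a : LaurentSeries A) f := by
    rw [hf]
    exact (Commute.refl _).sub_right (xp_comm _ _).symm
  have hcb : Commute (HahnSeries.C a : LaurentSeries A) b := by
    change _ * b = b * _
    calc HahnSeries.C a * b = b * f * (HahnSeries.C a * b) := by rw [hbf, one_mul]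
      _ = b * (f * HahnSeries.C a) * b := by simp only [mul_assoc]
      _ = b * (HahnSeries.C a * f) * b := by rw [hcf.eq]
      _ = b * HahnSeries.C a * (f * b) := by simp only [mul_assoc]
      _ = b * HahnSeries.C a := by rw [hfb, mul_one]
  have hcc : Commute a (b.coeff 0) := by
    have := congrArg (fun g => HahnSeries.coeff g 0) hcb.eq
    simp only [coeff_C_mul, coeff_mul_C] at this
    exact this
  have hrec : ∀ i : ℤ, a * b.coeff i = b.coeff (i - n) + if i = 0 then 1 else 0 := by
    intro i
    have := congrArg (fun g => HahnSeries.coeff g i) hfb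
    simp only [hf, sub_mul, HahnSeries.coeff_sub, coeff_C_mul, coeff_xp_mul,
      HahnSeries.coeff_one] at this
    rw [sub_eq_iff_eq_add'] at this
    rw [this]
    split_ifs <;> rfl
  have key : ∀ m : ℕ, a ^ (m + 1) * b.coeff 0 = a ^ m + b.coeff (-((m + 1 : ℕ) * n : ℤ)) := by
    intro m
    induction m with
    | zero =>
      have := hrec 0
      simp only [zero_add, pow_one, pow_zero]
      rw [this, if_pos rfl, add_comm]
      simp
    | succ m ih =>
      rw [pow_succ', mul_assoc, ih, mul_add, hrec, if_neg, ← pow_succ', add_zero]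
      · congr 2
        push_cast; ring
      · have : (0 : ℤ) < (m + 1 : ℕ) * n := by positivity
        omega
  obtain ⟨M, hM⟩ := bdd b
  refine ⟨M + 1, b.coeff 0, by omega, hcc, ?_⟩
  rw [key, hM, add_zero]
  have : (M + 1 + 1 : ℤ) * 1 ≤ (M + 1 + 1 : ℤ) * n := by
    apply mul_le_mul_of_nonneg_left
    · exact_mod_cast hn
    · positivity
  push_cast
  omega

/-- Idempotents whose corner ring is local with nil radical. -/
def Good (p : A) : Prop :=
  p * p = p ∧ p ≠ 0 ∧ ∀ a, p * a = a → a * p = a →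
    IsNilpotent a ∨ ∃ c, p * c = c ∧ c * p = c ∧ a * c = p ∧ c * a = p

include hsurj hloc in
/-- In a corner, an element is nilpotent, invertible, or gives a nontrivial idempotent. -/
theorem corner_idem (p a : A) (hp : p * p = p) (h1 : p * a = a) (h2 : a * p = a) :
    ∃ g : A, p * g = g ∧ g * p = g ∧ g * g = g ∧ (g = 0 → IsNilpotent a) ∧
      (g = p → ∃ c, p * c = c ∧ c * p = c ∧ a * c = p ∧ c * a = p) := by
  obtain ⟨k, c, hk, hc, hak⟩ := pi_regular π hsurj hloc a
  have hc' : a * c = c * a := hc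
  have hd1 : a * (p * c * p) = a * c := by
    rw [← mul_assoc, ← mul_assoc, h2, hc', mul_assoc, h2]
  have hd2 : (p * c * p) * a = a * c := by
    rw [mul_assoc, h1, mul_assoc, ← hc', ← mul_assoc, h1]
  obtain ⟨d, hd⟩ : ∃ d, d = p * c * p := ⟨_, rfl⟩
  rw [← hd] at hd1 hd2
  have hpd : p * d = d := by rw [hd, ← mul_assoc, ← mul_assoc, hp]
  have hdp : d * p = d := by rw [hd, mul_assoc, hp]
  have hcomm : Commute a d := by
    change a * d = d * a
    rw [hd1, hd2]
  have hak' : a ^ k = a ^ k * (a * d) := by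
    rw [hd1, ← mul_assoc, ← pow_succ]; exact hak
  have hm : ∀ m : ℕ, a ^ k = a ^ k * (a * d) ^ m := by
    intro m
    induction m with
    | zero => simp
    | succ m ih => rw [pow_succ, ← mul_assoc, ← ih]; exact hak'
  have hak2 : a ^ k = a ^ k * (a ^ k * d ^ k) := by
    rw [← hcomm.mul_pow]; exact hm k
  obtain ⟨j, rfl⟩ : ∃ j, k = j + 1 := ⟨k - 1, by omega⟩
  have hpa : p * a ^ (j + 1) = a ^ (j + 1) := by rw [pow_succ', ← mul_assoc, h1]
  have hdp' : d ^ (j + 1) * p = d ^ (j + 1) := by rw [pow_succ, mul_assoc, hdp]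
  have hpd' : p * d ^ (j + 1) = d ^ (j + 1) := by rw [pow_succ', ← mul_assoc, hpd]
  refine ⟨a ^ (j + 1) * d ^ (j + 1), ?_, ?_, ?_, ?_, ?_⟩
  · rw [← mul_assoc, hpa]
  · rw [mul_assoc, hdp']
  · have : Commute (a ^ (j + 1)) (d ^ (j + 1)) := hcomm.pow_pow _ _
    calc a ^ (j + 1) * d ^ (j + 1) * (a ^ (j + 1) * d ^ (j + 1))
        = a ^ (j + 1) * (d ^ (j + 1) * a ^ (j + 1)) * d ^ (j + 1) := by simp only [mul_assoc]
      _ = (a ^ (j + 1) * (a ^ (j + 1) * d ^ (j + 1))) * d ^ (j + 1) := by rw [← this.eq]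
      _ = _ := by rw [← hak2]
  · intro h
    exact ⟨j + 1, by rw [hak2, h, mul_zero]⟩
  · intro h
    have hcm : Commute a (a ^ j * d ^ (j + 1)) :=
      ((Commute.refl a).pow_right _).mul_right (hcomm.pow_right _)
    have e1 : a * (a ^ j * d ^ (j + 1)) = p := by rw [← mul_assoc, ← pow_succ', h]
    have e2 : a ^ j * d ^ (j + 1) * a = p := by rw [← hcm.eq, e1]
    refine ⟨p * (a ^ j * d ^ (j + 1)), ?_, ?_, ?_, ?_⟩
    · rw [← mul_assoc, hp]
    · rw [mul_assoc, mul_assoc, hdp']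
    · rw [← mul_assoc, h2, e1]
    · rw [mul_assoc, e2, hp]

include hsurj hloc in
theorem idem_sum (p : A) (hp : p * p = p) :
    ∃ s : List A, (∀ q ∈ s, Good q) ∧ s.sum = p := by
  let L : A → Submodule Q Q := fun p => Submodule.span Q {π (HahnSeries.C p)}
  have wf : WellFounded ((· < ·) : Submodule Q Q → Submodule Q Q → Prop) := wellFounded_lt
  have hlt : ∀ p g : A, p * p = p → g * g = g → p * g = g → g * p = g → g ≠ p → L g < L p := by
    intro p g hp hg hpg hgp hne
    refine lt_of_le_of_ne ?_ ?_
    · rw [Submodule.span_singleton_le_iff_mem, Submodule.mem_span_singleton]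
      exact ⟨π (HahnSeries.C g), by rw [smul_eq_mul, ← map_mul, ← map_mul, hgp]⟩
    · intro h
      have hmem : π (HahnSeries.C p) ∈ L g := by
        rw [h]; exact Submodule.mem_span_singleton_self _
      obtain ⟨q, hq⟩ := Submodule.mem_span_singleton.1 hmem
      rw [smul_eq_mul] at hq
      have h0 : π (HahnSeries.C (p - g)) = 0 := by
        have : p - g = p * (p - g) := by rw [mul_sub, hp, hpg]
        rw [this, map_mul, map_mul, ← hq, mul_assoc, ← map_mul, ← map_mul, mul_sub, hgp, hg,
          sub_self]
        simp
      have hu : IsUnit ((1 : LaurentSeries A) - HahnSeries.C (p - g)) :=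
        hloc _ (by rw [map_sub, h0]; simp)
      have hz : ((1 : LaurentSeries A) - HahnSeries.C (p - g)) * HahnSeries.C (p - g) = 0 := by
        rw [sub_mul, one_mul, ← map_mul]
        have : (p - g) * (p - g) = p - g := by
          rw [mul_sub, sub_mul, sub_mul, hp, hgp, hpg, hg]; abel
        rw [this, sub_self]
      have hz' := hu.mul_right_eq_zero.1 hz
      have := congrArg (fun f => HahnSeries.coeff f 0) hz'
      simp only [coeff_C_zero, HahnSeries.coeff_zero] at this
      exact hne (sub_eq_zero.1 this).symm
  suffices H : ∀ I : Submodule Q Q, ∀ p : A, p * p = p → L p = I →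
      ∃ s : List A, (∀ q ∈ s, Good q) ∧ s.sum = p from H _ p hp rfl
  intro I
  induction I using wf.induction with
  | _ I ih =>
  intro p hp hI
  by_cases hp0 : p = 0
  · exact ⟨[], by simp, by simp [hp0]⟩
  by_cases hgood : ∀ a, p * a = a → a * p = a →
      IsNilpotent a ∨ ∃ c, p * c = c ∧ c * p = c ∧ a * c = p ∧ c * a = p
  · exact ⟨[p], by simpa using ⟨hp, hp0, hgood⟩, by simp⟩
  push Not at hgood
  obtain ⟨a, h1, h2, h3, h4⟩ := hgood
  obtain ⟨g, hpg, hgp, hg, hg0, hgp'⟩ := corner_idem π hsurj hloc p a hp h1 h2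
  have hgne : g ≠ p := fun h => by
    obtain ⟨c, hc1, hc2, hc3, hc4⟩ := hgp' h
    exact h4 c hc1 hc2 hc3 hc4
  have hgne0 : g ≠ 0 := fun h => h3 (hg0 h)
  obtain ⟨s, hs, hs'⟩ := ih (L g) (by rw [← hI]; exact hlt p g hp hg hpg hgp hgne) g hg rfl
  have hpg2 : (p - g) * (p - g) = p - g := by
    rw [mul_sub, sub_mul, sub_mul, hp, hgp, hpg, hg]; abel
  obtain ⟨t, ht, ht'⟩ := ih (L (p - g)) (by
    rw [← hI]
    refine hlt p (p - g) hp hpg2 (by rw [mul_sub, hp, hpg]) (by rw [sub_mul, hp, hgp]) ?_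
    intro h
    exact hgne0 (by simpa using h)) (p - g) hpg2 rfl
  refine ⟨s ++ t, ?_, ?_⟩
  · intro q hq
    rcases List.mem_append.1 hq with h | h
    · exact hs q h
    · exact ht q h
  · rw [List.sum_append, hs', ht']; abel

end main
end LS

namespace LS

section nilpart
variable {A : Type*} [Ring A]

/-- Nilpotent elements of the corner `p A p`. -/
def NN (p : A) : Set A := {a | p * a = a ∧ a * p = a ∧ IsNilpotent a}

theorem no_right_inv {p a c : A} (hp : p * p = p) (hp0 : p ≠ 0) (ha : a ∈ NN p)
    (h : a * c = p) : False := by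
  obtain ⟨h1, h2, k, hk⟩ := ha
  have : ∀ k : ℕ, p * a ^ k = 0 → False := by
    intro k
    induction k with
    | zero => intro h0; exact hp0 (by simpa using h0)
    | succ k ih =>
      intro h0
      apply ih
      have e : p * a ^ k = p * a ^ k * p := by
        cases k with
        | zero => simp [hp]
        | succ k => rw [pow_succ, mul_assoc, mul_assoc, h2]
      have e2 : p * a ^ k * p = p * a ^ (k + 1) * c := by
        rw [pow_succ, ← mul_assoc, mul_assoc _ a c, h]
      rw [e, e2, h0, zero_mul]
  exact this k (by rw [hk, mul_zero])

theorem no_left_inv {p a c : A} (hp : p * p = p) (hp0 : p ≠ 0) (ha : a ∈ NN p)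
    (h : c * a = p) : False := by
  obtain ⟨h1, h2, k, hk⟩ := ha
  have : ∀ k : ℕ, a ^ k * p = 0 → False := by
    intro k
    induction k with
    | zero => intro h0; exact hp0 (by simpa using h0)
    | succ k ih =>
      intro h0
      apply ih
      have e : a ^ k * p = p * (a ^ k * p) := by
        cases k with
        | zero => simp [hp]
        | succ k => rw [pow_succ', ← mul_assoc, ← mul_assoc, h1]
      have e2 : p * (a ^ k * p) = c * (a ^ (k + 1) * p) := by
        rw [pow_succ', mul_assoc a, ← mul_assoc c, h]
      rw [e, e2, h0, mul_zero]
  exact this k (by rw [hk, zero_mul])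

theorem NN_zero (p : A) : (0 : A) ∈ NN p := ⟨by simp, by simp, IsNilpotent.zero⟩

theorem NN_mul_right {p a c : A} (hp : Good p) (ha : a ∈ NN p) (_h1 : p * c = c) (h2 : c * p = c) :
    a * c ∈ NN p := by
  have e1 : p * (a * c) = a * c := by rw [← mul_assoc, ha.1]
  have e2 : a * c * p = a * c := by rw [mul_assoc, h2]
  refine ⟨e1, e2, ?_⟩
  rcases hp.2.2 _ e1 e2 with h | ⟨d, _, _, h, _⟩
  · exact h
  · exact (no_right_inv hp.1 hp.2.1 ha (by rw [← h, mul_assoc])).elim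

theorem NN_mul_left {p a c : A} (hp : Good p) (ha : a ∈ NN p) (h1 : p * c = c) (_h2 : c * p = c) :
    c * a ∈ NN p := by
  have e1 : p * (c * a) = c * a := by rw [← mul_assoc, h1]
  have e2 : c * a * p = c * a := by rw [mul_assoc, ha.2.1]
  refine ⟨e1, e2, ?_⟩
  rcases hp.2.2 _ e1 e2 with h | ⟨d, _, _, _, h⟩
  · exact h
  · exact (no_left_inv (c := d * c) hp.1 hp.2.1 ha (by rw [← h, mul_assoc])).elim

theorem one_sub_inv {p a : A} (hp : p * p = p) (ha : a ∈ NN p) :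
    ∃ u, p * u = u ∧ u * p = u ∧ (p - a) * u = p := by
  obtain ⟨v, hv⟩ := (ha.2.2.isUnit_one_sub).exists_right_inv
  refine ⟨p * v * p, by rw [← mul_assoc, ← mul_assoc, hp], by rw [mul_assoc, hp], ?_⟩
  have : (p - a) * p = p * (1 - a) := by rw [sub_mul, hp, ha.2.1, mul_sub, mul_one, ha.1]
  rw [← mul_assoc, ← mul_assoc, this, mul_assoc p, hv, mul_one, hp]

theorem NN_add {p a b : A} (hp : Good p) (ha : a ∈ NN p) (hb : b ∈ NN p) : a + b ∈ NN p := by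
  have e1 : p * (a + b) = a + b := by rw [mul_add, ha.1, hb.1]
  have e2 : (a + b) * p = a + b := by rw [add_mul, ha.2.1, hb.2.1]
  refine ⟨e1, e2, ?_⟩
  rcases hp.2.2 _ e1 e2 with h | ⟨d, hd1, hd2, _, h⟩
  · exact h
  · exfalso
    have ha' := NN_mul_left hp ha hd1 hd2
    have hb' := NN_mul_left hp hb hd1 hd2
    obtain ⟨u, _, _, hu⟩ := one_sub_inv hp.1 hb'
    refine no_right_inv (c := u) hp.1 hp.2.1 ha' ?_
    rw [← hu, ← h]
    congr 1
    rw [mul_add]; abel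

theorem NN_neg {p a : A} (ha : a ∈ NN p) : -a ∈ NN p :=
  ⟨by rw [mul_neg, ha.1], by rw [neg_mul, ha.2.1], ha.2.2.neg⟩

theorem NN_sum {p : A} (hp : Good p) {ι : Type*} (s : Finset ι) (f : ι → A)
    (h : ∀ i ∈ s, f i ∈ NN p) : ∑ i ∈ s, f i ∈ NN p := by
  classical
  induction s using Finset.induction_on with
  | empty => simpa using NN_zero p
  | insert a s ha ih =>
    rw [Finset.sum_insert ha]
    exact NN_add hp (h _ (Finset.mem_insert_self _ _))
      (ih fun i hi => h i (Finset.mem_insert_of_mem hi))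

/-- Series with coefficients in `NN p`. -/
def NS (p : A) : Set (LaurentSeries A) := {f | ∀ k, f.coeff k ∈ NN p}

theorem NS_mul_left {p : A} (hp : Good p) {f : LaurentSeries A} (hf : f ∈ NS p)
    (r : LaurentSeries A) : HahnSeries.C p * r * f ∈ NS p := by
  have hCf : (HahnSeries.C p : LaurentSeries A) * f = f := by
    ext k; rw [coeff_C_mul, (hf k).1]
  intro k
  rw [← hCf, ← mul_assoc, HahnSeries.coeff_mul]
  apply NN_sum hp
  intro ij _
  apply NN_mul_left hp (hf _)
  · rw [coeff_mul_C, coeff_C_mul, ← mul_assoc, ← mul_assoc, hp.1]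
  · rw [coeff_mul_C, mul_assoc, hp.1]

end nilpart

section main
variable {A Q : Type*} [Ring A] [Ring Q] [IsSemisimpleRing Q] (π : LaurentSeries A →+* Q)
  (hsurj : Function.Surjective π) (hloc : ∀ r, IsUnit (π r) → IsUnit r)

include hsurj in
theorem NS_ker {p : A} (hp : Good p) (f : LaurentSeries A) (hf : f ∈ NS p) : π f = 0 := by
  let I : Submodule Q Q := Submodule.span Q (π '' NS p)
  by_contra hne
  have hI : I ≠ ⊥ := by
    intro h
    apply hne
    rw [← Submodule.mem_bot Q, ← h]
    exact Submodule.subset_span ⟨f, hf, rfl⟩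
  let P : Set Q := (fun n => π (HahnSeries.C n)) '' NN p
  obtain ⟨w, hwI, hw0, hwP⟩ := exists_killed I hI P
    (by
      rintro _ ⟨a, ha, rfl⟩ _ ⟨b, hb, rfl⟩
      exact ⟨a * b, NN_mul_right hp ha hb.1 hb.2.1, by simp only [map_mul]⟩)
    (by
      rintro _ ⟨a, ha, rfl⟩
      exact (ha.2.2.map HahnSeries.C).map π)
    (by
      rintro w hw _ ⟨a, ha, rfl⟩
      induction hw using Submodule.span_induction with
      | mem y hy =>
        obtain ⟨g, hg, rfl⟩ := hy
        refine Submodule.subset_span ⟨g * HahnSeries.C a, ?_, by simp only [map_mul]⟩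
        intro k
        rw [coeff_mul_C]
        exact NN_mul_right hp (hg k) ha.1 ha.2.1
      | zero => rw [zero_mul]; exact zero_mem _
      | add y z _ _ h1 h2 => rw [add_mul]; exact add_mem h1 h2
      | smul q y _ h1 => rw [smul_mul_assoc]; exact I.smul_mem q h1)
  have hp1 : ∀ y ∈ I, y * π (HahnSeries.C p) = y := by
    intro y hy
    induction hy using Submodule.span_induction with
    | mem y hy =>
      obtain ⟨g, hg, rfl⟩ := hy
      rw [← map_mul]
      congr 1
      ext k
      rw [coeff_mul_C, (hg k).2.1]
    | zero => rw [zero_mul]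
    | add y z _ _ h1 h2 => rw [add_mul, h1, h2]
    | smul q y _ h1 => rw [smul_mul_assoc, h1]
  have hp2 : ∀ y ∈ I, ∀ r, ∃ g ∈ NS p, π (HahnSeries.C p * r) * y = π g := by
    intro y hy
    induction hy using Submodule.span_induction with
    | mem y hy =>
      obtain ⟨g, hg, rfl⟩ := hy
      intro r
      exact ⟨_, NS_mul_left hp hg r, by rw [← map_mul]⟩
    | zero => intro r; exact ⟨0, fun k => NN_zero p, by simp⟩
    | add y z _ _ h1 h2 =>
      intro r
      obtain ⟨g, hg, h⟩ := h1 r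
      obtain ⟨g', hg', h'⟩ := h2 r
      exact ⟨g + g', fun k => NN_add hp (hg k) (hg' k), by rw [mul_add, h, h', map_add]⟩
    | smul q y _ h1 =>
      intro r
      obtain ⟨s, rfl⟩ := hsurj q
      obtain ⟨g, hg, h⟩ := h1 (r * s)
      exact ⟨g, hg, by rw [← h, smul_eq_mul, ← mul_assoc, ← map_mul, mul_assoc]⟩
  obtain ⟨e, he, hIe⟩ := IsSemisimpleRing.ideal_eq_span_idempotent I
  have heI : e ∈ I := by rw [hIe]; exact Ideal.mem_span_singleton_self e
  have hwe : w * e = w := by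
    have := hwI
    rw [hIe] at this
    obtain ⟨q, hq⟩ := Submodule.mem_span_singleton.1 this
    rw [← hq, smul_eq_mul, mul_assoc, he.eq]
  obtain ⟨g, hg, hge⟩ := hp2 e heI 1
  have hwg : w * π g = w := by
    rw [← hge, mul_one, ← mul_assoc, hp1 w hwI, hwe]
  have red : ∀ d : ℕ, ∀ g ∈ NS p, (∀ k : ℤ, k < -d → g.coeff k = 0) →
      ∃ g' ∈ NS p, (∀ k : ℤ, k < 0 → g'.coeff k = 0) ∧ w * π g = w * π g' := by
    intro d
    induction d with
    | zero => intro g hg h; exact ⟨g, hg, by simpa using h, rfl⟩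
    | succ d ih =>
      intro g hg h
      obtain ⟨n, hn⟩ : ∃ n, n = g.coeff (-((d + 1 : ℕ) : ℤ)) := ⟨_, rfl⟩
      have hnN : n ∈ NN p := by rw [hn]; exact hg _
      have hcoef : ∀ k, (g - HahnSeries.C n * xp A (-((d + 1 : ℕ) : ℤ))).coeff k =
          if k = -((d + 1 : ℕ) : ℤ) then 0 else g.coeff k := by
        intro k
        rw [HahnSeries.coeff_sub, coeff_C_mul, coeff_xp]
        split_ifs with hk
        · rw [hk, hn]; simp
        · simp
      obtain ⟨g', hg', hg'0, hgg'⟩ := ih (g - HahnSeries.C n * xp A (-((d + 1 : ℕ) : ℤ)))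
        (by
          intro k
          rw [hcoef]
          split_ifs
          · exact NN_zero p
          · exact hg k)
        (by
          intro k hk
          rw [hcoef]
          split_ifs with hk'
          · rfl
          · apply h
            push_cast at hk' ⊢
            omega)
      refine ⟨g', hg', hg'0, ?_⟩
      rw [← hgg', map_sub, mul_sub, map_mul, ← mul_assoc, hwP _ ⟨n, hnN, rfl⟩, zero_mul, sub_zero]
  obtain ⟨M, hM⟩ := bdd g
  obtain ⟨g', hg', hg'0, hgg'⟩ := red M g hg hM
  have hu : IsUnit (1 - g') := by
    apply isUnit_of_coeff
    · intro k hk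
      rw [HahnSeries.coeff_sub, hg'0 k hk, HahnSeries.coeff_one, if_neg (by omega), sub_zero]
    · rw [HahnSeries.coeff_sub, HahnSeries.coeff_one, if_pos rfl]
      exact (hg' 0).2.2.isUnit_one_sub
  apply hw0
  have h0 : w * π (1 - g') = 0 := by
    rw [map_sub, map_one, mul_sub, mul_one, ← hgg', hwg, sub_self]
  exact ((hu.map π).mul_left_eq_zero).1 h0

include hsurj hloc in
theorem corner_unit {p : A} (hp : Good p) (h : LaurentSeries A)
    (h1 : ∀ k, p * h.coeff k = h.coeff k) (h2 : ∀ k, h.coeff k * p = h.coeff k)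
    (hex : ∃ k, ¬ IsNilpotent (h.coeff k)) :
    (∃ v, v * h = HahnSeries.C p) ∧ ∃ v, h * v = HahnSeries.C p := by
  obtain ⟨M, hM⟩ := bdd h
  obtain ⟨j, hj, hjmin⟩ := Int.exists_least_of_bdd (P := fun k => ¬ IsNilpotent (h.coeff k))
    ⟨-M, fun z hz => by
      by_contra hlt
      exact hz (by rw [hM z (by omega)]; exact IsNilpotent.zero)⟩ hex
  obtain ⟨b, hb1, hb2, hb3, hb4⟩ := (hp.2.2 _ (h1 j) (h2 j)).resolve_left hj
  obtain ⟨h', hh'⟩ : ∃ h', h' = HahnSeries.C b * (xp A (-j) * h) := ⟨_, rfl⟩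
  have hc : ∀ k, h'.coeff k = b * h.coeff (k + j) := by
    intro k
    rw [hh', coeff_C_mul, coeff_xp_mul, sub_neg_eq_add]
  obtain ⟨hpos, hhpos⟩ : ∃ hpos : LaurentSeries A,
      ∀ k, hpos.coeff k = if k < 0 then 0 else h'.coeff k := by
    refine ⟨((PowerSeries.mk fun n => h'.coeff n : PowerSeries A) : LaurentSeries A), ?_⟩
    intro k
    rw [PowerSeries.coeff_coe]
    split_ifs with hk
    · rfl
    · rw [PowerSeries.coeff_mk]
      congr 1
      omega
  have hNS : h' - hpos ∈ NS p := by
    intro k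
    rw [HahnSeries.coeff_sub, hhpos]
    split_ifs with hk
    · rw [sub_zero, hc]
      apply NN_mul_left hp _ hb1 hb2
      refine ⟨h1 _, h2 _, ?_⟩
      by_contra hn
      have := hjmin _ hn
      omega
    · rw [sub_self]; exact NN_zero p
  have hπ : π (1 - HahnSeries.C p + h') = π (1 - HahnSeries.C p + hpos) := by
    rw [map_add, map_add, add_right_inj, ← sub_eq_zero, ← map_sub]
    exact NS_ker π hsurj hp _ hNS
  have hu : IsUnit (1 - HahnSeries.C p + hpos) := by
    apply isUnit_of_coeff
    · intro k hk
      rw [HahnSeries.coeff_add, HahnSeries.coeff_sub, hhpos, if_pos hk, HahnSeries.coeff_one,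
        coeff_C, if_neg (by omega), if_neg (by omega)]
      simp
    · rw [HahnSeries.coeff_add, HahnSeries.coeff_sub, hhpos, if_neg (by omega), HahnSeries.coeff_one,
        coeff_C, if_pos rfl, if_pos rfl, hc, zero_add, hb4]
      simp
  have hu' : IsUnit (1 - HahnSeries.C p + h') := hloc _ (by rw [hπ]; exact hu.map π)
  have hCp : (HahnSeries.C p * HahnSeries.C p : LaurentSeries A) = HahnSeries.C p := by
    rw [← map_mul, hp.1]
  have hCh : HahnSeries.C p * h = h := by ext k; rw [coeff_C_mul, h1]
  have hh'p : h' * HahnSeries.C p = h' := by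
    ext k; rw [coeff_mul_C, hc, mul_assoc, h2]
  have hph' : HahnSeries.C p * h' = h' := by
    ext k; rw [coeff_C_mul, hc, ← mul_assoc, hb1]
  constructor
  · obtain ⟨w, hw⟩ := hu'.exists_left_inv
    refine ⟨w * (HahnSeries.C b * xp A (-j)), ?_⟩
    have := congrArg (· * (HahnSeries.C p : LaurentSeries A)) hw
    simp only [mul_assoc, add_mul, sub_mul, one_mul, hCp, sub_self, zero_add, hh'p] at this
    rw [← this, hh']
    simp only [mul_assoc]
  · obtain ⟨w, hw⟩ := hu'.exists_right_inv
    refine ⟨w * (HahnSeries.C b * xp A (-j)), ?_⟩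
    have := congrArg ((HahnSeries.C p : LaurentSeries A) * ·) hw
    simp only [← mul_assoc, mul_add, mul_sub, mul_one, hCp, sub_self, zero_add, hph'] at this
    have e1 : h * w = HahnSeries.C (h.coeff j) * xp A j := by
      calc h * w = HahnSeries.C (h.coeff j) * xp A j * (h' * w) := by
            rw [hh']
            calc h * w = HahnSeries.C p * h * w := by rw [hCh]
              _ = HahnSeries.C (h.coeff j * b) * (xp A j * xp A (-j)) * h * w := by
                  rw [hb3, xp_mul, add_neg_cancel, xp_zero, mul_one]
              _ = HahnSeries.C (h.coeff j) * (HahnSeries.C b * xp A j) * (xp A (-j) * h) * w := by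
                  rw [map_mul]; simp only [mul_assoc]
              _ = _ := by
                  rw [← (xp_comm j (HahnSeries.C b)).eq]; simp only [mul_assoc]
        _ = HahnSeries.C (h.coeff j) * xp A j := by
            rw [this, mul_assoc, (xp_comm j (HahnSeries.C p)).eq, ← mul_assoc, ← map_mul, h2]
    rw [← mul_assoc, e1, mul_assoc, ← mul_assoc (xp A j), (xp_comm j (HahnSeries.C b)).eq,
      mul_assoc, xp_mul, add_neg_cancel, xp_zero, mul_one, ← map_mul, hb3]

end main
end LS

namespace LS

theorem distrib_crit {R : Type*} [Ring R] (N : Submodule Rᵐᵒᵖ R) (hN : IsDistribModule Rᵐᵒᵖ N)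
    (m n : R) (hm : m ∈ N) (hn : n ∈ N) :
    ∃ r s t : R, m * r = n * s ∧ n * (1 - r) = m * t := by
  let m' : N := ⟨m, hm⟩
  let n' : N := ⟨n, hn⟩
  have h := hN (Submodule.span _ {m' + n'}) (Submodule.span _ {m'}) (Submodule.span _ {n'})
  have hmem : m' + n' ∈ Submodule.span Rᵐᵒᵖ {m' + n'} ⊓
      (Submodule.span Rᵐᵒᵖ {m'} ⊔ Submodule.span Rᵐᵒᵖ {n'}) :=
    ⟨Submodule.mem_span_singleton_self _, add_mem
      (Submodule.mem_sup_left (Submodule.mem_span_singleton_self _))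
      (Submodule.mem_sup_right (Submodule.mem_span_singleton_self _))⟩
  rw [h] at hmem
  obtain ⟨y, ⟨hy1, hy2⟩, z, ⟨hz1, hz2⟩, hyz⟩ := Submodule.mem_sup.1 hmem
  obtain ⟨a, ha⟩ := Submodule.mem_span_singleton.1 hy1
  obtain ⟨b, hb⟩ := Submodule.mem_span_singleton.1 hz1
  obtain ⟨c, hc⟩ := Submodule.mem_span_singleton.1 hy2
  obtain ⟨d, hd⟩ := Submodule.mem_span_singleton.1 hz2
  have e1 : (m + n) * a.unop = m * c.unop := by
    have := congrArg Subtype.val (ha.trans hc.symm)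
    simpa [m', n', MulOpposite.smul_eq_mul_unop, add_mul] using this
  have e2 : (m + n) * b.unop = n * d.unop := by
    have := congrArg Subtype.val (hb.trans hd.symm)
    simpa [m', n', MulOpposite.smul_eq_mul_unop, add_mul] using this
  have e3 : (m + n) * a.unop + (m + n) * b.unop = m + n := by
    rw [← ha, ← hb] at hyz
    have := congrArg Subtype.val hyz
    simpa [m', n', MulOpposite.smul_eq_mul_unop, add_mul] using this
  refine ⟨b.unop, d.unop - b.unop, c.unop - a.unop - (1 - a.unop - b.unop), ?_, ?_⟩
  · rw [mul_sub, ← e2]; noncomm_ring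
  · rw [← sub_eq_zero]
    have : n * (1 - b.unop) - m * (c.unop - a.unop - (1 - a.unop - b.unop)) =
      (m + n) - ((m + n) * a.unop + (m + n) * b.unop) + ((m + n) * a.unop - m * c.unop) := by
      noncomm_ring
    rw [this, e3, e1]
    simp

section main
variable {A Q : Type*} [Ring A] [Ring Q] [IsSemisimpleRing Q] (π : LaurentSeries A →+* Q)
  (hsurj : Function.Surjective π) (hloc : ∀ r, IsUnit (π r) → IsUnit r)

include hsurj hloc in
theorem crit (hsd : IsRightSemidistributiveRing (LaurentSeries A)) {p : A} (hp : Good p)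
    (m n : LaurentSeries A) (hm : HahnSeries.C p * m = m) (hn : HahnSeries.C p * n = n) :
    ∃ r s t : LaurentSeries A, m * r = n * s ∧ n * (1 - r) = m * t := by
  obtain ⟨ι, N, -, htop, hN⟩ := hsd
  have h1 : (1 : LaurentSeries A) ∈ iSup N := by rw [htop]; trivial
  obtain ⟨f, hf, hsum⟩ := (Submodule.mem_iSup_iff_exists_finsupp N 1).1 h1
  rw [Finsupp.sum] at hsum
  have hCp : (HahnSeries.C p * HahnSeries.C p : LaurentSeries A) = HahnSeries.C p := by
    rw [← map_mul, hp.1]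
  have hc1 : ∀ i k, p * (HahnSeries.C p * f i * HahnSeries.C p).coeff k =
      (HahnSeries.C p * f i * HahnSeries.C p).coeff k := by
    intro i k
    rw [coeff_mul_C, coeff_C_mul, ← mul_assoc, ← mul_assoc, hp.1]
  have hc2 : ∀ i k, (HahnSeries.C p * f i * HahnSeries.C p).coeff k * p =
      (HahnSeries.C p * f i * HahnSeries.C p).coeff k := by
    intro i k
    rw [coeff_mul_C, mul_assoc, hp.1]
  have hex : ∃ i, ∃ k, ¬ IsNilpotent ((HahnSeries.C p * f i * HahnSeries.C p).coeff k) := by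
    by_contra hcon
    push Not at hcon
    have hmem : ∑ i ∈ f.support, (HahnSeries.C p * f i * HahnSeries.C p).coeff 0 ∈ NN p :=
      NN_sum hp _ _ fun i _ => ⟨hc1 i 0, hc2 i 0, hcon i 0⟩
    have hs : ∑ i ∈ f.support, (HahnSeries.C p * f i * HahnSeries.C p).coeff 0 = p := by
      have : ∀ i, (HahnSeries.C p * f i * HahnSeries.C p).coeff 0 = p * (f i).coeff 0 * p := by
        intro i; rw [coeff_mul_C, coeff_C_mul]
      simp only [this]
      rw [← Finset.sum_mul, ← Finset.mul_sum]
      have h2 := congrArg (fun g => HahnSeries.coeff g 0) hsum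
      simp only [HahnSeries.coeff_sum, HahnSeries.coeff_one, if_true] at h2
      rw [h2, mul_one, hp.1]
    rw [hs] at hmem
    exact no_right_inv hp.1 hp.2.1 hmem hp.1
  obtain ⟨i, hi⟩ := hex
  obtain ⟨⟨v, hv⟩, -⟩ := corner_unit π hsurj hloc hp _ (hc1 i) (hc2 i) hi
  have hmemN : ∀ y, f i * y ∈ N i := fun y => by
    have := (N i).smul_mem (MulOpposite.op y) (hf i)
    simpa [MulOpposite.smul_eq_mul_unop] using this
  obtain ⟨r, s, t, e1, e2⟩ := distrib_crit (N i) (hN i) (f i * m) (f i * n) (hmemN m) (hmemN n)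
  have hinv : ∀ y, HahnSeries.C p * y = y → v * HahnSeries.C p * (f i * y) = y := by
    intro y hy
    calc v * HahnSeries.C p * (f i * y) = v * HahnSeries.C p * (f i * (HahnSeries.C p * y)) := by
          rw [hy]
      _ = (v * (HahnSeries.C p * f i * HahnSeries.C p)) * y := by simp only [mul_assoc]
      _ = y := by rw [hv, hy]
  refine ⟨r, s, t, ?_, ?_⟩
  · have := congrArg (fun z => v * HahnSeries.C p * z) e1
    simp only [mul_assoc (f i)] at this
    rwa [hinv, hinv] at this
    · rw [← mul_assoc, hn]
    · rw [← mul_assoc, hm]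
  · have := congrArg (fun z => v * HahnSeries.C p * z) e2
    simp only [mul_assoc (f i)] at this
    rwa [hinv, hinv] at this
    · rw [← mul_assoc, hm]
    · rw [← mul_assoc, hn]

end main

theorem local_alt {A : Type*} [Ring A] {q : A} (hq : Good q) (r : A) :
    (∃ u, q * r * q * u = q) ∨ ∃ u, q * (1 - r) * q * u = q := by
  have e1 : q * (q * r * q) = q * r * q := by rw [← mul_assoc, ← mul_assoc, hq.1]
  have e2 : q * r * q * q = q * r * q := by rw [mul_assoc, hq.1]
  rcases hq.2.2 _ e1 e2 with h | ⟨u, _, _, h, _⟩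
  · right
    obtain ⟨u, _, _, hu⟩ := one_sub_inv hq.1 ⟨e1, e2, h⟩
    refine ⟨u, ?_⟩
    rw [mul_sub, mul_one, sub_mul, hq.1, hu]
  · exact Or.inl ⟨u, h⟩

section chain
variable {A : Type*} [Ring A]
  (hcrit : ∀ p : A, Good p → ∀ m n : LaurentSeries A, HahnSeries.C p * m = m →
    HahnSeries.C p * n = n → ∃ r s t : LaurentSeries A, m * r = n * s ∧ n * (1 - r) = m * t)

include hcrit in
theorem uniserial {p q : A} (hp : Good p) (hq : Good q) (m n : A) (hm : p * m = m)
    (hmq : m * q = m) (hn : p * n = n) (hnq : n * q = n) :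
    (∃ c, m = n * c) ∨ ∃ c, n = m * c := by
  obtain ⟨r, s, t, e1, e2⟩ := hcrit p hp (HahnSeries.C m) (HahnSeries.C n)
    (by rw [← map_mul, hm]) (by rw [← map_mul, hn])
  have f1 : m * r.coeff 0 = n * s.coeff 0 := by
    have := congrArg (fun g => HahnSeries.coeff g 0) e1
    simpa only [coeff_C_mul] using this
  have f2 : n * (1 - r.coeff 0) = m * t.coeff 0 := by
    have := congrArg (fun g => HahnSeries.coeff g 0) e2
    simpa only [coeff_C_mul, HahnSeries.coeff_sub, HahnSeries.coeff_one, if_true] using this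
  rcases local_alt hq (r.coeff 0) with ⟨u, hu⟩ | ⟨u, hu⟩
  · left
    refine ⟨s.coeff 0 * (q * u), ?_⟩
    rw [← mul_assoc, ← f1]
    conv_lhs => rw [← hmq, ← hu]
    simp only [← mul_assoc, hmq]
  · right
    refine ⟨t.coeff 0 * (q * u), ?_⟩
    rw [← mul_assoc, ← f2]
    conv_lhs => rw [← hnq, ← hu]
    simp only [← mul_assoc, hnq]

/-- The sparse series `∑ d i x ^ (i * i)`. -/
noncomputable def Fser (d : ℕ → A) : LaurentSeries A :=
  ((PowerSeries.mk fun k => if Nat.sqrt k * Nat.sqrt k = k then d (Nat.sqrt k) else 0 :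
    PowerSeries A) : LaurentSeries A)

theorem coeff_Fser (d : ℕ → A) (k : ℤ) : (Fser d).coeff k =
    if k < 0 then 0 else
      if Nat.sqrt k.natAbs * Nat.sqrt k.natAbs = k.natAbs then d (Nat.sqrt k.natAbs) else 0 := by
  rw [Fser, PowerSeries.coeff_coe, PowerSeries.coeff_mk]

theorem coeff_Fser_sq (d : ℕ → A) (i : ℕ) : (Fser d).coeff ((i * i : ℕ) : ℤ) = d i := by
  rw [coeff_Fser, if_neg (not_lt.2 (Int.natCast_nonneg _)), Int.natAbs_natCast, Nat.sqrt_eq, if_pos rfl]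

theorem coeff_Fser_ne (d : ℕ → A) (k : ℤ) (h : (Fser d).coeff k ≠ 0) :
    ∃ l : ℕ, k = ((l * l : ℕ) : ℤ) := by
  rw [coeff_Fser] at h
  split_ifs at h with h1 h2
  · exact absurd rfl h
  · exact ⟨Nat.sqrt k.natAbs, by rw [h2]; omega⟩
  · exact absurd rfl h

theorem C_mul_Fser (p : A) (d : ℕ → A) (h : ∀ i, p * d i = d i) :
    HahnSeries.C p * Fser d = Fser d := by
  ext k
  rw [coeff_C_mul, coeff_Fser]
  split_ifs <;> simp [h]

theorem coeff_Fser_mul (d : ℕ → A) (r : LaurentSeries A) (X : Submodule Aᵐᵒᵖ A) (M : ℕ)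
    (hM : ∀ k : ℤ, k < -M → r.coeff k = 0) (i : ℕ) (hi : M ≤ i) (hX : ∀ l < i, d l ∈ X) :
    (Fser d * r).coeff ((i * i : ℕ) : ℤ) - d i * r.coeff 0 ∈ X := by
  classical
  rw [HahnSeries.coeff_mul]
  set S := Finset.antidiagonal (Fser d).isPWO_support r.isPWO_support ((i * i : ℕ) : ℤ) with hS
  have hterm : ∀ ij ∈ S.erase (((i * i : ℕ) : ℤ), 0),
      (Fser d).coeff ij.1 * r.coeff ij.2 ∈ X := by
    rintro ⟨a, b⟩ hab
    rw [Finset.mem_erase, hS, Finset.mem_antidiagonal] at hab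
    obtain ⟨hne, ha, hb, hs⟩ := hab
    simp only at ha hb hs ⊢
    obtain ⟨l, rfl⟩ := coeff_Fser_ne d a ha
    rw [coeff_Fser_sq]
    rcases lt_trichotomy l i with h | h | h
    · have := X.smul_mem (MulOpposite.op (r.coeff b)) (hX l h)
      simpa [MulOpposite.smul_eq_mul_unop] using this
    · subst h
      exfalso
      apply hne
      have : b = 0 := by omega
      rw [this]
    · rw [hM b, mul_zero]
      · exact zero_mem _
      · have h2 : (i + 1) * (i + 1) ≤ l * l := Nat.mul_le_mul h h
        have h3 : (i + 1) * (i + 1) = i * i + 2 * i + 1 := by ring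
        have h4 : ((i * i + 2 * i + 1 : ℕ) : ℤ) ≤ ((l * l : ℕ) : ℤ) := by
          rw [← h3]; exact_mod_cast h2
        have h5 : ((i * i + 2 * i + 1 : ℕ) : ℤ) = ((i * i : ℕ) : ℤ) + 2 * i + 1 := by
          push_cast; ring
        omega
  have hsum := Submodule.sum_mem X hterm
  by_cases hmem : (((i * i : ℕ) : ℤ), (0 : ℤ)) ∈ S
  · rw [← Finset.add_sum_erase S _ hmem]
    simp only [coeff_Fser_sq]
    rwa [add_sub_cancel_left]
  · rw [Finset.erase_eq_of_notMem hmem] at hsum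
    have h0 : d i * r.coeff 0 = 0 := by
      by_contra hne
      apply hmem
      rw [hS, Finset.mem_antidiagonal]
      refine ⟨?_, ?_, by simp⟩
      · change (Fser d).coeff _ ≠ 0
        rw [coeff_Fser_sq]
        exact left_ne_zero_of_mul hne
      · exact right_ne_zero_of_mul hne
    rwa [h0, sub_zero]

include hcrit in
theorem no_chain {p q : A} (hp : Good p) (hq : Good q) (c : ℕ → A) (hpc : ∀ i, p * c i = c i)
    (hcq : ∀ i, c i * q = c i) (h1 : ∀ i, ∃ a, c i = c (i + 1) * a)
    (h2 : ∀ i, ¬ ∃ a, c (i + 1) = c i * a) : False := by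
  let X : ℕ → Submodule Aᵐᵒᵖ A := fun i => Submodule.span Aᵐᵒᵖ {c i}
  have hXmem : ∀ i y, y ∈ X i ↔ ∃ a, y = c i * a := by
    intro i y
    rw [Submodule.mem_span_singleton]
    constructor
    · rintro ⟨a, rfl⟩
      exact ⟨a.unop, by rw [MulOpposite.smul_eq_mul_unop]⟩
    · rintro ⟨a, rfl⟩
      exact ⟨MulOpposite.op a, by rw [MulOpposite.smul_eq_mul_unop, MulOpposite.unop_op]⟩
  have hmono : Monotone X := by
    apply monotone_nat_of_le_succ
    intro i
    rw [Submodule.span_singleton_le_iff_mem, hXmem]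
    exact h1 i
  have hle : ∀ i l, l < i + 1 → c l ∈ X i := fun i l hl =>
    hmono (Nat.lt_succ_iff.1 hl) (Submodule.mem_span_singleton_self _)
  let d : ℕ → A := fun i => if Even i then c i else 0
  let d' : ℕ → A := fun i => if Even i then 0 else c i
  have hd : ∀ i l, l < i + 1 → d l ∈ X i := by
    intro i l hl
    simp only [d]
    split_ifs
    · exact hle i l hl
    · exact zero_mem _
  have hd' : ∀ i l, l < i + 1 → d' l ∈ X i := by
    intro i l hl
    simp only [d']
    split_ifs
    · exact zero_mem _
    · exact hle i l hl
  obtain ⟨r, s, t, e1, e2⟩ := hcrit p hp (Fser d) (Fser d')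
    (C_mul_Fser p d fun i => by simp only [d]; split_ifs <;> simp [hpc])
    (C_mul_Fser p d' fun i => by simp only [d']; split_ifs <;> simp [hpc])
  obtain ⟨M1, hM1⟩ := bdd r
  obtain ⟨M2, hM2⟩ := bdd s
  obtain ⟨M3, hM3⟩ := bdd t
  obtain ⟨M4, hM4⟩ := bdd (1 - r)
  let K := M1 + M2 + M3 + M4
  have g1 : c (2 * K + 1 + 1) * r.coeff 0 ∈ X (2 * K + 1) := by
    have a1 := coeff_Fser_mul d r (X (2 * K + 1)) M1 hM1 (2 * K + 1 + 1) (by omega) (hd _)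
    have a2 := coeff_Fser_mul d' s (X (2 * K + 1)) M2 hM2 (2 * K + 1 + 1) (by omega) (hd' _)
    have ev : Even (2 * K + 1 + 1) := ⟨K + 1, by ring⟩
    simp only [d', if_pos ev, zero_mul, sub_zero] at a2
    simp only [d, if_pos ev] at a1
    have a3 := Submodule.sub_mem _ a2 a1
    change (Fser d' * s).coeff _ - ((Fser d * r).coeff _ - _) ∈ _ at a3
    rwa [e1, sub_sub_cancel] at a3
  have g2 : c (2 * K + 1) * (1 - r.coeff 0) ∈ X (2 * K) := by
    have a1 := coeff_Fser_mul d' (1 - r) (X (2 * K)) M4 hM4 (2 * K + 1) (by omega) (hd' _)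
    have a2 := coeff_Fser_mul d t (X (2 * K)) M3 hM3 (2 * K + 1) (by omega) (hd _)
    have ev : ¬ Even (2 * K + 1) := by simp
    simp only [d, if_neg ev, zero_mul, sub_zero] at a2
    simp only [d', if_neg ev, HahnSeries.coeff_sub, HahnSeries.coeff_one, if_true] at a1
    have a3 := Submodule.sub_mem _ a2 a1
    change (Fser d * t).coeff _ - ((Fser d' * (1 - r)).coeff _ - _) ∈ _ at a3
    rwa [e2, sub_sub_cancel] at a3
  rcases local_alt hq (r.coeff 0) with ⟨u, hu⟩ | ⟨u, hu⟩
  · obtain ⟨a, ha⟩ := (hXmem _ _).1 g1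
    apply h2 (2 * K + 1)
    refine ⟨a * (q * u), ?_⟩
    rw [← mul_assoc, ← ha]
    conv_lhs => rw [← hcq, ← hu]
    simp only [← mul_assoc, hcq]
  · obtain ⟨a, ha⟩ := (hXmem _ _).1 g2
    apply h2 (2 * K)
    refine ⟨a * (q * u), ?_⟩
    rw [← mul_assoc, ← ha]
    conv_lhs => rw [← hcq, ← hu]
    simp only [← mul_assoc, hcq]

include hcrit in
theorem exists_max {p q : A} (hp : Good p) (hq : Good q) (Y : Set A) (hY : Y.Nonempty)
    (hpY : ∀ y ∈ Y, p * y = y) (hYq : ∀ y ∈ Y, y * q = y) :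
    ∃ c ∈ Y, ∀ y ∈ Y, ∃ a, y = c * a := by
  by_contra hcon
  push Not at hcon
  choose nx hnx hnx' using hcon
  obtain ⟨y0, hy0⟩ := hY
  let c : ℕ → Y := fun i => Nat.rec ⟨y0, hy0⟩ (fun _ y => ⟨nx y.1 y.2, hnx y.1 y.2⟩) i
  have hc : ∀ i, (c (i + 1)).1 = nx (c i).1 (c i).2 := fun i => rfl
  have h2 : ∀ i, ¬ ∃ a, (c (i + 1)).1 = (c i).1 * a := by
    rintro i ⟨a, ha⟩
    exact hnx' _ (c i).2 a (by rw [← hc, ha])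
  refine no_chain hcrit hp hq (fun i => (c i).1) (fun i => hpY _ (c i).2)
    (fun i => hYq _ (c i).2) (fun i => ?_) h2
  exact (uniserial hcrit hp hq (c i).1 (c (i + 1)).1 (hpY _ (c i).2) (hYq _ (c i).2)
    (hpY _ (c (i + 1)).2) (hYq _ (c (i + 1)).2)).resolve_right (h2 i)

end chain
end LS

namespace LS

theorem build_ser {A : Type*} [Ring A] (φ : ℤ → A) (M : ℕ) (hM : ∀ k : ℤ, k < -M → φ k = 0) :
    ∃ h : LaurentSeries A, ∀ k, h.coeff k = φ k := by
  refine ⟨xp A (-M) * ((PowerSeries.mk fun n => φ (n - M) : PowerSeries A) : LaurentSeries A),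
    fun k => ?_⟩
  rw [coeff_xp_mul, PowerSeries.coeff_coe, PowerSeries.coeff_mk]
  split_ifs with h
  · rw [hM k (by omega)]
  · congr 1; omega

theorem lift_ser {A : Type*} [Ring A] (t q : A) (h : LaurentSeries A)
    (H : ∀ k, ∃ b, q * b = b ∧ b * q = b ∧ h.coeff k = t * b) :
    ∃ h' : LaurentSeries A, (∀ k, q * h'.coeff k = h'.coeff k) ∧
      (∀ k, h'.coeff k * q = h'.coeff k) ∧ h = HahnSeries.C t * h' := by
  classical
  choose b hb1 hb2 hb3 using H
  obtain ⟨M, hM⟩ := bdd h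
  obtain ⟨h', hh'⟩ := build_ser (fun k => if h.coeff k = 0 then 0 else b k) M
    (fun k hk => by simp [hM k hk])
  refine ⟨h', fun k => ?_, fun k => ?_, ?_⟩
  · rw [hh']; split_ifs <;> simp [hb1]
  · rw [hh']; split_ifs <;> simp [hb2]
  · ext k
    rw [coeff_C_mul, hh']
    split_ifs with h0
    · rw [h0, mul_zero]
    · exact hb3 k

theorem T_lemma {A Q : Type*} [Ring A] [Ring Q] [IsSemisimpleRing Q] (π : LaurentSeries A →+* Q)
    (hsurj : Function.Surjective π) (hloc : ∀ r, IsUnit (π r) → IsUnit r)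
    (hcrit : ∀ p : A, Good p → ∀ m n : LaurentSeries A, HahnSeries.C p * m = m →
      HahnSeries.C p * n = n → ∃ r s t : LaurentSeries A, m * r = n * s ∧ n * (1 - r) = m * t)
    {p q : A} (hp : Good p) (hq : Good q) :
    ∃ T : Set A, T.Finite ∧ ∀ y : LaurentSeries A, HahnSeries.C p * y = y →
      y * HahnSeries.C q = y → ∃ t ∈ T, (∃ s, y = HahnSeries.C t * s) ∧
        ∃ s, HahnSeries.C t = y * s := by
  obtain ⟨c, ⟨hpc, hcq⟩, hc⟩ := exists_max hcrit hp hq {y | p * y = y ∧ y * q = y}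
    ⟨0, by simp, by simp⟩ (fun y hy => hy.1) (fun y hy => hy.2)
  obtain ⟨w, hw, hwm⟩ := exists_max hcrit hq hq (NN q) ⟨0, NN_zero q⟩
    (fun y hy => hy.1) (fun y hy => hy.2.1)
  obtain ⟨hw1, hw2, K, hK⟩ := hw
  have hcw : ∀ i : ℕ, c * w ^ i * q = c * w ^ i := by
    intro i
    cases i with
    | zero => simp [hcq]
    | succ i => rw [pow_succ, mul_assoc, mul_assoc, hw2]
  refine ⟨(fun i => c * w ^ i) '' (Set.Iic K), (Set.finite_Iic K).image _, fun y hy1 hy2 => ?_⟩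
  have key : ∀ m ≤ K, (∃ i ≤ K, ∃ h : LaurentSeries A, (∀ k, q * h.coeff k = h.coeff k) ∧
      (∀ k, h.coeff k * q = h.coeff k) ∧ (∃ k, ¬ IsNilpotent (h.coeff k)) ∧
        y = HahnSeries.C (c * w ^ i) * h) ∨
      ∃ h : LaurentSeries A, (∀ k, q * h.coeff k = h.coeff k) ∧
        (∀ k, h.coeff k * q = h.coeff k) ∧ y = HahnSeries.C (c * w ^ m) * h := by
    intro m
    induction m with
    | zero =>
      intro _
      right
      rw [pow_zero, mul_one]
      apply lift_ser
      intro k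
      have e1 : p * y.coeff k = y.coeff k := by rw [← coeff_C_mul, hy1]
      have e2 : y.coeff k * q = y.coeff k := by rw [← coeff_mul_C, hy2]
      obtain ⟨a, ha⟩ := hc _ ⟨e1, e2⟩
      refine ⟨q * a * q, by rw [← mul_assoc, ← mul_assoc, hq.1], by rw [mul_assoc, hq.1], ?_⟩
      rw [← mul_assoc, ← mul_assoc, hcq, ← ha, e2]
    | succ m ih =>
      intro hmK
      rcases ih (by omega) with h | ⟨h, h1, h2, h3⟩
      · exact Or.inl h
      by_cases hn : ∃ k, ¬ IsNilpotent (h.coeff k)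
      · exact Or.inl ⟨m, by omega, h, h1, h2, hn, h3⟩
      push Not at hn
      right
      obtain ⟨h', g1, g2, g3⟩ := lift_ser w q h (fun k => by
        obtain ⟨a, ha⟩ := hwm _ ⟨h1 k, h2 k, hn k⟩
        refine ⟨q * a * q, by rw [← mul_assoc, ← mul_assoc, hq.1], by rw [mul_assoc, hq.1], ?_⟩
        rw [← mul_assoc, ← mul_assoc, hw2, ← ha, h2])
      refine ⟨h', g1, g2, ?_⟩
      rw [h3, g3, pow_succ, ← mul_assoc, ← mul_assoc, map_mul _ (c * w ^ m) w]
  rcases key K le_rfl with ⟨i, hi, h, h1, h2, h3, h4⟩ | ⟨h, h1, h2, h3⟩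
  · refine ⟨c * w ^ i, ⟨i, hi, rfl⟩, ⟨h, h4⟩, ?_⟩
    obtain ⟨-, v, hv⟩ := corner_unit π hsurj hloc hq h h1 h2 h3
    refine ⟨v, ?_⟩
    rw [h4, mul_assoc, hv, ← map_mul, hcw]
  · refine ⟨c * w ^ K, ⟨K, le_refl K, rfl⟩, ⟨h, h3⟩, 0, ?_⟩
    rw [hK]; simp

theorem artinian_of_T {R : Type*} [Ring R] (s : List R) (hs : s.sum = 1)
    (hid : ∀ p ∈ s, p * p = p)
    (H : ∀ p ∈ s, ∀ q ∈ s, ∃ T : Set R, T.Finite ∧ ∀ y, p * y = y → y * q = y →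
      ∃ t ∈ T, (∃ r, y = t * r) ∧ ∃ r, t = y * r) : IsArtinian Rᵐᵒᵖ R := by
  classical
  have hmulmem : ∀ (X : Submodule Rᵐᵒᵖ R) (y r : R), y ∈ X → y * r ∈ X := fun X y r hy => by
    have := X.smul_mem (MulOpposite.op r) hy
    simpa [MulOpposite.smul_eq_mul_unop] using this
  let V : R → Submodule Rᵐᵒᵖ R := fun p =>
    { carrier := {y | p * y = y}
      add_mem' := fun {a b} ha hb => by
        simp only [Set.mem_ofPred_eq] at *
        rw [mul_add, ha, hb]
      zero_mem' := by simp
      smul_mem' := fun c y hy => by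
        simp only [Set.mem_ofPred_eq, MulOpposite.smul_eq_mul_unop] at *
        rw [← mul_assoc, hy] }
  have hV : ∀ p y, y ∈ V p ↔ p * y = y := fun p y => Iff.rfl
  have hart : ∀ p ∈ s, IsArtinian Rᵐᵒᵖ (V p) := by
    intro p hps
    have H' : ∀ q : {q // q ∈ s}, ∃ T : Set R, T.Finite ∧ ∀ y, p * y = y → y * q.1 = y →
      ∃ t ∈ T, (∃ r, y = t * r) ∧ ∃ r, t = y * r := fun q => H p hps q.1 q.2
    choose T hT hT' using H'
    let U : Set R := ⋃ q : {q // q ∈ s}, T q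
    have hU : U.Finite := Set.finite_iUnion hT
    have hle : ∀ X X' : Submodule Rᵐᵒᵖ R, X ≤ V p → (∀ t ∈ U, t ∈ X → t ∈ X') → X ≤ X' := by
      intro X X' hX hXX y hy
      have hsum : y = (s.map (fun q => y * q)).sum := by
        rw [List.sum_map_mul_left, List.map_id', hs, mul_one]
      rw [hsum]
      apply list_sum_mem
      intro z hz
      obtain ⟨q, hq, rfl⟩ := List.mem_map.1 hz
      obtain ⟨t, ht, ⟨r, hr⟩, ⟨r', hr'⟩⟩ := hT' ⟨q, hq⟩ (y * q)
        (by rw [← mul_assoc, (hV p y).1 (hX hy)]) (by rw [mul_assoc, hid q hq])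
      rw [hr]
      apply hmulmem
      apply hXX t (Set.mem_iUnion.2 ⟨_, ht⟩)
      rw [hr']
      exact hmulmem _ _ _ (hmulmem _ _ _ hy)
    have : Finite U := hU
    have hsub : ∀ X : Submodule Rᵐᵒᵖ (V p), X.map (V p).subtype ≤ V p := fun X =>
      Submodule.map_subtype_le _ _
    have hfin : Finite (Submodule Rᵐᵒᵖ (V p)) := by
      apply Finite.of_injective
        (fun X : Submodule Rᵐᵒᵖ (V p) => {t : U | t.1 ∈ X.map (V p).subtype})
      intro X X' hXX
      have hXX' : ∀ t ∈ U, t ∈ X.map (V p).subtype ↔ t ∈ X'.map (V p).subtype := fun t ht =>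
        Set.ext_iff.1 hXX ⟨t, ht⟩
      apply Submodule.map_injective_of_injective (V p).injective_subtype
      exact le_antisymm (hle _ _ (hsub X) fun t ht => (hXX' t ht).1)
        (hle _ _ (hsub X') fun t ht => (hXX' t ht).2)
    exact (inferInstance : WellFoundedLT (Submodule Rᵐᵒᵖ (V p)))
  have : ∀ p : {p // p ∈ s}, IsArtinian Rᵐᵒᵖ (V p.1) := fun p => hart p.1 p.2
  have hsup : (⨆ p : {p // p ∈ s}, V p.1) = ⊤ := by
    rw [eq_top_iff]
    intro y _
    have hsum : y = (s.map (fun q => q * y)).sum := by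
      rw [List.sum_map_mul_right, List.map_id', hs, one_mul]
    rw [hsum]
    apply list_sum_mem
    intro z hz
    obtain ⟨q, hq, rfl⟩ := List.mem_map.1 hz
    apply Submodule.mem_iSup_of_mem (⟨q, hq⟩ : {p // p ∈ s})
    rw [hV, ← mul_assoc, hid q hq]
  have hA : IsArtinian Rᵐᵒᵖ (⨆ p : {p // p ∈ s}, V p.1 : Submodule Rᵐᵒᵖ R) := isArtinian_iSup
  rw [hsup] at hA
  exact isArtinian_of_linearEquiv (Submodule.topEquiv (R := Rᵐᵒᵖ) (M := R))

end LS


/-- Let `R = A((x))` be the Laurent series ring over `A`. If `R` is a right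
semidistributive semilocal ring, then both `R` and `A` are right Artinian rings. -/
theorem stmt12 (A : Type*) [Ring A]
    (hsd : IsRightSemidistributiveRing (LaurentSeries A))
    (hsl : IsSemilocalRing (LaurentSeries A)) :
    IsArtinian (LaurentSeries A)ᵐᵒᵖ (LaurentSeries A) ∧ IsArtinian Aᵐᵒᵖ A := by
  obtain ⟨Q, _, _, π, hsurj, hloc⟩ := LS.semilocal_data hsl
  have hcrit : ∀ p : A, LS.Good p → ∀ m n : LaurentSeries A, HahnSeries.C p * m = m →
      HahnSeries.C p * n = n → ∃ r s t : LaurentSeries A, m * r = n * s ∧ n * (1 - r) = m * t :=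
    fun p hp m n hm hn => LS.crit π hsurj hloc hsd hp m n hm hn
  obtain ⟨s, hs, hsum⟩ := LS.idem_sum π hsurj hloc 1 (one_mul 1)
  constructor
  · apply LS.artinian_of_T (s.map HahnSeries.C)
    · rw [← map_list_sum, hsum, map_one]
    · intro p hp
      obtain ⟨p, hp', rfl⟩ := List.mem_map.1 hp
      rw [← map_mul, (hs p hp').1]
    · intro p hp q hq
      obtain ⟨p, hp', rfl⟩ := List.mem_map.1 hp
      obtain ⟨q, hq', rfl⟩ := List.mem_map.1 hq
      obtain ⟨T, hT, h⟩ := LS.T_lemma π hsurj hloc hcrit (hs p hp') (hs q hq')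
      refine ⟨HahnSeries.C '' T, hT.image _, fun y h1 h2 => ?_⟩
      obtain ⟨t, ht, h3, h4⟩ := h y h1 h2
      exact ⟨_, ⟨t, ht, rfl⟩, h3, h4⟩
  · apply LS.artinian_of_T s hsum (fun p hp => (hs p hp).1)
    intro p hp q hq
    obtain ⟨T, hT, h⟩ := LS.T_lemma π hsurj hloc hcrit (hs p hp) (hs q hq)
    refine ⟨T, hT, fun y h1 h2 => ?_⟩
    obtain ⟨t, ht, ⟨r, hr⟩, ⟨r', hr'⟩⟩ := h (HahnSeries.C y) (by rw [← map_mul, h1])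
      (by rw [← map_mul, h2])
    refine ⟨t, ht, ⟨r.coeff 0, ?_⟩, ⟨r'.coeff 0, ?_⟩⟩
    · have := congrArg (fun g => HahnSeries.coeff g 0) hr
      simpa only [LS.coeff_C_mul, LS.coeff_C_zero] using this
    · have := congrArg (fun g => HahnSeries.coeff g 0) hr'
      simpa only [LS.coeff_C_mul, LS.coeff_C_zero] using this
end

section
/- Let A be a ring. The following conditions are equivalent: (i) A is a right Artinian right uniserial ring; (ii) the Laurent series ring A((x)) is a right Artinian right uniserial ring; (iii) A((x)) is a right uniserial ring. -/
/-- A ring `A` is *right uniserial* (a right chain ring) if its right ideals, i.e. the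
`Aᵐᵒᵖ`-submodules of `A`, are linearly ordered by inclusion. -/
def IsRightUniserialRing (A : Type*) [Ring A] : Prop :=
  ∀ I J : Submodule Aᵐᵒᵖ A, I ≤ J ∨ J ≤ I

namespace Stmt13Aux

/-- The principal right ideal `a A`. -/
def pr {A : Type*} [Ring A] (a : A) : Submodule Aᵐᵒᵖ A := Submodule.span Aᵐᵒᵖ {a}

theorem mem_pr {A : Type*} [Ring A] {a b : A} : b ∈ pr a ↔ ∃ c, b = a * c := by
  unfold pr
  rw [Submodule.mem_span_singleton]
  constructor
  · rintro ⟨r, rfl⟩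
    exact ⟨r.unop, rfl⟩
  · rintro ⟨c, rfl⟩
    exact ⟨MulOpposite.op c, rfl⟩

theorem pr_le {A : Type*} [Ring A] {a b : A} : pr b ≤ pr a ↔ ∃ c, b = a * c := by
  rw [← mem_pr]
  unfold pr
  rw [Submodule.span_le, Set.singleton_subset_iff]
  rfl

theorem mul_mem_right {A : Type*} [Ring A] (I : Submodule Aᵐᵒᵖ A) {a : A} (h : a ∈ I) (c : A) :
    a * c ∈ I := I.smul_mem (MulOpposite.op c) h

theorem uniserial_iff {A : Type*} [Ring A] :
    IsRightUniserialRing A ↔ ∀ a b : A, (∃ c, a = b * c) ∨ (∃ c, b = a * c) := by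
  constructor
  · intro h a b
    rw [← pr_le, ← pr_le]
    exact h _ _
  · intro h I J
    by_contra! hc
    obtain ⟨h1, h2⟩ := hc
    obtain ⟨a, ha, ha'⟩ := SetLike.not_le_iff_exists.1 h1
    obtain ⟨b, hb, hb'⟩ := SetLike.not_le_iff_exists.1 h2
    rcases h a b with ⟨c, rfl⟩ | ⟨c, rfl⟩
    · exact ha' (mul_mem_right J hb c)
    · exact hb' (mul_mem_right I ha c)

/-- Condition `(*)` without the normality of `p`. -/
def Star (A : Type*) [Ring A] (p : A) : Prop :=
  IsNilpotent p ∧ ∀ a : A, IsUnit a ∨ ∃ b, a = p * b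

theorem Star.eq_pow {A : Type*} [Ring A] {p : A} (h : Star A p) (a : A) (n : ℕ) :
    (∃ k u, k ≤ n ∧ IsUnit u ∧ a = p ^ k * u) ∨ ∃ b, a = p ^ n * b := by
  induction n with
  | zero => exact Or.inr ⟨a, by simp⟩
  | succ n ih =>
    rcases ih with ⟨k, u, hk, hu, e⟩ | ⟨b, hb⟩
    · exact Or.inl ⟨k, u, by omega, hu, e⟩
    · rcases h.2 b with hu | ⟨c, rfl⟩
      · exact Or.inl ⟨n, b, by omega, hu, hb⟩
      · exact Or.inr ⟨c, by rw [hb, pow_succ, mul_assoc]⟩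

theorem Star.main {A : Type*} [Ring A] {p : A} (h : Star A p) :
    ∃ n : ℕ, ∀ a : A, ∃ k u, k ≤ n ∧ IsUnit u ∧ a = p ^ k * u := by
  obtain ⟨n, hn⟩ := h.1
  refine ⟨n, fun a => ?_⟩
  rcases h.eq_pow a n with h1 | ⟨b, hb⟩
  · exact h1
  · exact ⟨n, 1, le_rfl, isUnit_one, by rw [hb, hn]; simp⟩

theorem Star.uniserial {A : Type*} [Ring A] {p : A} (h : Star A p) :
    IsRightUniserialRing A := by
  obtain ⟨n, hn⟩ := h.main
  rw [uniserial_iff]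
  have key : ∀ k l : ℕ, ∀ u v : A, k ≤ l → IsUnit u → ∃ c, p ^ l * v = p ^ k * u * c := by
    rintro k l u v hkl ⟨u, rfl⟩
    obtain ⟨m, rfl⟩ := Nat.exists_eq_add_of_le hkl
    refine ⟨(↑u⁻¹ : A) * (p ^ m * v), ?_⟩
    rw [pow_add]
    simp [mul_assoc]
  intro a b
  obtain ⟨k, u, -, hu, rfl⟩ := hn a
  obtain ⟨l, v, -, hv, rfl⟩ := hn b
  rcases le_total k l with hkl | hkl
  · exact Or.inr (key k l u v hkl hu)
  · exact Or.inl (key l k v u hkl hv)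

theorem Star.artinian {A : Type*} [Ring A] {p : A} (h : Star A p) :
    IsArtinian Aᵐᵒᵖ A := by
  obtain ⟨n, hn⟩ := h.main
  have hfin : Finite (Submodule Aᵐᵒᵖ A) := by
    refine Finite.of_injective
      (fun I : Submodule Aᵐᵒᵖ A => {k : Fin (n + 1) | p ^ (k : ℕ) ∈ I}) ?_
    have key : ∀ I J : Submodule Aᵐᵒᵖ A,
        {k : Fin (n + 1) | p ^ (k : ℕ) ∈ I} = {k : Fin (n + 1) | p ^ (k : ℕ) ∈ J} → I ≤ J := by
      intro I J hIJ a ha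
      obtain ⟨k, u, hk, ⟨u, rfl⟩, rfl⟩ := hn a
      have h1 : p ^ k ∈ I := by
        have := mul_mem_right I ha (↑u⁻¹ : A)
        simpa [mul_assoc] using this
      have h2 : (⟨k, by omega⟩ : Fin (n + 1)) ∈ {k : Fin (n + 1) | p ^ (k : ℕ) ∈ I} := h1
      rw [hIJ] at h2
      exact mul_mem_right J h2 _
    intro I J hIJ
    exact le_antisymm (key I J hIJ) (key J I hIJ.symm)
  infer_instance

theorem isUnit_of_mul_eq_one {A : Type*} [Ring A] (hU : IsRightUniserialRing A) {a b : A}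
    (h : a * b = 1) : IsUnit a ∧ IsUnit b := by
  rw [uniserial_iff] at hU
  have hba : b * a = 1 := by
    have hidem : (b * a) * (b * a) = b * a := by
      rw [mul_assoc, ← mul_assoc a, h, one_mul]
    rcases hU (b * a) (1 - b * a) with ⟨c, hc⟩ | ⟨c, hc⟩
    · have h0 : b * a = 0 := by
        rw [← hidem]
        nth_rewrite 2 [hc]
        rw [← mul_assoc, mul_sub, hidem]
        simp
      have h1 : (1 : A) = 0 := by
        calc (1 : A) = (a * b) * (a * b) := by rw [h]; simp
          _ = a * (b * a) * b := by simp only [mul_assoc]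
          _ = 0 := by rw [h0]; simp
      exact (eq_of_zero_eq_one h1.symm _ _)
    · have h0 : (1 - b * a) * (1 - b * a) = 0 := by
        nth_rewrite 2 [hc]
        rw [← mul_assoc, sub_mul, hidem]
        simp
      have h1 : 1 - b * a = 0 := by
        rw [← h0, sub_mul, mul_sub, mul_sub, hidem]
        simp
      exact (sub_eq_zero.1 h1).symm
  exact ⟨⟨⟨a, b, h, hba⟩, rfl⟩, ⟨⟨b, a, hba, h⟩, rfl⟩⟩

theorem exists_gen {A : Type*} [Ring A] [Nontrivial A] (hU : IsRightUniserialRing A)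
    (hw : WellFounded (fun a b : A => pr b < pr a)) :
    ∃ p : A, ¬ IsUnit p ∧ (∀ a : A, IsUnit a ∨ ∃ b, a = p * b) ∧
      (∀ a : A, ∃ b, a * p = p * b) ∧ ∀ c, IsUnit (1 - p * c) := by
  obtain ⟨p, hp, hmax⟩ := hw.has_min {a : A | ¬ IsUnit a} ⟨0, not_isUnit_zero⟩
  have h1 : ∀ a : A, IsUnit a ∨ ∃ b, a = p * b := by
    intro a
    by_contra! hc
    rcases hU (pr a) (pr p) with h | h
    · obtain ⟨b, hb⟩ := pr_le.1 h
      exact hc.2 b hb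
    · refine hmax a hc.1 (lt_of_le_not_ge h fun h' => ?_)
      obtain ⟨b, hb⟩ := pr_le.1 h'
      exact hc.2 b hb
  refine ⟨p, hp, h1, fun a => ?_, fun c => ?_⟩
  · rcases h1 (a * p) with ⟨u, hu⟩ | h
    · exfalso
      apply hp
      refine (isUnit_of_mul_eq_one hU (a := (↑u⁻¹ : A) * a) (b := p) ?_).2
      rw [mul_assoc, ← hu]; simp
    · exact h
  · rcases h1 (1 - p * c) with h | ⟨b, hb⟩
    · exact h
    · exfalso
      apply hp
      refine (isUnit_of_mul_eq_one hU (a := p) (b := b + c) ?_).1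
      rw [mul_add, ← hb]; simp

/-- (i) implies `(*)`. -/
theorem star_of_artinian {A : Type*} [Ring A] [Nontrivial A] (hA : IsArtinian Aᵐᵒᵖ A)
    (hU : IsRightUniserialRing A) :
    ∃ p : A, Star A p ∧ ∀ a : A, ∃ b, a * p = p * b := by
  have hR : IsArtinianRing Aᵐᵒᵖ := by
    let e : A ≃ₗ[Aᵐᵒᵖ] Aᵐᵒᵖ :=
      { (MulOpposite.opAddEquiv : A ≃+ Aᵐᵒᵖ) with
        map_smul' := fun r a => by
          induction r using MulOpposite.rec' with
          | _ r => rfl }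
    exact e.isArtinian_iff.1 hA
  have hN : IsNoetherian Aᵐᵒᵖ A := IsSemiprimaryRing.isNoetherian_iff_isArtinian.2 hA
  have hw : WellFounded (fun a b : A => pr b < pr a) :=
    InvImage.wf pr (wellFounded_gt (α := Submodule Aᵐᵒᵖ A))
  obtain ⟨p, hp, h1, h2, h3⟩ := exists_gen hU hw
  refine ⟨p, ⟨?_, h1⟩, h2⟩
  obtain ⟨n, hn⟩ := IsArtinian.monotone_stabilizes (R := Aᵐᵒᵖ) (M := A)
    ⟨fun n => OrderDual.toDual (pr (p ^ n)), fun m n hmn => by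
      change pr (p ^ n) ≤ pr (p ^ m)
      rw [pr_le]
      obtain ⟨k, rfl⟩ := Nat.exists_eq_add_of_le hmn
      exact ⟨p ^ k, pow_add _ _ _⟩⟩
  have h := hn (n + 1) (by omega)
  have h' : pr (p ^ n) = pr (p ^ (n + 1)) := h
  obtain ⟨c, hc⟩ := pr_le.1 h'.le
  refine ⟨n, ?_⟩
  obtain ⟨u, hu⟩ := h3 c
  have : p ^ n * (1 - p * c) = 0 := by
    rw [mul_sub, ← mul_assoc, ← pow_succ, ← hc]; simp
  rw [← hu] at this
  simpa using this

open HahnSeries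

/-- Divide a series by `p` when every coefficient is a right multiple of `p`. -/
theorem exists_C_mul {A : Type*} [Ring A] (p : A) (f : LaurentSeries A)
    (h : ∀ i, ∃ b, f.coeff i = p * b) : ∃ g : LaurentSeries A, f = HahnSeries.C p * g := by
  classical
  choose b hb using h
  refine ⟨⟨fun i => if f.coeff i = 0 then 0 else b i, ?_⟩, ?_⟩
  · refine f.isPWO_support.mono ?_
    intro i hi
    simp only [Function.mem_support] at hi
    rw [HahnSeries.mem_support]
    intro h0
    simp [h0] at hi
  · ext i
    rw [HahnSeries.C_apply, HahnSeries.coeff_single_zero_mul]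
    by_cases h0 : f.coeff i = 0
    · simp [h0]
    · simpa [h0] using hb i

theorem star_laurent {A : Type*} [Ring A] {p : A} (h : Star A p)
    (hn : ∀ a : A, ∃ b, a * p = p * b) : Star (LaurentSeries A) (HahnSeries.C p) := by
  classical
  have hC : ∀ g : LaurentSeries A, ∃ g', g * HahnSeries.C p = HahnSeries.C p * g' := by
    intro g
    apply exists_C_mul
    intro i
    rw [HahnSeries.C_apply, HahnSeries.coeff_mul_single_zero]
    exact hn _
  have hpow : ∀ (g : LaurentSeries A) (n : ℕ), ∃ g',
      (HahnSeries.C p * g) ^ n = HahnSeries.C p ^ n * g' := by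
    intro g n
    induction n with
    | zero => exact ⟨1, by simp⟩
    | succ n ih =>
      obtain ⟨g1, h1⟩ := ih
      obtain ⟨g2, h2⟩ := hC g1
      refine ⟨g2 * g, ?_⟩
      rw [pow_succ, h1, mul_assoc, ← mul_assoc g1, h2, pow_succ]
      simp only [mul_assoc]
  have hnil0 : IsNilpotent (HahnSeries.C p : LaurentSeries A) := h.1.map _
  have hnil : ∀ g : LaurentSeries A, IsNilpotent (HahnSeries.C p * g) := by
    intro g
    obtain ⟨n, hn⟩ := hnil0
    obtain ⟨g', hg'⟩ := hpow g n
    exact ⟨n, by rw [hg', hn, zero_mul]⟩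
  refine ⟨hnil0, fun f => ?_⟩
  by_cases hf : ∀ i, ∃ b, f.coeff i = p * b
  · exact Or.inr (exists_C_mul p f hf)
  left
  obtain ⟨m, hm, hmin⟩ : ∃ m, (¬ ∃ b, f.coeff m = p * b) ∧
      ∀ i, i < m → ∃ b, f.coeff i = p * b := by
    have hwf : {i | ¬ ∃ b, f.coeff i = p * b}.IsWF := by
      refine f.isWF_support.mono ?_
      intro i hi
      rw [HahnSeries.mem_support]
      intro h0
      exact hi ⟨0, by simp [h0]⟩
    push Not at hf
    obtain ⟨i0, hi0⟩ := hf
    have hne : {i | ¬ ∃ b, f.coeff i = p * b}.Nonempty := ⟨i0, by push Not; exact hi0⟩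
    refine ⟨hwf.min hne, hwf.min_mem hne, fun i hi => ?_⟩
    by_contra hc
    exact hwf.not_lt_min hne hc hi
  have hu : IsUnit (f.coeff m) := (h.2 _).resolve_right hm
  let φ : PowerSeries A := PowerSeries.mk fun n => f.coeff (m + n)
  have hφ : IsUnit φ := by
    obtain ⟨u, hu⟩ := hu
    have hc : PowerSeries.constantCoeff φ = u := by
      rw [hu, ← PowerSeries.coeff_zero_eq_constantCoeff_apply]
      simp [φ]
    exact ⟨⟨φ, _, PowerSeries.mul_invOfUnit φ u hc, PowerSeries.invOfUnit_mul φ u hc⟩, rfl⟩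
  have hs : IsUnit (HahnSeries.single m 1 : LaurentSeries A) :=
    ⟨⟨HahnSeries.single m 1, HahnSeries.single (-m) 1, by simp, by simp⟩, rfl⟩
  have hv : IsUnit (HahnSeries.single m 1 * HahnSeries.ofPowerSeries ℤ A φ) :=
    hs.mul (hφ.map _)
  obtain ⟨v, hv⟩ := hv
  have hd : ∀ i, ∃ b, (f - v : LaurentSeries A).coeff i = p * b := by
    intro i
    rw [HahnSeries.coeff_sub, hv, HahnSeries.coeff_single_mul, one_mul]
    rw [PowerSeries.coeff_coe]
    split_ifs with hi
    · rw [sub_zero]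
      exact hmin i (by omega)
    · refine ⟨0, ?_⟩
      have : m + ((i - m).natAbs : ℤ) = i := by omega
      simp [φ]
      rw [abs_of_nonneg (by omega)]
      simp
  obtain ⟨d, hd⟩ := exists_C_mul p _ hd
  obtain ⟨w, hw⟩ := hC (↑v⁻¹ : LaurentSeries A)
  have hfv : f = (v : LaurentSeries A) * (1 + HahnSeries.C p * (w * d)) := by
    rw [mul_add, ← mul_assoc _ w, ← hw, mul_assoc _ _ d, ← hd]
    simp
  rw [hfv]
  exact v.isUnit.mul (hnil _).isUnit_one_add

theorem ser_bdd {A : Type*} [Ring A] (p : ℕ → A) (N : ℕ → ℕ) :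
    BddBelow (Function.support (Function.extend (fun i => (N i : ℤ)) p 0)) := by
  refine ⟨0, ?_⟩
  intro z hz
  by_contra hlt
  apply hz
  rw [Function.extend_apply']
  · rfl
  · rintro ⟨i, rfl⟩
    simp at hlt

/-- The series `∑ p i x ^ N i`. -/
noncomputable def ser {A : Type*} [Ring A] (p : ℕ → A) (N : ℕ → ℕ) : LaurentSeries A :=
  HahnSeries.ofSuppBddBelow (Function.extend (fun i => (N i : ℤ)) p 0) (ser_bdd p N)

theorem ser_coeff {A : Type*} [Ring A] (p : ℕ → A) (N : ℕ → ℕ) (hN : StrictMono N) (i : ℕ) :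
    (ser p N).coeff (N i) = p i := by
  have hinj : Function.Injective (fun i => (N i : ℤ)) := fun a b hab =>
    hN.injective (Int.ofNat_inj.1 hab)
  unfold ser
  rw [HahnSeries.coeff_ofSuppBddBelow]
  exact hinj.extend_apply p 0 i

theorem ser_coeff_ne {A : Type*} [Ring A] (p : ℕ → A) (N : ℕ → ℕ) {z : ℤ}
    (h : (ser p N).coeff z ≠ 0) : ∃ i, (N i : ℤ) = z := by
  by_contra hc
  apply h
  unfold ser
  rw [HahnSeries.coeff_ofSuppBddBelow, Function.extend_apply' _ _ _ hc]
  rfl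

theorem ser_not {A : Type*} [Ring A] (p : ℕ → A) (hp : ∀ i, pr (p i) < pr (p (i + 1)))
    (N M : ℕ → ℕ) (hN : StrictMono N) (hM : StrictMono M)
    (hNM : ∀ K : ℕ, ∃ i, N (i + 1) + K < M (i + 1)) (h : LaurentSeries A) :
    ser p N ≠ ser p M * h := by
  intro e
  have hmono : StrictMono (fun i => pr (p i)) := strictMono_nat_of_lt_succ hp
  obtain ⟨i, hi⟩ := hNM h.order.natAbs
  refine (hp i).not_ge ?_
  rw [pr_le, ← mem_pr, ← ser_coeff p N hN (i + 1), e, HahnSeries.coeff_mul]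
  refine Submodule.sum_mem _ ?_
  rintro ⟨a, b⟩ hab
  rw [Finset.mem_antidiagonal] at hab
  obtain ⟨ha, hb, hab⟩ := hab
  simp only at ha hb hab ⊢
  obtain ⟨l, rfl⟩ := ser_coeff_ne p M ha
  rw [ser_coeff p M hM]
  have hb' := HahnSeries.order_le_of_coeff_ne_zero hb
  have hlt : M l < M (i + 1) := by omega
  have hl : l ≤ i := by
    have := hM.lt_iff_lt.1 hlt
    omega
  have hle : pr (p l) ≤ pr (p i) := hmono.monotone hl
  exact mul_mem_right _ (mem_pr.2 (pr_le.1 hle)) _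

theorem wf_of_laurent {A : Type*} [Ring A] (hU : IsRightUniserialRing (LaurentSeries A)) :
    WellFounded (fun a b : A => pr b < pr a) := by
  rw [wellFounded_iff_isEmpty_descending_chain]
  refine ⟨fun ⟨p, hp⟩ => ?_⟩
  replace hp : ∀ i, pr (p i) < pr (p (i + 1)) := hp
  let N : ℕ → ℕ := fun i => 2 * i ^ 2 + if Even i then i else 0
  let M : ℕ → ℕ := fun i => 2 * i ^ 2 + if Even i then 0 else i
  have hN : StrictMono N := strictMono_nat_of_lt_succ fun i => by
    simp only [N]
    have e : 2 * (i + 1) ^ 2 = 2 * i ^ 2 + 4 * i + 2 := by ring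
    split_ifs <;> omega
  have hM : StrictMono M := strictMono_nat_of_lt_succ fun i => by
    simp only [M]
    have e : 2 * (i + 1) ^ 2 = 2 * i ^ 2 + 4 * i + 2 := by ring
    split_ifs <;> omega
  rw [uniserial_iff] at hU
  rcases hU (ser p N) (ser p M) with ⟨h, e⟩ | ⟨h, e⟩
  · refine ser_not p hp N M hN hM (fun K => ⟨2 * K, ?_⟩) h e
    have : ¬ Even (2 * K + 1) := by simp
    simp only [N, M, if_neg this]
    omega
  · refine ser_not p hp M N hM hN (fun K => ⟨2 * K + 1, ?_⟩) h e
    have : Even (2 * K + 1 + 1) := ⟨K + 1, by ring⟩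
    simp only [N, M, if_pos this]
    omega

theorem uniserial_of_laurent {A : Type*} [Ring A]
    (hU : IsRightUniserialRing (LaurentSeries A)) : IsRightUniserialRing A := by
  rw [uniserial_iff] at hU ⊢
  have key : ∀ a b : A, ∀ c : LaurentSeries A, HahnSeries.C a = HahnSeries.C b * c →
      ∃ c, a = b * c := by
    intro a b c h
    refine ⟨c.coeff 0, ?_⟩
    have := congrArg (fun f => HahnSeries.coeff f 0) h
    simp only [HahnSeries.C_apply, HahnSeries.coeff_single_zero_mul] at this
    simpa using this
  intro a b
  rcases hU (HahnSeries.C a) (HahnSeries.C b) with ⟨c, h⟩ | ⟨c, h⟩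
  · exact Or.inl (key _ _ _ h)
  · exact Or.inr (key _ _ _ h)

/-- (iii) implies `(*)`. -/
theorem star_of_laurent {A : Type*} [Ring A] [Nontrivial A]
    (hL : IsRightUniserialRing (LaurentSeries A)) : ∃ p : A, Star A p := by
  have hU := uniserial_of_laurent hL
  obtain ⟨p, hp, h1, h2, h3⟩ := exists_gen hU (wf_of_laurent hL)
  refine ⟨p, ?_, h1⟩
  rw [uniserial_iff] at hL
  have hcoeff : ∀ (g : LaurentSeries A) (i : ℤ),
      ((HahnSeries.C p + HahnSeries.single 1 1) * g).coeff i = p * g.coeff i + g.coeff (i - 1) := by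
    intro g i
    rw [add_mul, HahnSeries.coeff_add, HahnSeries.C_apply, HahnSeries.coeff_single_zero_mul,
      HahnSeries.coeff_single_mul, one_mul]
  rcases hL (HahnSeries.C p + HahnSeries.single 1 1) (HahnSeries.C p) with ⟨g, hg⟩ | ⟨g, hg⟩
  · exfalso
    have := congrArg (fun f => HahnSeries.coeff f 1) hg
    simp only [HahnSeries.C_apply, HahnSeries.coeff_single_zero_mul, HahnSeries.coeff_add] at this
    rw [HahnSeries.coeff_single_of_ne (by norm_num), HahnSeries.coeff_single_same, zero_add] at this
    exact hp (isUnit_of_mul_eq_one hU this.symm).1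
  · -- `p g_i + g_{i-1} = p δ_{i0}`
    have hrec : ∀ i : ℤ, i ≠ 0 → g.coeff (i - 1) = - (p * g.coeff i) := by
      intro i hi
      have := hcoeff g i
      rw [← hg, HahnSeries.C_apply, HahnSeries.coeff_single_of_ne hi] at this
      rw [eq_neg_iff_add_eq_zero, add_comm]
      exact this.symm
    have h0 : p * (1 - g.coeff 0) = g.coeff (-1) := by
      have := hcoeff g 0
      rw [← hg, HahnSeries.C_apply, HahnSeries.coeff_single_same] at this
      rw [mul_sub, mul_one, sub_eq_iff_eq_add]
      rw [add_comm]
      simpa using this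
    have hg0 : IsUnit (1 - g.coeff 0) := by
      have h4 := hrec 1 one_ne_zero
      have h5 := h3 (-g.coeff 1)
      rw [sub_self] at h4
      rw [h4, ← mul_neg]
      exact h5
    have hpow : ∀ j : ℕ, p ^ j * g.coeff (-1) = (-1) ^ j * g.coeff (-1 - j) := by
      intro j
      induction j with
      | zero => simp
      | succ j ih =>
        have h6 := hrec (-1 - j) (by omega)
        have h7 : (-1 - ((j + 1 : ℕ) : ℤ)) = -1 - j - 1 := by push_cast; ring
        rw [h7, h6, pow_succ', mul_assoc, ih, pow_succ, mul_assoc]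
        have h8 : Commute p ((-1 : A) ^ j) := ((Commute.one_right p).neg_right).pow_right j
        rw [← mul_assoc, h8.eq]
        simp [mul_assoc]
    have hz : p ^ g.order.natAbs * g.coeff (-1) = 0 := by
      rw [hpow, HahnSeries.coeff_eq_zero_of_lt_order (by omega), mul_zero]
    refine ⟨g.order.natAbs + 1, ?_⟩
    rw [← h0, ← mul_assoc, ← pow_succ] at hz
    exact (hg0.mul_left_eq_zero).1 hz

theorem star_of_subsingleton {A : Type*} [Ring A] [Subsingleton A] : Star A 0 :=
  ⟨IsNilpotent.zero, fun a => Or.inl (isUnit_of_subsingleton a)⟩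

end Stmt13Aux

/-- The following are equivalent: (i) `A` is a right Artinian right uniserial ring;
(ii) the Laurent series ring `A((x))` is a right Artinian right uniserial ring;
(iii) `A((x))` is a right uniserial ring. -/
theorem stmt13 (A : Type*) [Ring A] :
    [IsArtinian Aᵐᵒᵖ A ∧ IsRightUniserialRing A,
     IsArtinian (LaurentSeries A)ᵐᵒᵖ (LaurentSeries A) ∧
       IsRightUniserialRing (LaurentSeries A),
     IsRightUniserialRing (LaurentSeries A)].TFAE := by
  tfae_have 1 → 2 := by
    rintro ⟨hA, hU⟩
    obtain ⟨p, hp, hn⟩ : ∃ p : A, Stmt13Aux.Star A p ∧ ∀ a : A, ∃ b, a * p = p * b := by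
      rcases subsingleton_or_nontrivial A with h | h
      · exact ⟨0, Stmt13Aux.star_of_subsingleton, fun a => ⟨0, by simp⟩⟩
      · exact Stmt13Aux.star_of_artinian hA hU
    have hs := Stmt13Aux.star_laurent hp hn
    exact ⟨hs.artinian, hs.uniserial⟩
  tfae_have 2 → 3 := fun h => h.2
  tfae_have 3 → 1 := by
    intro hL
    obtain ⟨p, hp⟩ : ∃ p : A, Stmt13Aux.Star A p := by
      rcases subsingleton_or_nontrivial A with h | h
      · exact ⟨0, Stmt13Aux.star_of_subsingleton⟩
      · exact Stmt13Aux.star_of_laurent hL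
    exact ⟨hp.artinian, hp.uniserial⟩
  tfae_finish
end
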